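/- arXiv:1909.11027 — 3 statements merged into one kernel-verified Lean document; each statement's English description precedes it below -/
import Mathlib

section
/- Let S = {1324, 1342, 2413, 2431, 3124, 3142, 4213, 4231}. For every permuton μ it holds that Σ_{π∈S} d(π,μ) ≤ 1/3, and equality holds if and only if μ is the uniform permuton. -/
open MeasureTheory Filter

noncomputable section

/-- A permuton: a Borel probability measure on `ℝ × ℝ` (supported on `[0,1]²`)
with uniform marginals. -/
def IsPermuton (μ : Measure (ℝ × ℝ)) : Prop :=
  IsProbabilityMeasure μ ∧
    (∀ x x' : ℝ, 0 ≤ x → x ≤ x' → x' ≤ 1 →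
      μ (Set.Icc x x' ×ˢ Set.Icc (0 : ℝ) 1) = ENNReal.ofReal (x' - x)) ∧
    (∀ y y' : ℝ, 0 ≤ y → y ≤ y' → y' ≤ 1 →
      μ (Set.Icc (0 : ℝ) 1 ×ˢ Set.Icc y y') = ENNReal.ofReal (y' - y))

/-- The uniform permuton: two-dimensional Lebesgue measure on `[0,1]²`. -/
def uniformPermuton : Measure (ℝ × ℝ) :=
  volume.restrict (Set.Icc (0 : ℝ) 1 ×ˢ Set.Icc (0 : ℝ) 1)

/-- The support of a Borel measure: all points each of whose open neighbourhoods has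
positive measure. -/
def measSupport (μ : Measure (ℝ × ℝ)) : Set (ℝ × ℝ) :=
  {p | ∀ U : Set (ℝ × ℝ), IsOpen U → p ∈ U → 0 < μ U}

/-- The pattern density of a `k`-permutation `π` in a measure `μ` on `ℝ × ℝ`:
the `μ^{⊗ k}`-probability that `k` sampled points, relabelled so that their
`x`-coordinates increase, have `y`-coordinates ordered according to `π`. -/
def PermutonDensity {k : ℕ} (π : Equiv.Perm (Fin k)) (μ : Measure (ℝ × ℝ)) : ℝ :=
  ((Measure.pi fun _ : Fin k => μ)
    {p : Fin k → ℝ × ℝ | ∃ σ : Equiv.Perm (Fin k),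
      StrictMono (fun i => (p (σ i)).1) ∧
        ∀ i j : Fin k, (p (σ i)).2 < (p (σ j)).2 ↔ π i < π j}).toReal

open scoped Classical in
/-- The pattern density of a `k`-permutation `π` in an `n`-permutation `Π`:
the proportion of `k`-element subsets of `Fin n` on which `Π` induces the pattern `π`
(zero when `n < k`). -/
def PatternDensity {k n : ℕ} (π : Equiv.Perm (Fin k)) (Perm : Equiv.Perm (Fin n)) : ℝ :=
  ((Finset.univ.filter fun A : Finset (Fin n) =>
      ∃ h : A.card = k, ∀ i j : Fin k,
        Perm ↑(A.orderIsoOfFin h i) < Perm ↑(A.orderIsoOfFin h j) ↔ π i < π j).card : ℝ) /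
    (n.choose k)

/-- A sequence of permutations (of varying orders) is quasirandom if the density of every
pattern `π` converges to `1/|π|!`. -/
def Quasirandom (P : ℕ → (n : ℕ) × Equiv.Perm (Fin n)) : Prop :=
  ∀ (k : ℕ) (π : Equiv.Perm (Fin k)),
    Tendsto (fun i => PatternDensity π (P i).2) atTop (nhds (1 / (Nat.factorial k : ℝ)))

/-- A set `S` of `k`-permutations is `Σ`-forcing if a sequence of permutations is quasirandom
exactly when the sum of the densities of the patterns from `S` converges to `|S|/k!`. -/
def SigmaForcing {k : ℕ} (S : Finset (Equiv.Perm (Fin k))) : Prop :=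
  ∀ P : ℕ → (n : ℕ) × Equiv.Perm (Fin n),
    Quasirandom P ↔
      Tendsto (fun i => ∑ π ∈ S, PatternDensity π (P i).2) atTop
        (nhds ((S.card : ℝ) / (Nat.factorial k : ℝ)))

/-- The `4`-permutation written in one-line notation as `(a+1)(b+1)(c+1)(d+1)`
(inputs are 0-indexed). -/
def mk4 (a b c d : Fin 4) (h : Function.Bijective ![a, b, c, d] := by decide) :
    Equiv.Perm (Fin 4) :=
  Equiv.ofBijective _ h

/-- A doubly stochastic matrix: non-negative entries, all row and column sums equal to one. -/
def IsDoublyStochastic {n : ℕ} (A : Matrix (Fin n) (Fin n) ℝ) : Prop :=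
  (∀ i j, 0 ≤ A i j) ∧ (∀ i, ∑ j, A i j = 1) ∧ (∀ j, ∑ i, A i j = 1)

/-- The step permuton `μ[A]` associated with an `n × n` doubly stochastic matrix `A`. -/
def stepPermuton {n : ℕ} (A : Matrix (Fin n) (Fin n) ℝ) : Measure (ℝ × ℝ) :=
  ∑ i : Fin n, ∑ j : Fin n,
    ENNReal.ofReal (A i j * n) •
      volume.restrict
        (Set.Ico ((i : ℝ) / n) (((i : ℝ) + 1) / n) ×ˢ
          Set.Ico ((j : ℝ) / n) (((j : ℝ) + 1) / n))

/-- The matrix `B^{ij}` (0-indexed: `p, q ∈ [n-1]`): `+1` at positions `(p,q)` and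
`(p+1,q+1)`, `-1` at positions `(p,q+1)` and `(p+1,q)`, `0` elsewhere. -/
def Bmat (n : ℕ) (p q : Fin (n - 1)) : Matrix (Fin n) (Fin n) ℝ := fun a b =>
  (if (a : ℕ) = (p : ℕ) ∧ (b : ℕ) = (q : ℕ) then 1 else 0) +
    (if (a : ℕ) = (p : ℕ) + 1 ∧ (b : ℕ) = (q : ℕ) + 1 then 1 else 0) -
    (if (a : ℕ) = (p : ℕ) ∧ (b : ℕ) = (q : ℕ) + 1 then 1 else 0) -
    (if (a : ℕ) = (p : ℕ) + 1 ∧ (b : ℕ) = (q : ℕ) then 1 else 0)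

/-- The matrix `A + ∑_{i,j} x_{ij} B^{ij}` where `A` is the `n × n` matrix with all
entries `1/n`. -/
def pertMatrix (n : ℕ) (x : Fin (n - 1) × Fin (n - 1) → ℝ) : Matrix (Fin n) (Fin n) ℝ :=
  fun a b => 1 / n + ∑ p : Fin (n - 1) × Fin (n - 1), x p * Bmat n p.1 p.2 a b

/-- The function `h_{S,n}`: the sum over `π ∈ S` of the pattern density of `π` in the
step permuton of the perturbed matrix. -/
def hSN (n : ℕ) (S : Finset (Equiv.Perm (Fin 4))) (x : Fin (n - 1) × Fin (n - 1) → ℝ) : ℝ :=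
  ∑ π ∈ S, PermutonDensity π (stepPermuton (pertMatrix n x))

open scoped Classical in
/-- The cover matrix of a set `S` of `4`-permutations: `C i j` is the number of `π ∈ S`
with `π j = i`. -/
def coverMatrix (S : Finset (Equiv.Perm (Fin 4))) : Fin 4 → Fin 4 → ℕ := fun i j =>
  (S.filter fun π => π j = i).card

/-- The eight symmetry operations on `4`-permutations. -/
def symOps : List (Equiv.Perm (Fin 4) → Equiv.Perm (Fin 4)) :=
  [fun σ => σ,
   fun σ => σ * Fin.revPerm,
   fun σ => Fin.revPerm * σ,
   fun σ => Fin.revPerm * σ * Fin.revPerm,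
   fun σ => σ⁻¹,
   fun σ => σ⁻¹ * Fin.revPerm,
   fun σ => Fin.revPerm * σ⁻¹,
   fun σ => Fin.revPerm * σ⁻¹ * Fin.revPerm]

open scoped Classical in
/-- `T` is symmetric to `S` if one of the eight symmetry operations maps `S` onto `T`. -/
def SymmetricSets (S T : Finset (Equiv.Perm (Fin 4))) : Prop :=
  ∃ op ∈ symOps, T = S.image op

end


namespace PF

/-- Indicator of `a < b`. -/
noncomputable def ind (a b : ℝ) : ℝ := if a < b then 1 else 0

/-- Truncation to the unit interval. -/
noncomputable def cl (y : ℝ) : ℝ := max 0 (min 1 y)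

/-- The sawtooth kernel. -/
noncomputable def kk (u y : ℝ) : ℝ := 2 * ind y u - 1 - 2 * (cl u - cl y)

/-- Indicator that `c` lies strictly between `a` and `b`. -/
noncomputable def btw (a b c : ℝ) : ℝ := ind a c * ind c b + ind b c * ind c a

/-- Indicator that the pairs `a, b` and `c, d` interleave. -/
noncomputable def cr (a b c d : ℝ) : ℝ := btw a b c + btw a b d - 2 * btw a b c * btw a b d

/-- Bounded measurable functions. -/
structure BM {α : Type*} [MeasurableSpace α] (f : α → ℝ) : Prop where
  meas : Measurable f
  bdd : ∃ C, ∀ x, |f x| ≤ C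

section BMlemmas
variable {α β : Type*} [MeasurableSpace α] [MeasurableSpace β]

lemma BM.const (c : ℝ) : BM (fun _ : α => c) := ⟨measurable_const, |c|, fun _ => le_rfl⟩

lemma BM.add {f g : α → ℝ} (hf : BM f) (hg : BM g) : BM (fun x => f x + g x) := by
  obtain ⟨hf, C, hC⟩ := hf
  obtain ⟨hg, D, hD⟩ := hg
  exact ⟨hf.add hg, C + D, fun x => (abs_add_le _ _).trans (add_le_add (hC x) (hD x))⟩

lemma BM.sub {f g : α → ℝ} (hf : BM f) (hg : BM g) : BM (fun x => f x - g x) := by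
  obtain ⟨hf, C, hC⟩ := hf
  obtain ⟨hg, D, hD⟩ := hg
  exact ⟨hf.sub hg, C + D, fun x => (abs_sub _ _).trans (add_le_add (hC x) (hD x))⟩

lemma BM.mul {f g : α → ℝ} (hf : BM f) (hg : BM g) : BM (fun x => f x * g x) := by
  obtain ⟨hf, C, hC⟩ := hf
  obtain ⟨hg, D, hD⟩ := hg
  refine ⟨hf.mul hg, C * D, fun x => ?_⟩
  rw [abs_mul]
  exact mul_le_mul (hC x) (hD x) (abs_nonneg _) ((abs_nonneg _).trans (hC x))

lemma BM.comp {f : β → ℝ} (hf : BM f) {g : α → β} (hg : Measurable g) : BM (fun x => f (g x)) :=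
  ⟨hf.meas.comp hg, hf.bdd.imp fun _ h _ => h _⟩

lemma BM.ind {f g : α → ℝ} (hf : Measurable f) (hg : Measurable g) :
    BM (fun x => ind (f x) (g x)) := by
  refine ⟨Measurable.ite (measurableSet_lt hf hg) measurable_const measurable_const, 1, fun x => ?_⟩
  unfold PF.ind
  split_ifs <;> simp

lemma BM.cl {f : α → ℝ} (hf : Measurable f) : BM (fun x => cl (f x)) := by
  refine ⟨measurable_const.max (measurable_const.min hf), 1, fun x => ?_⟩
  unfold PF.cl
  rw [abs_of_nonneg (le_max_left _ _)]
  exact max_le zero_le_one (min_le_left _ _)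

lemma BM.kk {f g : α → ℝ} (hf : Measurable f) (hg : Measurable g) :
    BM (fun x => kk (f x) (g x)) :=
  (((BM.const 2).mul (BM.ind hg hf)).sub (BM.const 1)).sub
    ((BM.const 2).mul ((BM.cl hf).sub (BM.cl hg)))

lemma BM.btw {f g h : α → ℝ} (hf : Measurable f) (hg : Measurable g) (hh : Measurable h) :
    BM (fun x => btw (f x) (g x) (h x)) :=
  ((BM.ind hf hh).mul (BM.ind hh hg)).add ((BM.ind hg hh).mul (BM.ind hh hf))

lemma BM.cr {f g h k : α → ℝ} (hf : Measurable f) (hg : Measurable g) (hh : Measurable h)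
    (hk : Measurable k) :
    BM (fun x => cr (f x) (g x) (h x) (k x)) :=
  ((BM.btw hf hg hh).add (BM.btw hf hg hk)).sub
    (((BM.const 2).mul (BM.btw hf hg hh)).mul (BM.btw hf hg hk))

lemma BM.integrable {f : α → ℝ} (hf : BM f) (μ : Measure α) [IsFiniteMeasure μ] :
    Integrable f μ := by
  obtain ⟨hf, C, hC⟩ := hf
  exact Integrable.of_bound hf.aestronglyMeasurable C (Eventually.of_forall hC)

lemma BM.integral {f : α → β → ℝ} (hf : BM (fun z : α × β => f z.1 z.2)) (μ : Measure β)
    [IsProbabilityMeasure μ] : BM (fun a => ∫ b, f a b ∂μ) := by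
  obtain ⟨hf, C, hC⟩ := hf
  refine ⟨(hf.stronglyMeasurable.integral_prod_right').measurable, C, fun x => ?_⟩
  have := norm_integral_le_of_norm_le_const (μ := μ) (f := fun b => f x b) (C := C)
    (Eventually.of_forall fun b => hC (x, b))
  simpa using this

end BMlemmas

section pi
variable (μ : Measure (ℝ × ℝ)) [IsProbabilityMeasure μ]

lemma pi_succ {n : ℕ} {g : (Fin (n + 1) → ℝ × ℝ) → ℝ} (hg : BM g) :
    ∫ p, g p ∂(Measure.pi fun _ : Fin (n + 1) => μ) =
      ∫ a, ∫ p, g (Fin.cons a p) ∂(Measure.pi fun _ : Fin n => μ) ∂μ := by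
  have h := measurePreserving_piFinSuccAbove (fun _ : Fin (n + 1) => μ) 0
  have h2 := h.symm.integral_comp' (g := g)
  rw [← h2]
  have h3 := integral_prod (μ := μ) (ν := Measure.pi fun _ : Fin n => μ)
    (fun z => g ((MeasurableEquiv.piFinSuccAbove (fun _ => ℝ × ℝ) 0).symm z))
    ((hg.comp (MeasurableEquiv.measurable _)).integrable _)
  refine Eq.trans h3 ?_
  simp [MeasurableEquiv.piFinSuccAbove, Fin.insertNthEquiv, Fin.insertNth_zero']

lemma pi_four {G : ℝ × ℝ → ℝ × ℝ → ℝ × ℝ → ℝ × ℝ → ℝ}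
    (hG : BM (fun p : Fin 4 → ℝ × ℝ => G (p 0) (p 1) (p 2) (p 3))) :
    ∫ p, G (p 0) (p 1) (p 2) (p 3) ∂(Measure.pi fun _ : Fin 4 => μ) =
      ∫ a, ∫ b, ∫ c, ∫ d, G a b c d ∂μ ∂μ ∂μ ∂μ := by
  rw [pi_succ μ hG]
  refine integral_congr_ae (Eventually.of_forall fun a => ?_)
  dsimp only
  have m1 : Measurable (fun p : Fin 3 → ℝ × ℝ => (Fin.cons a p : Fin 4 → ℝ × ℝ)) := by
    refine measurable_pi_iff.2 fun i => ?_
    refine Fin.cases ?_ (fun j => ?_) i <;> simp <;> fun_prop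
  rw [pi_succ μ (hG.comp m1)]
  refine integral_congr_ae (Eventually.of_forall fun b => ?_)
  dsimp only
  have m2 : Measurable (fun p : Fin 2 → ℝ × ℝ => (Fin.cons b p : Fin 3 → ℝ × ℝ)) := by
    refine measurable_pi_iff.2 fun i => ?_
    refine Fin.cases ?_ (fun j => ?_) i <;> simp <;> fun_prop
  rw [pi_succ μ ((hG.comp m1).comp m2)]
  refine integral_congr_ae (Eventually.of_forall fun c => ?_)
  dsimp only
  have m3 : Measurable (fun p : Fin 1 → ℝ × ℝ => (Fin.cons c p : Fin 2 → ℝ × ℝ)) := by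
    refine measurable_pi_iff.2 fun i => ?_
    refine Fin.cases ?_ (fun j => ?_) i <;> simp <;> fun_prop
  rw [pi_succ μ (((hG.comp m1).comp m2).comp m3)]
  refine integral_congr_ae (Eventually.of_forall fun d => ?_)
  dsimp only
  change ∫ p : Fin 0 → ℝ × ℝ, G a b c d ∂_ = _
  simp

lemma perm_four (a b c d : Fin 4) (h : Function.Bijective ![a, b, c, d])
    (G : ℝ × ℝ → ℝ × ℝ → ℝ × ℝ → ℝ × ℝ → ℝ) :
    ∫ p, G (p a) (p b) (p c) (p d) ∂(Measure.pi fun _ : Fin 4 => μ) =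
    ∫ p, G (p 0) (p 1) (p 2) (p 3) ∂(Measure.pi fun _ : Fin 4 => μ) := by
  set σ : Equiv.Perm (Fin 4) := Equiv.ofBijective _ h with hσ
  have h1 := (measurePreserving_piCongrLeft (fun _ : Fin 4 => μ) σ.symm).integral_comp'
    (g := fun p : Fin 4 → ℝ × ℝ => G (p 0) (p 1) (p 2) (p 3))
  rw [← h1]
  have key : ∀ (p : Fin 4 → ℝ × ℝ) (i : Fin 4),
      (MeasurableEquiv.piCongrLeft (fun _ => ℝ × ℝ) σ.symm) p i = p (σ i) := by
    intro p i
    have := Equiv.piCongrLeft_apply_apply (fun _ : Fin 4 => ℝ × ℝ) σ.symm p (σ i)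
    simpa [MeasurableEquiv.coe_piCongrLeft] using this
  simp only [key]
  rfl

lemma perm_meas (σ : Equiv.Perm (Fin 4)) (s : Set (Fin 4 → ℝ × ℝ)) (hs : MeasurableSet s) :
    (Measure.pi fun _ : Fin 4 => μ) {p | (fun i => p (σ i)) ∈ s} =
      (Measure.pi fun _ : Fin 4 => μ) s := by
  have h1 := (measurePreserving_piCongrLeft (fun _ : Fin 4 => μ) σ.symm).measure_preimage
    hs.nullMeasurableSet
  rw [← h1]
  have key : ∀ (p : Fin 4 → ℝ × ℝ),
      (MeasurableEquiv.piCongrLeft (fun _ => ℝ × ℝ) σ.symm) p = fun i => p (σ i) := by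
    intro p
    ext1 i
    have := Equiv.piCongrLeft_apply_apply (fun _ : Fin 4 => ℝ × ℝ) σ.symm p (σ i)
    simpa [MeasurableEquiv.coe_piCongrLeft] using this
  congr 1
  ext p
  simp [key]

lemma ae_pair {i j : Fin 4} (hij : i ≠ j) {s : Set ((ℝ × ℝ) × (ℝ × ℝ))} (hs : MeasurableSet s)
    (h : (μ.prod μ) s = 0) :
    ∀ᵐ p ∂(Measure.pi fun _ : Fin 4 => μ), (p i, p j) ∉ s := by
  have hI := ProbabilityTheory.iIndepFun_pi (μ := fun _ : Fin 4 => μ)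
    (X := fun _ : Fin 4 => (id : ℝ × ℝ → ℝ × ℝ)) (fun i => aemeasurable_id)
  have h2 := (ProbabilityTheory.indepFun_iff_map_prod_eq_prod_map_map
    (measurable_pi_apply i).aemeasurable (measurable_pi_apply j).aemeasurable).1 (hI.indepFun hij)
  have e1 : ∀ i : Fin 4, Measure.map (fun p : Fin 4 → ℝ × ℝ => p i)
    (Measure.pi fun _ : Fin 4 => μ) = μ := fun i =>
      (measurePreserving_eval (fun _ : Fin 4 => μ) i).map_eq
  rw [e1, e1] at h2
  rw [← h2, Measure.map_apply (by fun_prop) hs] at h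
  rw [ae_iff]
  simp only [not_not]
  exact h

end pi


section perm
open Set

lemma ae_sq {μ : Measure (ℝ × ℝ)} (hμ : IsPermuton μ) :
    ∀ᵐ p ∂μ, p ∈ Icc (0 : ℝ) 1 ×ˢ Icc (0 : ℝ) 1 := by
  obtain ⟨hp, h1, h2⟩ := hμ
  have h := h1 0 1 le_rfl zero_le_one le_rfl
  rw [sub_zero, ENNReal.ofReal_one] at h
  exact (mem_ae_iff_prob_eq_one (measurableSet_Icc.prod measurableSet_Icc)).2 h

lemma vol_clip (t : ℝ) : (volume.restrict (Icc (0 : ℝ) 1)) (Iic t) =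
    ENNReal.ofReal (min 1 t) := by
  rw [Measure.restrict_apply measurableSet_Iic]
  have : Iic t ∩ Icc 0 1 = Icc 0 (min 1 t) := by
    ext z; simp only [mem_inter_iff, mem_Iic, mem_Icc, le_min_iff]; tauto
  rw [this, Real.volume_Icc, sub_zero]

instance : IsProbabilityMeasure (volume.restrict (Icc (0 : ℝ) 1)) := ⟨by simp⟩

lemma map_fst {μ : Measure (ℝ × ℝ)} (hμ : IsPermuton μ) :
    μ.map Prod.fst = volume.restrict (Icc (0 : ℝ) 1) := by
  have hsq := ae_sq hμ
  obtain ⟨hp, h1, h2⟩ := hμ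
  refine Measure.ext_of_Iic _ _ fun t => ?_
  rw [vol_clip, Measure.map_apply measurable_fst measurableSet_Iic]
  have e : μ (Prod.fst ⁻¹' Iic t) = μ (Icc 0 (min 1 t) ×ˢ Icc (0 : ℝ) 1) := by
    refine measure_congr ?_
    filter_upwards [hsq] with p hp
    obtain ⟨⟨a, b⟩, c⟩ := hp
    refine propext ?_
    change p.1 ≤ t ↔ ((0 ≤ p.1 ∧ p.1 ≤ min 1 t) ∧ _)
    simp only [le_min_iff]
    tauto
  rw [e]
  rcases le_or_gt 0 t with h | h
  · rw [h1 0 (min 1 t) le_rfl (le_min zero_le_one h) (min_le_left _ _), sub_zero]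
  · have : min 1 t < 0 := (min_le_right _ _).trans_lt h
    rw [Icc_eq_empty (not_le.2 this), ENNReal.ofReal_of_nonpos this.le]
    simp

lemma map_snd {μ : Measure (ℝ × ℝ)} (hμ : IsPermuton μ) :
    μ.map Prod.snd = volume.restrict (Icc (0 : ℝ) 1) := by
  have hsq := ae_sq hμ
  obtain ⟨hp, h1, h2⟩ := hμ
  refine Measure.ext_of_Iic _ _ fun t => ?_
  rw [vol_clip, Measure.map_apply measurable_snd measurableSet_Iic]
  have e : μ (Prod.snd ⁻¹' Iic t) = μ (Icc (0 : ℝ) 1 ×ˢ Icc 0 (min 1 t)) := by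
    refine measure_congr ?_
    filter_upwards [hsq] with p hp
    obtain ⟨c, ⟨a, b⟩⟩ := hp
    refine propext ?_
    change p.2 ≤ t ↔ (_ ∧ (0 ≤ p.2 ∧ p.2 ≤ min 1 t))
    simp only [le_min_iff]
    tauto
  rw [e]
  rcases le_or_gt 0 t with h | h
  · rw [h2 0 (min 1 t) le_rfl (le_min zero_le_one h) (min_le_left _ _), sub_zero]
  · have : min 1 t < 0 := (min_le_right _ _).trans_lt h
    rw [Icc_eq_empty (not_le.2 this), ENNReal.ofReal_of_nonpos this.le]
    simp

lemma int_fst {μ : Measure (ℝ × ℝ)} (hμ : IsPermuton μ) {f : ℝ → ℝ} (hf : Measurable f) :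
    ∫ p, f p.1 ∂μ = ∫ x in Icc (0 : ℝ) 1, f x := by
  rw [← map_fst hμ, integral_map measurable_fst.aemeasurable hf.aestronglyMeasurable]

lemma int_snd {μ : Measure (ℝ × ℝ)} (hμ : IsPermuton μ) {f : ℝ → ℝ} (hf : Measurable f) :
    ∫ p, f p.2 ∂μ = ∫ x in Icc (0 : ℝ) 1, f x := by
  rw [← map_snd hμ, integral_map measurable_snd.aemeasurable hf.aestronglyMeasurable]

lemma ne_fst {μ : Measure (ℝ × ℝ)} (hμ : IsPermuton μ) (c : ℝ) : ∀ᵐ p ∂μ, p.1 ≠ c := by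
  have : ∀ᵐ x ∂(μ.map Prod.fst), x ≠ c := by
    rw [map_fst hμ]; exact Measure.ae_ne _ c
  exact ae_of_ae_map measurable_fst.aemeasurable this

lemma ne_snd {μ : Measure (ℝ × ℝ)} (hμ : IsPermuton μ) (c : ℝ) : ∀ᵐ p ∂μ, p.2 ≠ c := by
  have : ∀ᵐ x ∂(μ.map Prod.snd), x ≠ c := by
    rw [map_snd hμ]; exact Measure.ae_ne _ c
  exact ae_of_ae_map measurable_snd.aemeasurable this

lemma ae_ne4 {μ : Measure (ℝ × ℝ)} (hμ : IsPermuton μ) :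
    ∀ᵐ p ∂(Measure.pi fun _ : Fin 4 => μ), ∀ i j : Fin 4, i ≠ j →
      (p i).1 ≠ (p j).1 ∧ (p i).2 ≠ (p j).2 := by
  have hp := hμ.1
  rw [ae_all_iff]; intro i
  rw [ae_all_iff]; intro j
  by_cases hij : i = j
  · simp [hij]
  have m1 : MeasurableSet {z : (ℝ × ℝ) × (ℝ × ℝ) | z.1.1 = z.2.1} :=
    measurableSet_eq_fun (by fun_prop) (by fun_prop)
  have m2 : MeasurableSet {z : (ℝ × ℝ) × (ℝ × ℝ) | z.1.2 = z.2.2} :=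
    measurableSet_eq_fun (by fun_prop) (by fun_prop)
  have z1 : (μ.prod μ) {z : (ℝ × ℝ) × (ℝ × ℝ) | z.1.1 = z.2.1} = 0 := by
    rw [Measure.measure_prod_null m1]
    refine Eventually.of_forall fun a => ?_
    have := ne_fst hμ a.1
    rw [ae_iff] at this
    simp only [not_not] at this
    simp only [preimage_ofPred_eq, Pi.zero_apply]
    simpa only [eq_comm] using this
  have z2 : (μ.prod μ) {z : (ℝ × ℝ) × (ℝ × ℝ) | z.1.2 = z.2.2} = 0 := by
    rw [Measure.measure_prod_null m2]
    refine Eventually.of_forall fun a => ?_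
    have := ne_snd hμ a.2
    rw [ae_iff] at this
    simp only [not_not] at this
    simp only [preimage_ofPred_eq, Pi.zero_apply]
    simpa only [eq_comm] using this
  filter_upwards [ae_pair μ hij m1 z1, ae_pair μ hij m2 z2] with p h1 h2 _
  exact ⟨h1, h2⟩

end perm

lemma cl_of_mem {y : ℝ} (h : y ∈ Set.Icc (0 : ℝ) 1) : cl y = y := by
  unfold cl; rw [min_eq_right h.2, max_eq_right h.1]

lemma ind_one {a b : ℝ} (h : a < b) : ind a b = 1 := if_pos h
lemma ind_zero {a b : ℝ} (h : b ≤ a) : ind a b = 0 := if_neg (not_lt.2 h)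

lemma int_split {f : ℝ → ℝ} (hf : BM f) {a b : ℝ} (ha : 0 ≤ a) (hab : a ≤ b) (hb : b ≤ 1) :
    ∫ x in Set.Icc (0 : ℝ) 1, f x = (∫ x in (0 : ℝ)..a, f x) + (∫ x in a..b, f x)
      + ∫ x in b..1, f x := by
  have hi : ∀ c d : ℝ, IntervalIntegrable f volume c d := fun c d => by
    rw [intervalIntegrable_iff]
    have : IsFiniteMeasure (volume.restrict (Set.uIoc c d)) := by
      refine ⟨?_⟩
      rw [Measure.restrict_apply_univ, Set.uIoc]
      exact measure_Ioc_lt_top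
    exact hf.integrable _
  rw [integral_Icc_eq_integral_Ioc, ← intervalIntegral.integral_of_le zero_le_one,
    intervalIntegral.integral_add_adjacent_intervals (hi _ _) (hi _ _),
    intervalIntegral.integral_add_adjacent_intervals (hi _ _) (hi _ _)]

lemma int_on {f g : ℝ → ℝ} {a b : ℝ} (hab : a ≤ b) (h : ∀ x, a < x → x < b → f x = g x) :
    ∫ x in a..b, f x = ∫ x in a..b, g x := by
  rw [intervalIntegral.integral_of_le hab, intervalIntegral.integral_of_le hab,
    integral_Ioc_eq_integral_Ioo, integral_Ioc_eq_integral_Ioo]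
  exact setIntegral_congr_fun measurableSet_Ioo fun x hx => h x hx.1 hx.2

lemma poly_int (p q r a b : ℝ) : ∫ x in a..b, (p + q * x + r * x ^ 2) =
    (p * b + q * b ^ 2 / 2 + r * b ^ 3 / 3) - (p * a + q * a ^ 2 / 2 + r * a ^ 3 / 3) := by
  have : ∀ x ∈ Set.uIcc a b, HasDerivAt (fun x => p * x + q * x ^ 2 / 2 + r * x ^ 3 / 3)
      (p + q * x + r * x ^ 2) x := by
    intro x _
    have h1 := (hasDerivAt_id x).const_mul p
    have h2 := ((hasDerivAt_pow 2 x).const_mul q).div_const 2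
    have h3 := ((hasDerivAt_pow 3 x).const_mul r).div_const 3
    refine ((h1.add h2).add h3).congr_deriv ?_
    push_cast
    ring
  exact intervalIntegral.integral_eq_sub_of_hasDerivAt this
    (Continuous.intervalIntegrable (by fun_prop) _ _)

/-- Integral of the sawtooth kernel. -/
lemma int_kk {u : ℝ} (hu : u ∈ Set.Icc (0 : ℝ) 1) : ∫ y in Set.Icc (0 : ℝ) 1, kk u y = 0 := by
  have hB : BM (fun y => kk u y) := BM.kk measurable_const measurable_id
  rw [int_split hB hu.1 le_rfl hu.2, intervalIntegral.integral_same,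
    int_on (g := fun y => (1 - 2 * u) + 2 * y + 0 * y ^ 2) hu.1,
    int_on (g := fun y => (-1 - 2 * u) + 2 * y + 0 * y ^ 2) hu.2, poly_int, poly_int]
  · ring
  · intro x h1 h2
    have : cl x = x := cl_of_mem ⟨hu.1.trans h1.le, h2.le⟩
    simp only [kk, ind_zero h1.le, cl_of_mem hu, this]; ring
  · intro x h1 h2
    have : cl x = x := cl_of_mem ⟨h1.le, h2.le.trans hu.2⟩
    simp only [kk, ind_one h2, cl_of_mem hu, this]; ring

lemma int_kkkk_le {a b : ℝ} (ha : a ∈ Set.Icc (0 : ℝ) 1) (hb : b ∈ Set.Icc (0 : ℝ) 1)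
    (hab : a ≤ b) :
    ∫ u in Set.Icc (0 : ℝ) 1, kk u a * kk u b = 1 / 3 - 2 * (b - a) + 2 * (b - a) ^ 2 := by
  have hB : BM (fun u => kk u a * kk u b) :=
    (BM.kk measurable_id measurable_const).mul (BM.kk measurable_id measurable_const)
  rw [int_split hB ha.1 hab hb.2,
    int_on (g := fun u => (-1 + 2 * a) * (-1 + 2 * b) + (-2 * (-1 + 2 * a) - 2 * (-1 + 2 * b)) * u
      + 4 * u ^ 2) ha.1,
    int_on (g := fun u => (1 + 2 * a) * (-1 + 2 * b) + (-2 * (1 + 2 * a) - 2 * (-1 + 2 * b)) * u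
      + 4 * u ^ 2) hab,
    int_on (g := fun u => (1 + 2 * a) * (1 + 2 * b) + (-2 * (1 + 2 * a) - 2 * (1 + 2 * b)) * u
      + 4 * u ^ 2) hb.2, poly_int, poly_int, poly_int]
  · ring
  · intro x h1 h2
    have : cl x = x := cl_of_mem ⟨hb.1.trans h1.le, h2.le⟩
    simp only [kk, ind_one h1, ind_one (hab.trans_lt h1), cl_of_mem ha, cl_of_mem hb, this]; ring
  · intro x h1 h2
    have : cl x = x := cl_of_mem ⟨ha.1.trans h1.le, h2.le.trans hb.2⟩
    simp only [kk, ind_one h1, ind_zero h2.le, cl_of_mem ha, cl_of_mem hb, this]; ring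
  · intro x h1 h2
    have : cl x = x := cl_of_mem ⟨h1.le, h2.le.trans ha.2⟩
    simp only [kk, ind_zero h2.le, ind_zero (h2.le.trans hab), cl_of_mem ha, cl_of_mem hb, this]
    ring

lemma int_kkkk {a b : ℝ} (ha : a ∈ Set.Icc (0 : ℝ) 1) (hb : b ∈ Set.Icc (0 : ℝ) 1) :
    ∫ u in Set.Icc (0 : ℝ) 1, kk u a * kk u b = 1 / 3 - 2 * |b - a| + 2 * (b - a) ^ 2 := by
  rcases le_total a b with h | h
  · rw [int_kkkk_le ha hb h, abs_of_nonneg (by linarith)]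
  · have := int_kkkk_le hb ha h
    simp only [mul_comm (kk _ a)]
    rw [this, abs_of_nonpos (by linarith)]; ring

lemma int_btw_le {a b : ℝ} (ha : a ∈ Set.Icc (0 : ℝ) 1) (hb : b ∈ Set.Icc (0 : ℝ) 1)
    (hab : a ≤ b) :
    ∫ u in Set.Icc (0 : ℝ) 1, btw a b u = b - a := by
  have hB : BM (fun u => btw a b u) :=
    BM.btw measurable_const measurable_const measurable_id
  rw [int_split hB ha.1 hab hb.2,
    int_on (g := fun u => 0 + 0 * u + 0 * u ^ 2) ha.1,
    int_on (g := fun u => 1 + 0 * u + 0 * u ^ 2) hab,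
    int_on (g := fun u => 0 + 0 * u + 0 * u ^ 2) hb.2, poly_int, poly_int, poly_int]
  · ring
  · intro x h1 h2
    simp only [btw, ind_zero h1.le, ind_zero (hab.trans h1.le)]; ring
  · intro x h1 h2
    simp only [btw, ind_one h1, ind_one h2, ind_zero h2.le]; ring
  · intro x h1 h2
    simp only [btw, ind_zero h2.le, ind_zero (h2.le.trans hab)]; ring

lemma btw_comm (a b c : ℝ) : btw a b c = btw b a c := by unfold btw; ring

lemma int_btw {a b : ℝ} (ha : a ∈ Set.Icc (0 : ℝ) 1) (hb : b ∈ Set.Icc (0 : ℝ) 1) :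
    ∫ u in Set.Icc (0 : ℝ) 1, btw a b u = |b - a| := by
  rcases le_total a b with h | h
  · rw [int_btw_le ha hb h, abs_of_nonneg (by linarith)]
  · simp only [btw_comm a b]
    rw [int_btw_le hb ha h, abs_of_nonpos (by linarith)]; ring

/-- The key identity, integrated over the last point. -/
lemma key_int {μ : Measure (ℝ × ℝ)} (hμ : IsPermuton μ) {a b c : ℝ}
    (ha : a ∈ Set.Icc (0 : ℝ) 1) (hb : b ∈ Set.Icc (0 : ℝ) 1) (hc : c ∈ Set.Icc (0 : ℝ) 1)
    (hab : a ≠ b) (hac : a ≠ c) (hbc : b ≠ c) :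
    ∫ d, cr a b c d.2 ∂μ = 1 / 3 + (1 / 2) * ((∫ d, kk d.2 a * kk d.2 c ∂μ)
      + (∫ d, kk d.2 b * kk d.2 c ∂μ) - ∫ d, kk d.2 a * kk d.2 b ∂μ) -
      (1 / 2) * (kk c a * kk c b) := by
  have hp := hμ.1
  have e1 : ∀ a b : ℝ, a ∈ Set.Icc (0 : ℝ) 1 → b ∈ Set.Icc (0 : ℝ) 1 →
      ∫ d, kk d.2 a * kk d.2 b ∂μ = 1 / 3 - 2 * |b - a| + 2 * (b - a) ^ 2 := by
    intro a b ha hb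
    rw [← int_kkkk ha hb]
    exact int_snd hμ (f := fun u => kk u a * kk u b)
      ((BM.kk measurable_id measurable_const).mul (BM.kk measurable_id measurable_const)).meas
  have e2 : ∫ d, btw a b d.2 ∂μ = |b - a| := by
    rw [← int_btw ha hb]
    exact int_snd hμ (f := fun u => btw a b u)
      (BM.btw measurable_const measurable_const measurable_id).meas
  have e3 : ∫ d, cr a b c d.2 ∂μ = btw a b c + (1 - 2 * btw a b c) * |b - a| := by
    have : ∀ d : ℝ × ℝ, cr a b c d.2 = btw a b c + (1 - 2 * btw a b c) * btw a b d.2 := by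
      intro d; unfold cr; ring
    simp only [this]
    rw [integral_add (integrable_const _) (((BM.btw measurable_const measurable_const
      measurable_snd).integrable μ).const_mul _), integral_const_mul, e2]
    simp
  rw [e3, e1 a c ha hc, e1 b c hb hc, e1 a b ha hb]
  simp only [kk, btw, cl_of_mem ha, cl_of_mem hb, cl_of_mem hc]
  rcases lt_or_gt_of_ne hab with h1 | h1 <;> rcases lt_or_gt_of_ne hac with h2 | h2 <;>
    rcases lt_or_gt_of_ne hbc with h3 | h3 <;>
    first
    | (exfalso; linarith)
    | (simp only [ind_one h1, ind_one h2, ind_one h3, ind_zero h1.le, ind_zero h2.le,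
        ind_zero h3.le]
       first
       | rw [abs_of_pos (sub_pos.2 h1)]
       | rw [abs_of_neg (sub_neg.2 h1)]
       first
       | rw [abs_of_pos (sub_pos.2 h2)]
       | rw [abs_of_neg (sub_neg.2 h2)]
       first
       | rw [abs_of_pos (sub_pos.2 h3)]
       | rw [abs_of_neg (sub_neg.2 h3)]
       ring)


/-- Indicator that the four first coordinates are increasing. -/
noncomputable def O4 (a b c d : ℝ × ℝ) : ℝ := ind a.1 b.1 * ind b.1 c.1 * ind c.1 d.1

/-- Indicator that the third point is to the right of the first two. -/
noncomputable def M3 (a b c : ℝ × ℝ) : ℝ := ind a.1 c.1 * ind b.1 c.1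

/-- The averaged kernel. -/
noncomputable def J (μ : Measure (ℝ × ℝ)) (t u : ℝ) : ℝ := ∫ c, ind c.1 t * kk u c.2 ∂μ

section BM2
variable {α : Type*} [MeasurableSpace α]

lemma BM.O4 {a b c d : α → ℝ × ℝ} (ha : Measurable a) (hb : Measurable b) (hc : Measurable c)
    (hd : Measurable d) : BM (fun x => O4 (a x) (b x) (c x) (d x)) :=
  ((BM.ind ha.fst hb.fst).mul (BM.ind hb.fst hc.fst)).mul (BM.ind hc.fst hd.fst)

lemma BM.M3 {a b c : α → ℝ × ℝ} (ha : Measurable a) (hb : Measurable b) (hc : Measurable c) :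
    BM (fun x => M3 (a x) (b x) (c x)) :=
  (BM.ind ha.fst hc.fst).mul (BM.ind hb.fst hc.fst)

end BM2

lemma _root_.MeasureTheory.Integrable.fsub {α : Type*} [MeasurableSpace α] {ν : Measure α}
    {f g : α → ℝ} (hf : Integrable f ν) (hg : Integrable g ν) :
    Integrable (fun x => f x - g x) ν := hf.sub hg

section core
variable {μ : Measure (ℝ × ℝ)}

lemma ev (i : Fin 4) : Measurable (fun p : Fin 4 → ℝ × ℝ => p i) := measurable_pi_apply i

lemma T_eq (hμ : IsPermuton μ) :
    ∫ p, M3 (p 0) (p 1) (p 2) * cr (p 0).2 (p 1).2 (p 2).2 (p 3).2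
        ∂(Measure.pi fun _ : Fin 4 => μ) =
      1 / 3 * (∫ p, M3 (p 0) (p 1) (p 2) ∂(Measure.pi fun _ : Fin 4 => μ)) +
      1 / 2 * ((∫ p, M3 (p 0) (p 1) (p 2) * (kk (p 3).2 (p 0).2 * kk (p 3).2 (p 2).2)
          ∂(Measure.pi fun _ : Fin 4 => μ)) +
        (∫ p, M3 (p 0) (p 1) (p 2) * (kk (p 3).2 (p 1).2 * kk (p 3).2 (p 2).2)
          ∂(Measure.pi fun _ : Fin 4 => μ)) -
        ∫ p, M3 (p 0) (p 1) (p 2) * (kk (p 3).2 (p 0).2 * kk (p 3).2 (p 1).2)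
          ∂(Measure.pi fun _ : Fin 4 => μ)) -
      1 / 2 * ∫ p, M3 (p 0) (p 1) (p 2) * (kk (p 2).2 (p 0).2 * kk (p 2).2 (p 1).2)
          ∂(Measure.pi fun _ : Fin 4 => μ) := by
  have hp := hμ.1
  set f1 := fun p : Fin 4 → ℝ × ℝ =>
    M3 (p 0) (p 1) (p 2) * cr (p 0).2 (p 1).2 (p 2).2 (p 3).2 with hf1
  set f2 := fun p : Fin 4 → ℝ × ℝ => M3 (p 0) (p 1) (p 2) with hf2
  set f3 := fun p : Fin 4 → ℝ × ℝ =>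
    M3 (p 0) (p 1) (p 2) * (kk (p 3).2 (p 0).2 * kk (p 3).2 (p 2).2) with hf3
  set f4 := fun p : Fin 4 → ℝ × ℝ =>
    M3 (p 0) (p 1) (p 2) * (kk (p 3).2 (p 1).2 * kk (p 3).2 (p 2).2) with hf4
  set f5 := fun p : Fin 4 → ℝ × ℝ =>
    M3 (p 0) (p 1) (p 2) * (kk (p 3).2 (p 0).2 * kk (p 3).2 (p 1).2) with hf5
  set f6 := fun p : Fin 4 → ℝ × ℝ =>
    M3 (p 0) (p 1) (p 2) * (kk (p 2).2 (p 0).2 * kk (p 2).2 (p 1).2) with hf6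
  have hM : BM f2 := BM.M3 (ev 0) (ev 1) (ev 2)
  have hk : ∀ i j : Fin 4, BM (fun p : Fin 4 → ℝ × ℝ => kk (p i).2 (p j).2) :=
    fun i j => BM.kk (ev i).snd (ev j).snd
  have b1 : BM f1 := hM.mul (BM.cr (ev 0).snd (ev 1).snd (ev 2).snd (ev 3).snd)
  have b3 : BM f3 := hM.mul ((hk 3 0).mul (hk 3 2))
  have b4 : BM f4 := hM.mul ((hk 3 1).mul (hk 3 2))
  have b5 : BM f5 := hM.mul ((hk 3 0).mul (hk 3 1))
  have b6 : BM f6 := hM.mul ((hk 2 0).mul (hk 2 1))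
  have hB := ((b1.sub ((BM.const (1 / 3)).mul hM)).sub
    ((BM.const (1 / 2)).mul ((b3.add b4).sub b5))).add ((BM.const (1 / 2)).mul b6)
  have hz : ∫ p, (f1 p - 1 / 3 * f2 p - 1 / 2 * (f3 p + f4 p - f5 p) + 1 / 2 * f6 p)
      ∂(Measure.pi fun _ : Fin 4 => μ) = 0 := by
    have n := pi_four μ (G := fun a b c d => M3 a b c * cr a.2 b.2 c.2 d.2 - 1 / 3 * M3 a b c
      - 1 / 2 * (M3 a b c * (kk d.2 a.2 * kk d.2 c.2) + M3 a b c * (kk d.2 b.2 * kk d.2 c.2)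
        - M3 a b c * (kk d.2 a.2 * kk d.2 b.2)) + 1 / 2 * (M3 a b c * (kk c.2 a.2 * kk c.2 b.2)))
      hB
    refine Eq.trans n ?_
    refine integral_eq_zero_of_ae ?_
    filter_upwards [ae_sq hμ] with a ha
    refine integral_eq_zero_of_ae ?_
    filter_upwards [ae_sq hμ, ne_snd hμ a.2] with b hb hab
    refine integral_eq_zero_of_ae ?_
    filter_upwards [ae_sq hμ, ne_snd hμ a.2, ne_snd hμ b.2] with c hc hac hbc
    have hkey := key_int hμ ha.2 hb.2 hc.2 hab.symm hac.symm hbc.symm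
    have k1 : ∀ z : ℝ, BM (fun d : ℝ × ℝ => kk d.2 z) := fun z =>
      BM.kk measurable_snd measurable_const
    have i1 := ((BM.cr (measurable_const (a := a.2)) (measurable_const (a := b.2))
      (measurable_const (a := c.2)) (measurable_snd (α := ℝ) (β := ℝ))).integrable μ)
    have i2 := ((k1 a.2).mul (k1 c.2)).integrable μ
    have i3 := ((k1 b.2).mul (k1 c.2)).integrable μ
    have i4 := ((k1 a.2).mul (k1 b.2)).integrable μ
    have e : ∀ d : ℝ × ℝ, M3 a b c * cr a.2 b.2 c.2 d.2 - 1 / 3 * M3 a b c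
      - 1 / 2 * (M3 a b c * (kk d.2 a.2 * kk d.2 c.2) + M3 a b c * (kk d.2 b.2 * kk d.2 c.2)
        - M3 a b c * (kk d.2 a.2 * kk d.2 b.2)) + 1 / 2 * (M3 a b c * (kk c.2 a.2 * kk c.2 b.2))
      = M3 a b c * ((cr a.2 b.2 c.2 d.2 - 1 / 2 * (kk d.2 a.2 * kk d.2 c.2 + kk d.2 b.2 * kk d.2 c.2
        - kk d.2 a.2 * kk d.2 b.2)) + (1 / 2 * (kk c.2 a.2 * kk c.2 b.2) - 1 / 3)) := by
      intro d; ring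
    simp only [e]
    rw [integral_const_mul, integral_add (i1.fsub (((i2.fun_add i3).fsub i4).const_mul _))
      (integrable_const _), integral_sub i1 (((i2.fun_add i3).fsub i4).const_mul _), integral_const_mul,
      integral_sub (i2.fun_add i3) i4, integral_add i2 i3, hkey]
    simp only [integral_const, probReal_univ, smul_eq_mul, Pi.zero_apply]
    ring
  have I1 := b1.integrable (Measure.pi fun _ : Fin 4 => μ)
  have I2 := hM.integrable (Measure.pi fun _ : Fin 4 => μ)
  have I3 := b3.integrable (Measure.pi fun _ : Fin 4 => μ)
  have I4 := b4.integrable (Measure.pi fun _ : Fin 4 => μ)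
  have I5 := b5.integrable (Measure.pi fun _ : Fin 4 => μ)
  have I6 := b6.integrable (Measure.pi fun _ : Fin 4 => μ)
  rw [integral_add ((I1.fsub (I2.const_mul _)).fsub (((I3.fun_add I4).fsub I5).const_mul _))
    (I6.const_mul _), integral_sub (I1.fsub (I2.const_mul _)) (((I3.fun_add I4).fsub I5).const_mul _),
    integral_sub I1 (I2.const_mul _), integral_const_mul, integral_const_mul, integral_const_mul,
    integral_sub (I3.fun_add I4) I5, integral_add I3 I4] at hz
  linarith

lemma M3_sum {a b c : ℝ × ℝ} (hab : a.1 ≠ b.1) (hac : a.1 ≠ c.1) (hbc : b.1 ≠ c.1) :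
    M3 a b c + M3 a c b + M3 b c a = 1 := by
  unfold M3
  rcases lt_or_gt_of_ne hab with h1 | h1 <;> rcases lt_or_gt_of_ne hac with h2 | h2 <;>
    rcases lt_or_gt_of_ne hbc with h3 | h3 <;>
    first
    | (exfalso; linarith)
    | (simp only [ind_one h1, ind_one h2, ind_one h3, ind_zero h1.le, ind_zero h2.le,
        ind_zero h3.le]
       norm_num)

lemma M3_split (hμ : IsPermuton μ) {K : (Fin 4 → ℝ × ℝ) → ℝ} (hK : BM K) :
    ∫ p, K p ∂(Measure.pi fun _ : Fin 4 => μ) =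
      (∫ p, M3 (p 0) (p 1) (p 2) * K p ∂(Measure.pi fun _ : Fin 4 => μ)) +
      (∫ p, M3 (p 0) (p 2) (p 1) * K p ∂(Measure.pi fun _ : Fin 4 => μ)) +
      (∫ p, M3 (p 1) (p 2) (p 0) * K p ∂(Measure.pi fun _ : Fin 4 => μ)) := by
  have hp := hμ.1
  have b : ∀ i j k : Fin 4, Integrable (fun p : Fin 4 → ℝ × ℝ => M3 (p i) (p j) (p k) * K p)
    (Measure.pi fun _ : Fin 4 => μ) := fun i j k =>
      ((BM.M3 (ev i) (ev j) (ev k)).mul hK).integrable _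
  rw [← integral_add (b 0 1 2) (b 0 2 1), ← integral_add ((b 0 1 2).fun_add (b 0 2 1)) (b 1 2 0)]
  refine integral_congr_ae ?_
  filter_upwards [ae_ne4 hμ] with p hne
  rw [← add_mul, ← add_mul, M3_sum (hne 0 1 (by decide)).1 (hne 0 2 (by decide)).1
    (hne 1 2 (by decide)).1, one_mul]

lemma P3_eq (hμ : IsPermuton μ) :
    ∫ p, M3 (p 0) (p 1) (p 2) ∂(Measure.pi fun _ : Fin 4 => μ) = 1 / 3 := by
  have hp := hμ.1
  have h := M3_split hμ (BM.const (1 : ℝ))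
  simp only [mul_one, integral_const, probReal_univ, smul_eq_mul] at h
  rw [perm_four μ 0 2 1 3 (by decide) (fun a b c _ => M3 a b c),
    perm_four μ 1 2 0 3 (by decide) (fun a b c _ => M3 a b c)] at h
  linarith

lemma QR (hμ : IsPermuton μ) :
    (∫ p, M3 (p 0) (p 1) (p 2) * (kk (p 3).2 (p 0).2 * kk (p 3).2 (p 1).2)
          ∂(Measure.pi fun _ : Fin 4 => μ)) +
      2 * (∫ p, M3 (p 0) (p 1) (p 2) * (kk (p 3).2 (p 0).2 * kk (p 3).2 (p 2).2)
          ∂(Measure.pi fun _ : Fin 4 => μ)) = 0 := by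
  have hp := hμ.1
  have hk : ∀ i j : Fin 4, BM (fun p : Fin 4 → ℝ × ℝ => kk (p i).2 (p j).2) :=
    fun i j => BM.kk (ev i).snd (ev j).snd
  have h := M3_split hμ ((hk 3 0).mul (hk 3 1))
  have e1 := perm_four μ 0 2 1 3 (by decide)
    (fun a b c d => M3 a b c * (kk d.2 a.2 * kk d.2 c.2))
  have e2 := perm_four μ 1 2 0 3 (by decide)
    (fun a b c d => M3 a b c * (kk d.2 c.2 * kk d.2 a.2))
  have e2' : ∫ p, M3 (p 0) (p 1) (p 2) * (kk (p 3).2 (p 2).2 * kk (p 3).2 (p 0).2)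
          ∂(Measure.pi fun _ : Fin 4 => μ) =
      ∫ p, M3 (p 0) (p 1) (p 2) * (kk (p 3).2 (p 0).2 * kk (p 3).2 (p 2).2)
          ∂(Measure.pi fun _ : Fin 4 => μ) := by
    refine integral_congr_ae (Eventually.of_forall fun p => ?_)
    dsimp only
    ring
  have e3 : ∫ p, kk (p 3).2 (p 0).2 * kk (p 3).2 (p 1).2 ∂(Measure.pi fun _ : Fin 4 => μ) = 0 := by
    rw [perm_four μ 3 1 2 0 (by decide) (fun a b _ d => kk a.2 d.2 * kk a.2 b.2) |>.trans
      (pi_four μ (G := fun a b _ d => kk a.2 d.2 * kk a.2 b.2) ((hk 0 3).mul (hk 0 1)))]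
    refine integral_eq_zero_of_ae ?_
    filter_upwards [ae_sq hμ] with a ha
    refine integral_eq_zero_of_ae (Eventually.of_forall fun b => ?_)
    refine integral_eq_zero_of_ae (Eventually.of_forall fun c => ?_)
    dsimp only
    rw [integral_mul_const, int_snd hμ (f := fun y => kk a.2 y)
      (BM.kk measurable_const measurable_id).meas, int_kk ha.2, zero_mul]
    rfl
  rw [e3] at h
  rw [e1, e2, e2'] at h
  linarith

lemma R_symm (μ : Measure (ℝ × ℝ)) [IsProbabilityMeasure μ] :
    ∫ p, M3 (p 0) (p 1) (p 2) * (kk (p 3).2 (p 1).2 * kk (p 3).2 (p 2).2)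
          ∂(Measure.pi fun _ : Fin 4 => μ) =
    ∫ p, M3 (p 0) (p 1) (p 2) * (kk (p 3).2 (p 0).2 * kk (p 3).2 (p 2).2)
          ∂(Measure.pi fun _ : Fin 4 => μ) := by
  rw [← perm_four μ 1 0 2 3 (by decide)
    (fun a b c d => M3 a b c * (kk d.2 a.2 * kk d.2 c.2))]
  refine integral_congr_ae (Eventually.of_forall fun p => ?_)
  simp only [M3]
  ring

lemma T_eq2 (hμ : IsPermuton μ) :
    ∫ p, M3 (p 0) (p 1) (p 2) * cr (p 0).2 (p 1).2 (p 2).2 (p 3).2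
        ∂(Measure.pi fun _ : Fin 4 => μ) =
      1 / 9 - (∫ p, M3 (p 0) (p 1) (p 2) * (kk (p 3).2 (p 0).2 * kk (p 3).2 (p 1).2)
          ∂(Measure.pi fun _ : Fin 4 => μ)) -
      1 / 2 * ∫ p, M3 (p 0) (p 1) (p 2) * (kk (p 2).2 (p 0).2 * kk (p 2).2 (p 1).2)
          ∂(Measure.pi fun _ : Fin 4 => μ) := by
  have hp := hμ.1
  have h1 := T_eq hμ
  have h2 := QR hμ
  rw [R_symm, P3_eq hμ] at h1
  linarith

lemma Q_eq (μ : Measure (ℝ × ℝ)) [IsProbabilityMeasure μ] :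
    ∫ p, M3 (p 0) (p 1) (p 2) * (kk (p 3).2 (p 0).2 * kk (p 3).2 (p 1).2)
          ∂(Measure.pi fun _ : Fin 4 => μ) = ∫ a, ∫ b, J μ a.1 b.2 ^ 2 ∂μ ∂μ := by
  have hB : BM (fun p : Fin 4 → ℝ × ℝ =>
      M3 (p 2) (p 3) (p 0) * (kk (p 1).2 (p 2).2 * kk (p 1).2 (p 3).2)) :=
    (BM.M3 (ev 2) (ev 3) (ev 0)).mul
      ((BM.kk (ev 1).snd (ev 2).snd).mul (BM.kk (ev 1).snd (ev 3).snd))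
  rw [← perm_four μ 2 3 0 1 (by decide)
    (fun a b c d => M3 a b c * (kk d.2 a.2 * kk d.2 b.2)), 
    pi_four μ (G := fun a b c d => M3 c d a * (kk b.2 c.2 * kk b.2 d.2)) hB]
  refine integral_congr_ae (Eventually.of_forall fun a => ?_)
  refine integral_congr_ae (Eventually.of_forall fun b => ?_)
  have : ∀ c d : ℝ × ℝ, M3 c d a * (kk b.2 c.2 * kk b.2 d.2) =
    (ind c.1 a.1 * kk b.2 c.2) * (ind d.1 a.1 * kk b.2 d.2) := fun c d => by unfold M3; ring
  simp only [this, integral_const_mul, integral_mul_const, J, sq]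

lemma V_eq (μ : Measure (ℝ × ℝ)) [IsProbabilityMeasure μ] :
    ∫ p, M3 (p 0) (p 1) (p 2) * (kk (p 2).2 (p 0).2 * kk (p 2).2 (p 1).2)
          ∂(Measure.pi fun _ : Fin 4 => μ) = ∫ a, J μ a.1 a.2 ^ 2 ∂μ := by
  have hB : BM (fun p : Fin 4 → ℝ × ℝ =>
      M3 (p 2) (p 3) (p 0) * (kk (p 0).2 (p 2).2 * kk (p 0).2 (p 3).2)) :=
    (BM.M3 (ev 2) (ev 3) (ev 0)).mul
      ((BM.kk (ev 0).snd (ev 2).snd).mul (BM.kk (ev 0).snd (ev 3).snd))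
  rw [← perm_four μ 2 3 0 1 (by decide)
    (fun a b c d => M3 a b c * (kk c.2 a.2 * kk c.2 b.2)), 
    pi_four μ (G := fun a b c d => M3 c d a * (kk a.2 c.2 * kk a.2 d.2)) hB]
  refine integral_congr_ae (Eventually.of_forall fun a => ?_)
  have : ∀ c d : ℝ × ℝ, M3 c d a * (kk a.2 c.2 * kk a.2 d.2) =
    (ind c.1 a.1 * kk a.2 c.2) * (ind d.1 a.1 * kk a.2 d.2) := fun c d => by unfold M3; ring
  simp only [this, integral_const_mul, integral_mul_const, J, sq, integral_const, probReal_univ,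
    one_smul]

lemma cr_swap1 (a b c d : ℝ) : cr b a c d = cr a b c d := by unfold cr btw; ring
lemma cr_swap2 (a b c d : ℝ) : cr a b d c = cr a b c d := by unfold cr btw; ring

lemma cr_sum {a b c d : ℝ} (h01 : a ≠ b) (h02 : a ≠ c) (h03 : a ≠ d) (h12 : b ≠ c) (h13 : b ≠ d)
    (h23 : c ≠ d) : cr a b c d + cr a c b d + cr b c a d = 1 := by
  unfold cr btw
  rcases lt_or_gt_of_ne h01 with h1 | h1 <;> rcases lt_or_gt_of_ne h02 with h2 | h2 <;>
  rcases lt_or_gt_of_ne h03 with h3 | h3 <;> rcases lt_or_gt_of_ne h12 with h4 | h4 <;>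
  rcases lt_or_gt_of_ne h13 with h5 | h5 <;> rcases lt_or_gt_of_ne h23 with h6 | h6 <;>
    first
    | (exfalso; linarith)
    | (simp only [ind_one h1, ind_one h2, ind_one h3, ind_one h4, ind_one h5, ind_one h6,
        ind_zero h1.le, ind_zero h2.le, ind_zero h3.le, ind_zero h4.le, ind_zero h5.le,
        ind_zero h6.le]
       norm_num)

lemma M3_O4 {a b c d : ℝ × ℝ} (h01 : a.1 ≠ b.1) (h02 : a.1 ≠ c.1) (h03 : a.1 ≠ d.1)
    (h12 : b.1 ≠ c.1) (h13 : b.1 ≠ d.1) (h23 : c.1 ≠ d.1) :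
    M3 a b c = (O4 a b c d + O4 b a c d + O4 a b d c + O4 b a d c) + (O4 a d b c + O4 b d a c)
      + (O4 d a b c + O4 d b a c) := by
  unfold M3 O4
  rcases lt_or_gt_of_ne h01 with h1 | h1 <;> rcases lt_or_gt_of_ne h02 with h2 | h2 <;>
  rcases lt_or_gt_of_ne h03 with h3 | h3 <;> rcases lt_or_gt_of_ne h12 with h4 | h4 <;>
  rcases lt_or_gt_of_ne h13 with h5 | h5 <;> rcases lt_or_gt_of_ne h23 with h6 | h6 <;>
    first
    | (exfalso; linarith)
    | (simp only [ind_one h1, ind_one h2, ind_one h3, ind_one h4, ind_one h5, ind_one h6,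
        ind_zero h1.le, ind_zero h2.le, ind_zero h3.le, ind_zero h4.le, ind_zero h5.le,
        ind_zero h6.le]
       norm_num)

lemma T_Z (hμ : IsPermuton μ) :
    ∫ p, M3 (p 0) (p 1) (p 2) * cr (p 0).2 (p 1).2 (p 2).2 (p 3).2
        ∂(Measure.pi fun _ : Fin 4 => μ) =
    2 * ((∫ p, O4 (p 0) (p 1) (p 2) (p 3) * cr (p 0).2 (p 1).2 (p 2).2 (p 3).2
        ∂(Measure.pi fun _ : Fin 4 => μ)) +
      ∫ p, O4 (p 0) (p 1) (p 2) (p 3) ∂(Measure.pi fun _ : Fin 4 => μ)) := by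
  have hp := hμ.1
  set m := Measure.pi fun _ : Fin 4 => μ with hm
  let G1 : ℝ × ℝ → ℝ × ℝ → ℝ × ℝ → ℝ × ℝ → ℝ := fun a b c d => O4 a b c d * cr a.2 b.2 c.2 d.2
  let G2 : ℝ × ℝ → ℝ × ℝ → ℝ × ℝ → ℝ × ℝ → ℝ := fun a b c d => O4 a b c d * cr a.2 c.2 b.2 d.2
  let G3 : ℝ × ℝ → ℝ × ℝ → ℝ × ℝ → ℝ × ℝ → ℝ := fun a b c d => O4 a b c d * cr b.2 c.2 a.2 d.2
  have i1 : ∀ i j k l : Fin 4, Integrable (fun p => G1 (p i) (p j) (p k) (p l)) m :=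
    fun i j k l => ((BM.O4 (ev i) (ev j) (ev k) (ev l)).mul
      (BM.cr (ev i).snd (ev j).snd (ev k).snd (ev l).snd)).integrable _
  have i2 : ∀ i j k l : Fin 4, Integrable (fun p => G2 (p i) (p j) (p k) (p l)) m :=
    fun i j k l => ((BM.O4 (ev i) (ev j) (ev k) (ev l)).mul
      (BM.cr (ev i).snd (ev k).snd (ev j).snd (ev l).snd)).integrable _
  have i3 : ∀ i j k l : Fin 4, Integrable (fun p => G3 (p i) (p j) (p k) (p l)) m :=
    fun i j k l => ((BM.O4 (ev i) (ev j) (ev k) (ev l)).mul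
      (BM.cr (ev j).snd (ev k).snd (ev i).snd (ev l).snd)).integrable _
  have hO : ∫ p, O4 (p 0) (p 1) (p 2) (p 3) ∂m = (∫ p, G1 (p 0) (p 1) (p 2) (p 3) ∂m) +
      (∫ p, G2 (p 0) (p 1) (p 2) (p 3) ∂m) + (∫ p, G3 (p 0) (p 1) (p 2) (p 3) ∂m) := by
    rw [← integral_add (i1 0 1 2 3) (i2 0 1 2 3),
      ← integral_add ((i1 0 1 2 3).fun_add (i2 0 1 2 3)) (i3 0 1 2 3)]
    refine integral_congr_ae ?_
    filter_upwards [ae_ne4 hμ] with p hne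
    have := cr_sum (hne 0 1 (by decide)).2 (hne 0 2 (by decide)).2 (hne 0 3 (by decide)).2
      (hne 1 2 (by decide)).2 (hne 1 3 (by decide)).2 (hne 2 3 (by decide)).2
    simp only [G1, G2, G3]
    rw [← mul_add, ← mul_add, this, mul_one]
  have hT : ∫ p, M3 (p 0) (p 1) (p 2) * cr (p 0).2 (p 1).2 (p 2).2 (p 3).2 ∂m =
      ∫ p, ((G1 (p 0) (p 1) (p 2) (p 3) + G1 (p 1) (p 0) (p 2) (p 3)) +
        (G1 (p 0) (p 1) (p 3) (p 2) + G1 (p 1) (p 0) (p 3) (p 2))) +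
        ((G2 (p 0) (p 3) (p 1) (p 2) + G2 (p 1) (p 3) (p 0) (p 2)) +
        (G3 (p 3) (p 0) (p 1) (p 2) + G3 (p 3) (p 1) (p 0) (p 2))) ∂m := by
    refine integral_congr_ae ?_
    filter_upwards [ae_ne4 hμ] with p hne
    have := M3_O4 (hne 0 1 (by decide)).1 (hne 0 2 (by decide)).1 (hne 0 3 (by decide)).1
      (hne 1 2 (by decide)).1 (hne 1 3 (by decide)).1 (hne 2 3 (by decide)).1
    simp only [G1, G2, G3]
    rw [this, cr_swap1 (p 0).2 (p 1).2 (p 2).2 (p 3).2, cr_swap1 (p 0).2 (p 1).2 (p 3).2 (p 2).2,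
      cr_swap2 (p 0).2 (p 1).2 (p 2).2 (p 3).2]
    ring
  rw [hT, integral_add (((i1 0 1 2 3).fun_add (i1 1 0 2 3)).fun_add ((i1 0 1 3 2).fun_add (i1 1 0 3 2)))
    (((i2 0 3 1 2).fun_add (i2 1 3 0 2)).fun_add ((i3 3 0 1 2).fun_add (i3 3 1 0 2))),
    integral_add ((i1 0 1 2 3).fun_add (i1 1 0 2 3)) ((i1 0 1 3 2).fun_add (i1 1 0 3 2)),
    integral_add (i1 0 1 2 3) (i1 1 0 2 3), integral_add (i1 0 1 3 2) (i1 1 0 3 2),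
    integral_add ((i2 0 3 1 2).fun_add (i2 1 3 0 2)) ((i3 3 0 1 2).fun_add (i3 3 1 0 2)),
    integral_add (i2 0 3 1 2) (i2 1 3 0 2), integral_add (i3 3 0 1 2) (i3 3 1 0 2),
    perm_four μ 1 0 2 3 (by decide) G1, perm_four μ 0 1 3 2 (by decide) G1,
    perm_four μ 1 0 3 2 (by decide) G1, perm_four μ 0 3 1 2 (by decide) G2,
    perm_four μ 1 3 0 2 (by decide) G2, perm_four μ 3 0 1 2 (by decide) G3,
    perm_four μ 3 1 0 2 (by decide) G3, hO]
  change _ = 2 * ((∫ p, G1 (p 0) (p 1) (p 2) (p 3) ∂m) + _)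
  ring

end core


section dens
variable {μ : Measure (ℝ × ℝ)}

lemma sm4 (f : Fin 4 → ℝ) : StrictMono f ↔ f 0 < f 1 ∧ f 1 < f 2 ∧ f 2 < f 3 := by
  rw [Fin.strictMono_iff_lt_succ]
  simp [Fin.forall_fin_succ]

lemma sort_unique {x : Fin 4 → ℝ} {σ τ : Equiv.Perm (Fin 4)}
    (h1 : StrictMono fun i => x (σ i)) (h2 : StrictMono fun i => x (τ i)) : σ = τ := by
  have hx : Function.Injective x := by
    intro i j hij
    have := h1.injective (a₁ := σ.symm i) (a₂ := σ.symm j) (by simpa using hij)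
    simpa using this
  have hr : Set.range (fun i => x (σ i)) = Set.range (fun i => x (τ i)) := by
    have e1 : (fun i => x (σ i)) = x ∘ σ := rfl
    have e2 : (fun i => x (τ i)) = x ∘ τ := rfl
    rw [e1, e2, EquivLike.range_comp, EquivLike.range_comp]
  have h := (h1.range_inj h2).1 hr
  ext1 i
  exact hx (congrFun h i)

lemma symm_union [IsProbabilityMeasure μ] {s : Set (Fin 4 → ℝ × ℝ)} (hs : MeasurableSet s)
    (hm : ∀ q ∈ s, StrictMono fun i => (q i).1) :
    (Measure.pi fun _ : Fin 4 => μ) {p | ∃ σ : Equiv.Perm (Fin 4), (fun i => p (σ i)) ∈ s} =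
      24 * (Measure.pi fun _ : Fin 4 => μ) s := by
  have e : {p : Fin 4 → ℝ × ℝ | ∃ σ : Equiv.Perm (Fin 4), (fun i => p (σ i)) ∈ s} =
      ⋃ σ : Equiv.Perm (Fin 4), {p | (fun i => p (σ i)) ∈ s} := by
    ext p; simp
  rw [e, measure_iUnion]
  · simp only [perm_meas μ _ s hs]
    rw [tsum_fintype, Finset.sum_const, Finset.card_univ, Fintype.card_perm, Fintype.card_fin]
    simp [Nat.factorial]
  · intro σ τ hne
    refine Set.disjoint_left.2 fun p h1 h2 => hne ?_
    exact sort_unique (x := fun i => (p i).1) (hm _ h1) (hm _ h2)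
  · intro σ
    have : Measurable fun p : Fin 4 → ℝ × ℝ => fun i => p (σ i) :=
      measurable_pi_iff.2 fun i => measurable_pi_apply _
    exact this hs

lemma O4_sm (p : Fin 4 → ℝ × ℝ) : O4 (p 0) (p 1) (p 2) (p 3) =
    open Classical in if StrictMono (fun i => (p i).1) then (1 : ℝ) else 0 := by
  by_cases h : StrictMono (fun i => (p i).1)
  · rw [if_pos h]
    rw [sm4] at h
    unfold O4 ind
    simp [h.1, h.2.1, h.2.2]
  · rw [if_neg h]
    rw [sm4] at h
    unfold O4 ind
    split_ifs <;> simp_all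

lemma meas_sm : MeasurableSet {p : Fin 4 → ℝ × ℝ | StrictMono fun i => (p i).1} := by
  simp only [sm4]
  have h : ∀ i j : Fin 4, MeasurableSet {p : Fin 4 → ℝ × ℝ | (p i).1 < (p j).1} := fun i j =>
    measurableSet_lt (ev i).fst (ev j).fst
  exact (h 0 1).inter ((h 1 2).inter (h 2 3))

lemma int_O4 (hμ : IsPermuton μ) :
    ∫ p, O4 (p 0) (p 1) (p 2) (p 3) ∂(Measure.pi fun _ : Fin 4 => μ) = 1 / 24 := by
  have hp := hμ.1
  have h := symm_union (μ := μ) meas_sm (fun q hq => hq)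
  have h1 : (Measure.pi fun _ : Fin 4 => μ) {p | ∃ σ : Equiv.Perm (Fin 4), (fun i => p (σ i)) ∈
      {p : Fin 4 → ℝ × ℝ | StrictMono fun i => (p i).1}} = 1 := by
    rw [← measure_univ (μ := Measure.pi fun _ : Fin 4 => μ)]
    refine measure_congr ?_
    filter_upwards [ae_ne4 hμ] with p hne
    refine propext ⟨fun _ => trivial, fun _ => ⟨Tuple.sort fun i => (p i).1, ?_⟩⟩
    have hmono := Tuple.monotone_sort fun i => (p i).1
    refine hmono.strictMono_of_injective ?_
    intro i j hij
    by_contra hcon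
    exact (hne _ _ (fun h => hcon ((Tuple.sort fun i => (p i).1).injective h))).1 hij
  rw [h1] at h
  have e : ∫ p, O4 (p 0) (p 1) (p 2) (p 3) ∂(Measure.pi fun _ : Fin 4 => μ) =
      ∫ p, {p : Fin 4 → ℝ × ℝ | StrictMono fun i => (p i).1}.indicator 1 p
        ∂(Measure.pi fun _ : Fin 4 => μ) := by
    refine integral_congr_ae (Eventually.of_forall fun p => ?_)
    simp only [O4_sm, Set.indicator_apply]
    rfl
  rw [e, integral_indicator_one meas_sm, measureReal_def]
  have h2 := congrArg ENNReal.toReal h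
  rw [ENNReal.toReal_mul] at h2
  simp only [ENNReal.toReal_one, ENNReal.toReal_ofNat] at h2
  linarith

/-- Indicator that four reals are increasing. -/
noncomputable def ch (a b c d : ℝ) : ℝ := ind a b * ind b c * ind c d

lemma dens (hμ : IsPermuton μ) (π : Equiv.Perm (Fin 4)) (a b c d : Fin 4)
    (ha : π a = 0) (hb : π b = 1) (hc : π c = 2) (hd : π d = 3) :
    PermutonDensity π μ = 24 * ∫ p, O4 (p 0) (p 1) (p 2) (p 3) *
      ch (p a).2 (p b).2 (p c).2 (p d).2 ∂(Measure.pi fun _ : Fin 4 => μ) := by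
  have hp := hμ.1
  have key : ∀ y : Fin 4 → ℝ, (∀ i j : Fin 4, y i < y j ↔ π i < π j) ↔
      (y a < y b ∧ y b < y c ∧ y c < y d) := by
    intro y
    constructor
    · intro h
      refine ⟨(h a b).2 ?_, (h b c).2 ?_, (h c d).2 ?_⟩
      · rw [ha, hb]; decide
      · rw [hb, hc]; decide
      · rw [hc, hd]; decide
    · intro h i j
      have hsm : StrictMono (fun k => y (π.symm k)) := by
        rw [sm4, ← ha, ← hb, ← hc, ← hd]
        simpa using h
      have := hsm.lt_iff_lt (a := π i) (b := π j)
      simpa using this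
  set s : Set (Fin 4 → ℝ × ℝ) := {q | (StrictMono fun i => (q i).1) ∧
    ((q a).2 < (q b).2 ∧ (q b).2 < (q c).2 ∧ (q c).2 < (q d).2)} with hs
  have hl : ∀ i j : Fin 4, MeasurableSet {p : Fin 4 → ℝ × ℝ | (p i).2 < (p j).2} := fun i j =>
    measurableSet_lt (ev i).snd (ev j).snd
  have hsm : MeasurableSet s := meas_sm.inter ((hl a b).inter ((hl b c).inter (hl c d)))
  have h1 := symm_union (μ := μ) hsm (fun q hq => hq.1)
  have e : {p : Fin 4 → ℝ × ℝ | ∃ σ : Equiv.Perm (Fin 4),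
      StrictMono (fun i => (p (σ i)).1) ∧
        ∀ i j : Fin 4, (p (σ i)).2 < (p (σ j)).2 ↔ π i < π j} =
      {p | ∃ σ : Equiv.Perm (Fin 4), (fun i => p (σ i)) ∈ s} := by
    ext p
    refine exists_congr fun σ => and_congr Iff.rfl ?_
    exact key fun i => (p (σ i)).2
  unfold PermutonDensity
  rw [e, h1, ENNReal.toReal_mul]
  have e2 : ∫ p, O4 (p 0) (p 1) (p 2) (p 3) * ch (p a).2 (p b).2 (p c).2 (p d).2
      ∂(Measure.pi fun _ : Fin 4 => μ) =
      ∫ p, s.indicator 1 p ∂(Measure.pi fun _ : Fin 4 => μ) := by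
    refine integral_congr_ae (Eventually.of_forall fun p => ?_)
    simp only [O4_sm, Set.indicator_apply, hs, Set.mem_ofPred_eq, ch, ind, Pi.one_apply]
    split_ifs <;> simp_all
  rw [e2, integral_indicator_one hsm, measureReal_def]
  simp

lemma ch_sum {a b c d : ℝ} (h01 : a ≠ b) (h02 : a ≠ c) (h03 : a ≠ d) (h12 : b ≠ c) (h13 : b ≠ d)
    (h23 : c ≠ d) : ch a c b d + (ch a d b c + (ch c a d b + (ch d a c b + (ch b c a d +
      (ch b d a c + (ch c b d a + ch d b c a)))))) = cr a b c d := by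
  unfold cr btw ch
  rcases lt_or_gt_of_ne h01 with h1 | h1 <;> rcases lt_or_gt_of_ne h02 with h2 | h2 <;>
  rcases lt_or_gt_of_ne h03 with h3 | h3 <;> rcases lt_or_gt_of_ne h12 with h4 | h4 <;>
  rcases lt_or_gt_of_ne h13 with h5 | h5 <;> rcases lt_or_gt_of_ne h23 with h6 | h6 <;>
    first
    | (exfalso; linarith)
    | (simp only [ind_one h1, ind_one h2, ind_one h3, ind_one h4, ind_one h5, ind_one h6,
        ind_zero h1.le, ind_zero h2.le, ind_zero h3.le, ind_zero h4.le, ind_zero h5.le,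
        ind_zero h6.le]
       norm_num)

lemma sum_dens (hμ : IsPermuton μ) :
    ∑ π ∈ ({
        mk4 0 2 1 3,
        mk4 0 2 3 1,
        mk4 1 3 0 2,
        mk4 1 3 2 0,
        mk4 2 0 1 3,
        mk4 2 0 3 1,
        mk4 3 1 0 2,
        mk4 3 1 2 0} : Finset (Equiv.Perm (Fin 4))), PermutonDensity π μ =
    24 * ∫ p, O4 (p 0) (p 1) (p 2) (p 3) * cr (p 0).2 (p 1).2 (p 2).2 (p 3).2
        ∂(Measure.pi fun _ : Fin 4 => μ) := by
  have hp := hμ.1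
  rw [Finset.sum_insert (by decide), Finset.sum_insert (by decide), Finset.sum_insert (by decide),
    Finset.sum_insert (by decide), Finset.sum_insert (by decide), Finset.sum_insert (by decide),
    Finset.sum_insert (by decide), Finset.sum_singleton,
    dens hμ (mk4 0 2 1 3) 0 2 1 3 rfl rfl rfl rfl, dens hμ (mk4 0 2 3 1) 0 3 1 2 rfl rfl rfl rfl,
    dens hμ (mk4 1 3 0 2) 2 0 3 1 rfl rfl rfl rfl, dens hμ (mk4 1 3 2 0) 3 0 2 1 rfl rfl rfl rfl,
    dens hμ (mk4 2 0 1 3) 1 2 0 3 rfl rfl rfl rfl, dens hμ (mk4 2 0 3 1) 1 3 0 2 rfl rfl rfl rfl,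
    dens hμ (mk4 3 1 0 2) 2 1 3 0 rfl rfl rfl rfl, dens hμ (mk4 3 1 2 0) 3 1 2 0 rfl rfl rfl rfl]
  have hi : ∀ i j k l : Fin 4, Integrable (fun p : Fin 4 → ℝ × ℝ => O4 (p 0) (p 1) (p 2) (p 3) *
      ch (p i).2 (p j).2 (p k).2 (p l).2) (Measure.pi fun _ : Fin 4 => μ) := fun i j k l =>
    ((BM.O4 (ev 0) (ev 1) (ev 2) (ev 3)).mul (((BM.ind (ev i).snd (ev j).snd).mul
      (BM.ind (ev j).snd (ev k).snd)).mul (BM.ind (ev k).snd (ev l).snd))).integrable _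
  have g7 := (hi 2 1 3 0).fun_add (hi 3 1 2 0)
  have g6 := (hi 1 3 0 2).fun_add g7
  have g5 := (hi 1 2 0 3).fun_add g6
  have g4 := (hi 3 0 2 1).fun_add g5
  have g3 := (hi 2 0 3 1).fun_add g4
  have g2 := (hi 0 3 1 2).fun_add g3
  simp only [← mul_add]
  rw [← integral_add (hi 2 1 3 0) (hi 3 1 2 0), ← integral_add (hi 1 3 0 2) g7,
    ← integral_add (hi 1 2 0 3) g6, ← integral_add (hi 3 0 2 1) g5,
    ← integral_add (hi 2 0 3 1) g4, ← integral_add (hi 0 3 1 2) g3,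
    ← integral_add (hi 0 2 1 3) g2]
  congr 1
  refine integral_congr_ae ?_
  filter_upwards [ae_ne4 hμ] with p hne
  simp only [← mul_add]
  rw [ch_sum (hne 0 1 (by decide)).2 (hne 0 2 (by decide)).2 (hne 0 3 (by decide)).2
      (hne 1 2 (by decide)).2 (hne 1 3 (by decide)).2 (hne 2 3 (by decide)).2]

/-- The exact formula for the sum of densities. -/
lemma main_formula (hμ : IsPermuton μ) :
    ∑ π ∈ ({
        mk4 0 2 1 3,
        mk4 0 2 3 1,
        mk4 1 3 0 2,
        mk4 1 3 2 0,
        mk4 2 0 1 3,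
        mk4 2 0 3 1,
        mk4 3 1 0 2,
        mk4 3 1 2 0} : Finset (Equiv.Perm (Fin 4))), PermutonDensity π μ =
    1 / 3 - 12 * (∫ a, ∫ b, J μ a.1 b.2 ^ 2 ∂μ ∂μ) - 6 * ∫ a, J μ a.1 a.2 ^ 2 ∂μ := by
  have hp := hμ.1
  have h1 := sum_dens hμ
  have h2 := T_Z hμ
  have h3 := T_eq2 hμ
  rw [int_O4 hμ] at h2
  rw [Q_eq, V_eq] at h3
  linarith

end dens


section final
open Set
variable {μ : Measure (ℝ × ℝ)}

/-- The distribution function. -/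
noncomputable def FF (μ : Measure (ℝ × ℝ)) (t u : ℝ) : ℝ := ∫ c, ind c.1 t * ind c.2 u ∂μ

lemma J_BM (μ : Measure (ℝ × ℝ)) [IsProbabilityMeasure μ] :
    BM (fun z : ℝ × ℝ => J μ z.1 z.2) := by
  refine BM.integral (f := fun (z : ℝ × ℝ) (c : ℝ × ℝ) => ind c.1 z.1 * kk z.2 c.2) ?_ μ
  exact (BM.ind (by fun_prop) (by fun_prop)).mul (BM.kk (by fun_prop) (by fun_prop))

lemma J_formula (μ : Measure (ℝ × ℝ)) [IsProbabilityMeasure μ] (t u : ℝ) :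
    J μ t u = 2 * FF μ t u - (1 + 2 * cl u) * (∫ c, ind c.1 t ∂μ) +
      2 * ∫ c, ind c.1 t * cl c.2 ∂μ := by
  have b1 : BM (fun c : ℝ × ℝ => ind c.1 t) := BM.ind measurable_fst measurable_const
  have i1 := b1.integrable μ
  have i2 := (b1.mul (BM.ind (measurable_snd (α := ℝ)) (measurable_const (a := u)))).integrable μ
  have i3 := (b1.mul (BM.cl (measurable_snd (α := ℝ) (β := ℝ)))).integrable μ
  have e : ∀ c : ℝ × ℝ, ind c.1 t * kk u c.2 = 2 * (ind c.1 t * ind c.2 u) -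
      (1 + 2 * cl u) * ind c.1 t + 2 * (ind c.1 t * cl c.2) := fun c => by unfold kk; ring
  unfold J FF
  simp only [e]
  rw [integral_add ((i2.const_mul _).fsub (i1.const_mul _)) (i3.const_mul _),
    integral_sub (i2.const_mul _) (i1.const_mul _), integral_const_mul, integral_const_mul,
    integral_const_mul]

lemma ind_cont {a b : ℝ} (h : a ≠ b) : ContinuousAt (fun u => ind a u) b := by
  rcases lt_or_gt_of_ne h with h | h
  · have : (fun u => ind a u) =ᶠ[nhds b] fun _ => 1 := by
      filter_upwards [lt_mem_nhds h] with u hu using ind_one hu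
    exact continuousAt_const.congr this.symm
  · have : (fun u => ind a u) =ᶠ[nhds b] fun _ => 0 := by
      filter_upwards [gt_mem_nhds h] with u hu using ind_zero hu.le
    exact continuousAt_const.congr this.symm

lemma ind_abs (a b : ℝ) : |ind a b| ≤ 1 := by unfold ind; split_ifs <;> simp

lemma FF_cont_right (hμ : IsPermuton μ) (t : ℝ) : Continuous (FF μ t) := by
  have hp := hμ.1
  refine continuous_iff_continuousAt.2 fun u0 => ?_
  refine continuousAt_of_dominated (bound := fun _ => 1) ?_ ?_ (integrable_const _) ?_
  · exact Eventually.of_forall fun u => ((BM.ind measurable_fst measurable_const).mul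
      (BM.ind measurable_snd measurable_const)).meas.aestronglyMeasurable
  · refine Eventually.of_forall fun u => Eventually.of_forall fun c => ?_
    rw [Real.norm_eq_abs, abs_mul]
    exact mul_le_one₀ (ind_abs _ _) (abs_nonneg _) (ind_abs _ _)
  · filter_upwards [ne_snd hμ u0] with c hc
    exact continuousAt_const.mul (ind_cont hc)

lemma FF_cont_left (hμ : IsPermuton μ) (u : ℝ) : Continuous (fun t => FF μ t u) := by
  have hp := hμ.1
  refine continuous_iff_continuousAt.2 fun u0 => ?_
  refine continuousAt_of_dominated (bound := fun _ => 1) ?_ ?_ (integrable_const _) ?_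
  · exact Eventually.of_forall fun u => ((BM.ind measurable_fst measurable_const).mul
      (BM.ind measurable_snd measurable_const)).meas.aestronglyMeasurable
  · refine Eventually.of_forall fun u => Eventually.of_forall fun c => ?_
    rw [Real.norm_eq_abs, abs_mul]
    exact mul_le_one₀ (ind_abs _ _) (abs_nonneg _) (ind_abs _ _)
  · filter_upwards [ne_fst hμ u0] with c hc
    exact (ind_cont hc).mul continuousAt_const

lemma cl_mem (t : ℝ) : cl t ∈ Icc (0 : ℝ) 1 :=
  ⟨le_max_left _ _, max_le zero_le_one (min_le_left _ _)⟩

lemma cl_cont : Continuous cl := by unfold cl; fun_prop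

lemma ind_cl {x : ℝ} (hx : x ∈ Icc (0 : ℝ) 1) (h1 : x ≠ 1) (t : ℝ) : ind x (cl t) = ind x t := by
  have hx1 : x < 1 := lt_of_le_of_ne hx.2 h1
  unfold ind cl
  have : x < max 0 (min 1 t) ↔ x < t := by
    rw [lt_max_iff, lt_min_iff]
    exact ⟨fun h => h.elim (fun h => absurd h (not_lt.2 hx.1)) fun h => h.2,
      fun h => Or.inr ⟨hx1, h⟩⟩
  simp only [this]

lemma FF_cl (hμ : IsPermuton μ) (t u : ℝ) : FF μ t u = FF μ (cl t) (cl u) := by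
  refine integral_congr_ae ?_
  filter_upwards [ae_sq hμ, ne_fst hμ 1, ne_snd hμ 1] with c hc h1 h2
  rw [ind_cl hc.1 h1, ind_cl hc.2 h2]

lemma G_eq (hμ : IsPermuton μ) {t : ℝ} (ht : t ∈ Icc (0 : ℝ) 1) : ∫ c, ind c.1 t ∂μ = t := by
  have hB : BM (fun x => ind x t) := BM.ind measurable_id measurable_const
  rw [int_fst hμ (f := fun x => ind x t) hB.meas, int_split hB ht.1 le_rfl ht.2,
    intervalIntegral.integral_same,
    int_on (g := fun u => 1 + 0 * u + 0 * u ^ 2) ht.1 (fun x _ h => by rw [ind_one h]; ring),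
    int_on (g := fun u => 0 + 0 * u + 0 * u ^ 2) ht.2 (fun x h _ => by rw [ind_zero h.le]; ring),
    poly_int, poly_int]
  ring

lemma FF_of_Q (hμ : IsPermuton μ) (hQ : ∫ a, ∫ b, J μ a.1 b.2 ^ 2 ∂μ ∂μ = 0) (t u : ℝ) :
    FF μ t u = cl t * cl u := by
  have hp := hμ.1
  have hJ := J_BM μ
  have hJt : ∀ t, BM (fun u => J μ t u) := fun t => hJ.comp (measurable_prodMk_left (x := t))
  have e1 : ∀ t, ∫ b, J μ t b.2 ^ 2 ∂μ = ∫ u in Icc (0 : ℝ) 1, J μ t u ^ 2 := fun t =>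
    int_snd hμ (f := fun u => J μ t u ^ 2) ((hJt t).meas.pow_const 2)
  have hJ2 : BM (fun t => ∫ u in Icc (0 : ℝ) 1, J μ t u ^ 2) := by
    refine BM.integral (f := fun t u => J μ t u ^ 2) ?_ _
    simpa only [sq] using hJ.mul hJ
  simp only [e1] at hQ
  rw [int_fst hμ (f := fun t => ∫ u in Icc (0 : ℝ) 1, J μ t u ^ 2) hJ2.meas,
    integral_eq_zero_iff_of_nonneg (fun t => integral_nonneg fun u => sq_nonneg _)
      (hJ2.integrable _)] at hQ
  have h1 : ∀ᵐ t ∂(volume.restrict (Icc (0 : ℝ) 1)), ∀ u ∈ Icc (0 : ℝ) 1, FF μ t u = t * u := by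
    filter_upwards [hQ, ae_restrict_mem measurableSet_Icc] with t ht htm
    have hb : BM (fun u => J μ t u ^ 2) := by
      simpa only [sq] using (hJt t).mul (hJt t)
    have ht' := (integral_eq_zero_iff_of_nonneg (fun u => sq_nonneg (J μ t u))
      (hb.integrable (volume.restrict (Icc (0 : ℝ) 1)))).1 ht
    have hc : Continuous (fun u => J μ t u) := by
      have : (fun u => J μ t u) = fun u => 2 * FF μ t u - (1 + 2 * cl u) * (∫ c, ind c.1 t ∂μ) +
          2 * ∫ c, ind c.1 t * cl c.2 ∂μ := funext fun u => J_formula μ t u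
      rw [this]
      have h1 := FF_cont_right hμ t
      have h2 := cl_cont
      fun_prop
    have hae : (fun u => J μ t u) =ᵐ[volume.restrict (Icc (0 : ℝ) 1)] fun _ => (0 : ℝ) := by
      filter_upwards [ht'] with u hu
      simpa using hu
    have hall := Measure.eqOn_Icc_of_ae_eq volume (zero_ne_one (α := ℝ)) hae hc.continuousOn
      continuousOn_const
    have h0 : J μ t 0 = 0 := hall (left_mem_Icc.2 zero_le_one)
    have hF0 : FF μ t 0 = 0 := by
      refine integral_eq_zero_of_ae ?_
      filter_upwards [ae_sq hμ] with c hc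
      rw [ind_zero hc.2.1, mul_zero]; rfl
    intro u hu
    have hu0 : J μ t u = 0 := hall hu
    rw [J_formula, G_eq hμ htm] at h0 hu0
    rw [hF0, cl_of_mem (left_mem_Icc.2 zero_le_one)] at h0
    rw [cl_of_mem hu] at hu0
    linarith
  rw [FF_cl hμ]
  have hae : (fun t => FF μ t (cl u)) =ᵐ[volume.restrict (Icc (0 : ℝ) 1)] fun t => t * cl u := by
    filter_upwards [h1] with t ht using ht _ (cl_mem u)
  exact Measure.eqOn_Icc_of_ae_eq volume (zero_ne_one (α := ℝ)) hae
    (FF_cont_left hμ _).continuousOn (by fun_prop) (cl_mem t)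

lemma FF_real (μ : Measure (ℝ × ℝ)) (t u : ℝ) :
    FF μ t u = (μ (Iio t ×ˢ Iio u)).toReal := by
  have : FF μ t u = ∫ c, (Iio t ×ˢ Iio u).indicator 1 c ∂μ := by
    refine integral_congr_ae (Eventually.of_forall fun c => ?_)
    simp only [indicator_apply, ind, mem_prod, mem_Iio, Pi.one_apply]
    split_ifs <;> simp_all
  rw [this, integral_indicator_one (measurableSet_Iio.prod measurableSet_Iio), measureReal_def]

lemma ext_FF {ν : Measure (ℝ × ℝ)} [IsProbabilityMeasure μ] [IsProbabilityMeasure ν]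
    (h : ∀ t u, FF μ t u = FF ν t u) : μ = ν := by
  have hC : MeasurableSpace.generateFrom (range (Iio : ℝ → Set ℝ)) =
      (inferInstance : MeasurableSpace ℝ) := by
    rw [← borel_eq_generateFrom_Iio]
    exact (BorelSpace.measurable_eq (α := ℝ)).symm
  have hS : IsCountablySpanning (range (Iio : ℝ → Set ℝ)) :=
    ⟨fun n : ℕ => Iio (n : ℝ), fun n => mem_range_self _, by
      refine eq_univ_of_forall fun x => ?_
      obtain ⟨n, hn⟩ := exists_nat_gt x
      exact mem_iUnion.2 ⟨n, hn⟩⟩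
  refine ext_of_generate_finite _ (generateFrom_eq_prod hC hC hS hS).symm
    ((isPiSystem_Iio (α := ℝ)).prod isPiSystem_Iio) ?_ (by simp)
  rintro _ ⟨_, ⟨t, rfl⟩, _, ⟨u, rfl⟩, rfl⟩
  have := h t u
  rw [FF_real, FF_real] at this
  exact (ENNReal.toReal_eq_toReal_iff' (measure_ne_top _ _) (measure_ne_top _ _)).1 this

lemma unif_eq : uniformPermuton =
    (volume.restrict (Icc (0 : ℝ) 1)).prod (volume.restrict (Icc (0 : ℝ) 1)) := by
  rw [Measure.prod_restrict]; rfl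

lemma unif_perm : IsPermuton uniformPermuton := by
  have hv : ∀ x x' : ℝ, 0 ≤ x → x' ≤ 1 →
      (volume.restrict (Icc (0 : ℝ) 1)) (Icc x x') = ENNReal.ofReal (x' - x) := by
    intro x x' h0 h1
    rw [Measure.restrict_apply measurableSet_Icc,
      inter_eq_left.2 (Icc_subset_Icc h0 h1), Real.volume_Icc]
  have h1 : (volume.restrict (Icc (0 : ℝ) 1)) (Icc 0 1) = 1 := by
    rw [hv 0 1 le_rfl le_rfl]; simp
  refine ⟨?_, ?_, ?_⟩
  · rw [unif_eq]; infer_instance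
  · intro x x' h0 _ h2
    rw [unif_eq, Measure.prod_prod, h1, mul_one, hv _ _ h0 h2]
  · intro x x' h0 _ h2
    rw [unif_eq, Measure.prod_prod, h1, one_mul, hv _ _ h0 h2]

lemma unif_J {u : ℝ} (hu : u ∈ Icc (0 : ℝ) 1) (t : ℝ) : J uniformPermuton t u = 0 := by
  unfold J
  rw [unif_eq, integral_prod_mul (f := fun x => ind x t) (g := fun y => kk u y), int_kk hu,
    mul_zero]

lemma unif_Q : ∫ a, ∫ b, J uniformPermuton a.1 b.2 ^ 2 ∂uniformPermuton ∂uniformPermuton = 0 := by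
  refine integral_eq_zero_of_ae (Eventually.of_forall fun a => ?_)
  refine integral_eq_zero_of_ae ?_
  filter_upwards [ae_sq unif_perm] with b hb
  rw [unif_J hb.2]
  simp

lemma unif_V : ∫ a, J uniformPermuton a.1 a.2 ^ 2 ∂uniformPermuton = 0 := by
  refine integral_eq_zero_of_ae ?_
  filter_upwards [ae_sq unif_perm] with b hb
  rw [unif_J hb.2]
  simp

end final

end PF

theorem statement_9 (μ : Measure (ℝ × ℝ)) (hμ : IsPermuton μ) :
    ∑ π ∈ ({
        mk4 0 2 1 3,
        mk4 0 2 3 1,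
        mk4 1 3 0 2,
        mk4 1 3 2 0,
        mk4 2 0 1 3,
        mk4 2 0 3 1,
        mk4 3 1 0 2,
        mk4 3 1 2 0} : Finset (Equiv.Perm (Fin 4))), PermutonDensity π μ ≤ (1 / 3 : ℝ) ∧
      (∑ π ∈ ({
        mk4 0 2 1 3,
        mk4 0 2 3 1,
        mk4 1 3 0 2,
        mk4 1 3 2 0,
        mk4 2 0 1 3,
        mk4 2 0 3 1,
        mk4 3 1 0 2,
        mk4 3 1 2 0} : Finset (Equiv.Perm (Fin 4))), PermutonDensity π μ = (1 / 3 : ℝ) ↔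
        μ = uniformPermuton) := by
  have hp := hμ.1
  rw [PF.main_formula hμ]
  have hQ : 0 ≤ ∫ a, ∫ b, PF.J μ a.1 b.2 ^ 2 ∂μ ∂μ :=
    integral_nonneg fun a => integral_nonneg fun b => sq_nonneg _
  have hV : 0 ≤ ∫ a, PF.J μ a.1 a.2 ^ 2 ∂μ := integral_nonneg fun a => sq_nonneg _
  refine ⟨by linarith, fun h => ?_, ?_⟩
  · have hp2 := PF.unif_perm.1
    refine PF.ext_FF fun t u => ?_
    rw [PF.FF_of_Q hμ (by linarith), PF.FF_of_Q PF.unif_perm PF.unif_Q]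
  · rintro rfl
    rw [PF.unif_Q, PF.unif_V]
    norm_num
end

section
/- Let S = {1234, 1243, 1432, 2134, 2143, 2341, 3214, 3412, 3421, 4123, 4312, 4321}. For every permuton μ it holds that Σ_{π∈S} d(π,μ) ≥ 1/2, and equality holds if and only if μ is the uniform permuton. -/
open MeasureTheory Filter

set_option linter.unusedSectionVars false

noncomputable section
namespace PQ

/-- Bounded measurable real functions. -/
@[fun_prop]
def BM {α : Type*} [MeasurableSpace α] (f : α → ℝ) : Prop :=
  Measurable f ∧ ∃ C : ℝ, ∀ x, |f x| ≤ C

section bm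
variable {α : Type*} [MeasurableSpace α]

@[fun_prop]
theorem BM.const (c : ℝ) : BM (fun _ : α => c) := ⟨measurable_const, |c|, fun _ => le_rfl⟩

@[fun_prop]
theorem BM.add {f g : α → ℝ} (hf : BM f) (hg : BM g) : BM (fun x => f x + g x) := by
  obtain ⟨hf, C, hC⟩ := hf
  obtain ⟨hg, D, hD⟩ := hg
  exact ⟨hf.add hg, C + D, fun x => (abs_add_le _ _).trans (add_le_add (hC x) (hD x))⟩

@[fun_prop]
theorem BM.neg {f : α → ℝ} (hf : BM f) : BM (fun x => - f x) := by
  obtain ⟨hf, C, hC⟩ := hf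
  exact ⟨hf.neg, C, fun x => by rw [abs_neg]; exact hC x⟩

@[fun_prop]
theorem BM.sub {f g : α → ℝ} (hf : BM f) (hg : BM g) : BM (fun x => f x - g x) := by
  simpa [sub_eq_add_neg] using BM.add hf (BM.neg hg)

@[fun_prop]
theorem BM.mul {f g : α → ℝ} (hf : BM f) (hg : BM g) : BM (fun x => f x * g x) := by
  obtain ⟨hf, C, hC⟩ := hf
  obtain ⟨hg, D, hD⟩ := hg
  refine ⟨hf.mul hg, C * D, fun x => ?_⟩
  rw [abs_mul]
  exact mul_le_mul (hC x) (hD x) (abs_nonneg _) ((abs_nonneg _).trans (hC x))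

@[fun_prop]
theorem BM.pow {f : α → ℝ} (hf : BM f) (n : ℕ) : BM (fun x => f x ^ n) := by
  induction n with
  | zero => simpa using BM.const 1
  | succ n ih => simpa [pow_succ] using BM.mul ih hf

theorem BM.comp {β : Type*} [MeasurableSpace β] {f : β → ℝ} (hf : BM f) {g : α → β}
    (hg : Measurable g) : BM (fun x => f (g x)) :=
  ⟨hf.1.comp hg, hf.2.choose, fun _ => hf.2.choose_spec _⟩

theorem BM.integrable {f : α → ℝ} (hf : BM f) (μ : Measure α) [IsFiniteMeasure μ] :
    Integrable f μ := by
  obtain ⟨hf, C, hC⟩ := hf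
  exact Integrable.of_bound hf.aestronglyMeasurable C (Eventually.of_forall hC)

theorem BM.integral {β : Type*} [MeasurableSpace β] (μ : Measure β) [IsProbabilityMeasure μ]
    {f : α → β → ℝ} (hf : BM (fun x : α × β => f x.1 x.2)) : BM (fun x => ∫ z, f x z ∂μ) := by
  obtain ⟨hf, C, hC⟩ := hf
  refine ⟨hf.stronglyMeasurable.integral_prod_right.measurable, C, fun x => ?_⟩
  have := norm_integral_le_of_norm_le_const (μ := μ) (f := fun z => f x z) (C := C)
    (Eventually.of_forall fun z => hC (x, z))
  simpa using this

end bm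

abbrev Om := ℝ × ℝ

def co (i : Bool) (p : Om) : ℝ := if i then p.2 else p.1

@[fun_prop]
theorem measurable_co (i : Bool) : Measurable (co i) := by
  cases i
  · exact measurable_fst
  · exact measurable_snd

/-- sign kernel -/
def sg (i : Bool) (p q : Om) : ℝ :=
  if co i q < co i p then 1 else if co i p < co i q then -1 else 0

@[fun_prop]
theorem bm_sg {α : Type*} [MeasurableSpace α] (i : Bool) {f g : α → Om} (hf : Measurable f)
    (hg : Measurable g) : BM (fun x => sg i (f x) (g x)) := by
  have h1 : Measurable fun x => co i (f x) := by fun_prop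
  have h2 : Measurable fun x => co i (g x) := by fun_prop
  refine ⟨?_, 1, fun x => ?_⟩
  · unfold sg
    exact Measurable.ite (measurableSet_lt h2 h1) measurable_const
      (Measurable.ite (measurableSet_lt h1 h2) measurable_const measurable_const)
  · simp only [sg]
    split_ifs <;> simp

theorem sg_anti (i : Bool) (p q : Om) : sg i p q = - sg i q p := by
  unfold sg
  split_ifs <;> linarith

theorem sg_sq (i : Bool) {p q : Om} (h : co i p ≠ co i q) : sg i p q ^ 2 = 1 := by
  unfold sg
  rcases lt_or_gt_of_ne h with h | h
  · simp [h]
  · simp [h]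

theorem sg_tri (i : Bool) {p q z : Om} (h : co i z ≠ co i p) (h' : co i z ≠ co i q) :
    sg i p z * sg i q z = 1 - sg i p q * (sg i p z - sg i q z) := by
  unfold sg
  rcases lt_or_gt_of_ne h with h | h <;> rcases lt_or_gt_of_ne h' with h' | h' <;>
  split_ifs <;> linarith

/-- no ties -/
def NT (μ : Measure Om) : Prop := ∀ i x, ∀ᵐ z ∂μ, co i z ≠ x

def av (μ : Measure Om) (i : Bool) (p : Om) : ℝ := ∫ z, sg i z p ∂μ
def HH (μ : Measure Om) (i j : Bool) (p q : Om) : ℝ := ∫ z, sg i p z * sg j q z ∂μ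
def dd (μ : Measure Om) (i j : Bool) (p q : Om) : ℝ := HH μ i j p q - av μ i p * av μ j q
def rr (μ : Measure Om) (i j : Bool) (p : Om) : ℝ := ∫ q, dd μ i j p q ∂μ
def ph (μ : Measure Om) (i : Bool) (p q : Om) : ℝ := sg i p q - (av μ i q - av μ i p)
def E2 (μ : Measure Om) (f : Om → Om → ℝ) : ℝ := ∫ p, ∫ q, f p q ∂μ ∂μ

section
variable (μ : Measure Om) [IsProbabilityMeasure μ] {α : Type*} [MeasurableSpace α]

@[fun_prop]
theorem bm_av (i : Bool) {f : α → Om} (hf : Measurable f) : BM (fun x => av μ i (f x)) := by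
  refine BM.comp (f := av μ i) ?_ hf
  apply BM.integral μ (f := fun p z => sg i z p)
  fun_prop

@[fun_prop]
theorem bm_HH (i j : Bool) {f g : α → Om} (hf : Measurable f) (hg : Measurable g) :
    BM (fun x => HH μ i j (f x) (g x)) := by
  apply BM.integral μ (f := fun x z => sg i (f x) z * sg j (g x) z)
  fun_prop

@[fun_prop]
theorem bm_dd (i j : Bool) {f g : α → Om} (hf : Measurable f) (hg : Measurable g) :
    BM (fun x => dd μ i j (f x) (g x)) := by
  unfold dd; fun_prop

@[fun_prop]
theorem bm_ph (i : Bool) {f g : α → Om} (hf : Measurable f) (hg : Measurable g) :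
    BM (fun x => ph μ i (f x) (g x)) := by
  unfold ph; fun_prop

@[fun_prop]
theorem bm_rr (i j : Bool) {f : α → Om} (hf : Measurable f) : BM (fun x => rr μ i j (f x)) := by
  apply BM.integral μ (f := fun x z => dd μ i j (f x) z)
  fun_prop

theorem I_add {f g : Om → ℝ} (hf : BM f) (hg : BM g) :
    ∫ z, (f z + g z) ∂μ = ∫ z, f z ∂μ + ∫ z, g z ∂μ :=
  integral_add (hf.integrable μ) (hg.integrable μ)
theorem I_sub {f g : Om → ℝ} (hf : BM f) (hg : BM g) :
    ∫ z, (f z - g z) ∂μ = ∫ z, f z ∂μ - ∫ z, g z ∂μ :=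
  integral_sub (hf.integrable μ) (hg.integrable μ)

theorem E2_add {f g : Om → Om → ℝ} (hf : BM (fun x : Om × Om => f x.1 x.2))
    (hg : BM (fun x : Om × Om => g x.1 x.2)) :
    E2 μ (fun p q => f p q + g p q) = E2 μ f + E2 μ g := by
  unfold E2
  rw [← I_add μ (BM.integral μ hf) (BM.integral μ hg)]
  congr 1; ext p
  exact I_add μ (hf.comp (by fun_prop : Measurable fun q : Om => (p, q)))
    (hg.comp (by fun_prop : Measurable fun q : Om => (p, q)))

theorem E2_cmul (c : ℝ) (f : Om → Om → ℝ) : E2 μ (fun p q => c * f p q) = c * E2 μ f := by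
  unfold E2; simp only [integral_const_mul]

theorem E2_sub {f g : Om → Om → ℝ} (hf : BM (fun x : Om × Om => f x.1 x.2))
    (hg : BM (fun x : Om × Om => g x.1 x.2)) :
    E2 μ (fun p q => f p q - g p q) = E2 μ f - E2 μ g := by
  unfold E2
  rw [← I_sub μ (BM.integral μ hf) (BM.integral μ hg)]
  congr 1; ext p
  exact I_sub μ (hf.comp (by fun_prop : Measurable fun q : Om => (p, q)))
    (hg.comp (by fun_prop : Measurable fun q : Om => (p, q)))

theorem E2_swap {f : Om → Om → ℝ} (hf : BM (fun x : Om × Om => f x.1 x.2)) :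
    E2 μ f = E2 μ (fun p q => f q p) := by
  unfold E2
  exact integral_integral_swap (hf.integrable (μ.prod μ))

theorem E2_left (f g : Om → ℝ) : E2 μ (fun p q => f p * g q) = (∫ p, f p ∂μ) * ∫ q, g q ∂μ := by
  unfold E2; simp only [integral_const_mul, integral_mul_const]

theorem E2_inner (f : Om → ℝ) (g : Om → Om → ℝ) :
    E2 μ (fun p q => f p * g p q) = ∫ p, f p * ∫ q, g p q ∂μ ∂μ := by
  unfold E2; simp only [integral_const_mul]

theorem E2_congr {f g : Om → Om → ℝ} (h : ∀ p, ∀ᵐ q ∂μ, f p q = g p q) : E2 μ f = E2 μ g := by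
  unfold E2
  congr 1; ext p
  exact integral_congr_ae (h p)

end
end PQ
end

noncomputable section
namespace PQ
section
variable (μ : Measure Om) [IsProbabilityMeasure μ]

theorem I_sg (i : Bool) (p : Om) : ∫ z, sg i p z ∂μ = - av μ i p := by
  unfold av
  rw [← integral_neg]
  congr 1; ext z; exact sg_anti i p z

theorem I_av (i : Bool) : ∫ z, av μ i z ∂μ = 0 := by
  have h : E2 μ (fun p q => sg i q p) = E2 μ (fun p q => sg i p q) :=
    E2_swap μ (by fun_prop)
  have h1 : E2 μ (fun p q => sg i q p) = ∫ z, av μ i z ∂μ := rfl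
  have h2 : E2 μ (fun p q => sg i p q) = - ∫ z, av μ i z ∂μ := by
    unfold E2; simp only [I_sg, integral_neg]
  linarith

theorem dd_symm (i j : Bool) (p q : Om) : dd μ i j p q = dd μ j i q p := by
  unfold dd HH
  congr 1
  · congr 1; ext z; ring
  · ring

theorem rr_symm (i j : Bool) (q : Om) : ∫ p, dd μ i j p q ∂μ = rr μ j i q := by
  unfold rr; simp only [dd_symm μ i j]

/-- centred kernel -/
def gm (i : Bool) (q z : Om) : ℝ := sg i q z + av μ i q

@[fun_prop]
theorem bm_gm {α : Type*} [MeasurableSpace α] (i : Bool) {f g : α → Om} (hf : Measurable f)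
    (hg : Measurable g) : BM (fun x => gm μ i (f x) (g x)) := by
  unfold gm; fun_prop

theorem I_gm (i : Bool) (q : Om) : ∫ z, gm μ i q z ∂μ = 0 := by
  unfold gm
  rw [I_add μ (by fun_prop) (by fun_prop), I_sg]
  simp

theorem dd_eq (i j : Bool) (p q : Om) : dd μ i j p q = ∫ z, sg i p z * gm μ j q z ∂μ := by
  unfold gm dd HH
  simp only [mul_add]
  rw [I_add μ (by fun_prop) (by fun_prop), integral_mul_const, I_sg]
  ring

theorem rr_eq (i j : Bool) (p : Om) : rr μ i j p = ∫ z, sg i p z * av μ j z ∂μ := by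
  have h : E2 μ (fun q z => sg i p z * sg j q z) = E2 μ (fun z q => sg i p z * sg j q z) :=
    E2_swap μ (by fun_prop)
  unfold rr dd
  rw [I_sub μ (by fun_prop) (by fun_prop), integral_const_mul, I_av]
  unfold E2 at h
  simp only [integral_const_mul] at h
  unfold HH
  rw [h, mul_zero, sub_zero]
  rfl

theorem mm_eq (i j : Bool) : ∫ p, rr μ i j p ∂μ = ∫ z, av μ i z * av μ j z ∂μ := by
  simp only [rr_eq]
  have h : E2 μ (fun p z => sg i p z * av μ j z) = E2 μ (fun z p => sg i p z * av μ j z) :=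
    E2_swap μ (by fun_prop)
  unfold E2 at h
  rw [h]
  simp only [integral_mul_const]
  rfl

theorem mm_symm (i j : Bool) : ∫ p, rr μ i j p ∂μ = ∫ p, rr μ j i p ∂μ := by
  rw [mm_eq, mm_eq]; simp only [mul_comm]

/-- doubly centred `dd` as an integral -/
theorem dd0_eq (i j : Bool) (p q : Om) :
    ∫ z, ph μ i p z * ph μ j q z ∂μ
      = dd μ i j p q - rr μ i j p - rr μ j i q + ∫ z, rr μ i j z ∂μ := by
  have e : ∀ z, ph μ i p z * ph μ j q z = sg i p z * sg j q z - sg i p z * av μ j z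
     + av μ j q * sg i p z - sg j q z * av μ i z + av μ i z * av μ j z - av μ j q * av μ i z
     + av μ i p * sg j q z - av μ i p * av μ j z + av μ i p * av μ j q := by
    intro z; unfold ph; ring
  simp only [e]
  simp (disch := fun_prop) only [I_add, I_sub, integral_const_mul, I_sg, I_av, ← rr_eq, ← mm_eq]
  rw [dd, HH]
  simp
  ring

theorem star0 (i j : Bool) (q : Om) : ∫ p, gm μ j q p * dd μ i j p q ∂μ = 0 := by
  simp only [dd_eq]
  have h : E2 μ (fun p z => gm μ j q p * (sg i p z * gm μ j q z))
     = E2 μ (fun z p => gm μ j q p * (sg i p z * gm μ j q z)) :=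
    E2_swap μ (by fun_prop)
  have h' : E2 μ (fun z p => gm μ j q p * (sg i p z * gm μ j q z))
     = - E2 μ (fun p z => gm μ j q p * (sg i p z * gm μ j q z)) := by
    rw [← neg_one_mul, ← E2_cmul]
    congr 1; ext z p; rw [sg_anti i p z]; ring
  have h2 : E2 μ (fun p z => gm μ j q p * (sg i p z * gm μ j q z)) = 0 := by linarith
  rw [E2_inner] at h2
  exact h2

theorem sym3 (hN : NT μ) (i : Bool) (p w : Om) : ∀ᵐ z ∂μ,
    sg i p w * sg i p z + sg i z w * sg i z p = 1 + sg i p w * sg i w z := by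
  filter_upwards [hN i (co i p), hN i (co i w)] with z h1 h2
  have := sg_tri i h1 h2
  rw [sg_anti i z w, sg_anti i z p]
  linarith

theorem star1 (hN : NT μ) (i j : Bool) (q w : Om) :
    ∫ p, sg i p w * gm μ j q p * dd μ i j p q ∂μ = - (1 / 2) * dd μ i j w q ^ 2 := by
  simp only [dd_eq μ i j _ q]
  have h : E2 μ (fun p z => sg i p w * gm μ j q p * (sg i p z * gm μ j q z))
     = E2 μ (fun z p => sg i p w * gm μ j q p * (sg i p z * gm μ j q z)) :=
    E2_swap μ (by fun_prop)
  have h1 : E2 μ (fun p z => sg i p w * gm μ j q p * (sg i p z * gm μ j q z))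
     + E2 μ (fun z p => sg i p w * gm μ j q p * (sg i p z * gm μ j q z))
     = E2 μ (fun p z => gm μ j q p * gm μ j q z
        + (sg i p w * gm μ j q p) * (sg i w z * gm μ j q z)) := by
    rw [← E2_add μ (by fun_prop) (by fun_prop)]
    apply E2_congr
    intro p
    filter_upwards [sym3 μ hN i p w] with z hz
    linear_combination (gm μ j q p * gm μ j q z) * hz
  rw [E2_add μ (by fun_prop) (by fun_prop), E2_left, E2_left, I_gm] at h1
  have h3 : ∫ p, sg i p w * gm μ j q p ∂μ = - ∫ p, sg i w p * gm μ j q p ∂μ := by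
    rw [← integral_neg]; congr 1; ext p; rw [sg_anti i p w]; ring
  rw [h3] at h1
  rw [← h] at h1
  rw [E2_inner] at h1
  linarith

theorem I_ph_dd (i j : Bool) (q : Om) :
    ∫ p, ph μ j p q * dd μ i j p q ∂μ = ∫ p, av μ j p * dd μ i j p q ∂μ := by
  have e : ∀ p, ph μ j p q * dd μ i j p q
      = av μ j p * dd μ i j p q - gm μ j q p * dd μ i j p q := by
    intro p; unfold ph gm; rw [sg_anti j p q]; ring
  simp only [e]
  rw [I_sub μ (by fun_prop) (by fun_prop), star0]; ring

theorem q_eq (hN : NT μ) (i : Bool) (w : Om) :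
    ∫ p, sg i p w * av μ i p ∂μ = (av μ i w ^ 2 - 1) / 2 := by
  have h : E2 μ (fun p z => sg i p w * sg i z p) = E2 μ (fun z p => sg i p w * sg i z p) :=
    E2_swap μ (by fun_prop)
  have h1 : E2 μ (fun p z => sg i p w * sg i z p) + E2 μ (fun z p => sg i p w * sg i z p)
     = E2 μ (fun p z => (-1) - sg i p w * sg i w z) := by
    rw [← E2_add μ (by fun_prop) (by fun_prop)]
    apply E2_congr
    intro p
    filter_upwards [sym3 μ hN i p w] with z hz
    rw [sg_anti i z p] at *
    linear_combination - hz
  rw [E2_sub μ (by fun_prop) (by fun_prop), E2_left, I_sg, ← h, E2_inner] at h1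
  have h2 : E2 μ (fun _ _ => (-1 : ℝ)) = -1 := by simp [E2]
  rw [h2] at h1
  change (∫ p, sg i p w * av μ i p ∂μ) + (∫ p, sg i p w * av μ i p ∂μ) = -1 - av μ i w * _ at h1
  linarith

theorem av_sq (hN : NT μ) (i : Bool) : ∫ p, av μ i p ^ 2 ∂μ = 1 / 3 := by
  have h : E2 μ (fun w p => sg i p w * av μ i p) = E2 μ (fun p w => sg i p w * av μ i p) :=
    E2_swap μ (by fun_prop)
  unfold E2 at h
  simp only [q_eq μ hN, integral_mul_const, I_sg] at h
  have e : ∀ w, (av μ i w ^ 2 - 1) / 2 = (1 / 2) * av μ i w ^ 2 - 1 / 2 := by intro w; ring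
  have e' : ∀ w, - av μ i w * av μ i w = (-1) * av μ i w ^ 2 := by intro w; ring
  simp only [e, e', integral_const_mul] at h
  rw [I_sub μ (by fun_prop) (by fun_prop), integral_const_mul] at h
  simp at h
  linarith

/-- `1 - 2|x₁ - x₂|` -/
def UU (i : Bool) (p q : Om) : ℝ := 1 - sg i p q * (av μ i q - av μ i p)

@[fun_prop]
theorem bm_UU {α : Type*} [MeasurableSpace α] (i : Bool) {f g : α → Om} (hf : Measurable f)
    (hg : Measurable g) : BM (fun x => UU μ i (f x) (g x)) := by
  unfold UU; fun_prop

theorem I_ss (hN : NT μ) (i : Bool) (p q : Om) : ∫ z, sg i p z * sg i q z ∂μ = UU μ i p q := by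
  have : ∫ z, sg i p z * sg i q z ∂μ = ∫ z, 1 - sg i p q * (sg i p z - sg i q z) ∂μ := by
    apply integral_congr_ae
    filter_upwards [hN i (co i p), hN i (co i q)] with z h1 h2
    exact sg_tri i h1 h2
  rw [this, I_sub μ (by fun_prop) (by fun_prop), integral_const_mul,
    I_sub μ (by fun_prop) (by fun_prop), I_sg, I_sg, UU]
  simp only [integral_const, probReal_univ, smul_eq_mul]
  ring

theorem ph_anti (i : Bool) (p q : Om) : ph μ i p q = - ph μ i q p := by
  unfold ph; rw [sg_anti i p q]; ring

theorem T_eq (hN : NT μ) (i : Bool) (p : Om) : ∀ᵐ q ∂μ,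
    UU μ i p q ^ 2 = 2 * (∫ z, ph μ i z p * ph μ i z q ∂μ) + 1 / 3 := by
  filter_upwards [hN i (co i p)] with q hq
  have e : ∀ z, ph μ i z p * ph μ i z q = sg i p z * sg i q z + sg i z p * av μ i z
     - av μ i q * sg i z p + sg i z q * av μ i z + av μ i z ^ 2 - av μ i q * av μ i z
     - av μ i p * sg i z q - av μ i p * av μ i z + av μ i p * av μ i q := by
    intro z; unfold ph; rw [sg_anti i p z, sg_anti i q z]; ring
  simp only [e]
  simp (disch := fun_prop) only [I_add, I_sub, integral_const_mul, I_av, q_eq μ hN, av_sq μ hN,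
    I_ss μ hN]
  have h2 := sg_sq i hq.symm
  change _ = 2 * (UU μ i p q + _ - av μ i q * av μ i p + _ + 1 / 3 - _ - av μ i p * av μ i q - _ + _) + _
  simp only [UU, integral_const, probReal_univ, smul_eq_mul]
  linear_combination (av μ i q - av μ i p) ^ 2 * h2

end
end PQ
end

noncomputable section
namespace PQ
section
variable (μ : Measure Om) [IsProbabilityMeasure μ]

theorem E2_fst (f : Om → ℝ) : E2 μ (fun p _ => f p) = ∫ p, f p ∂μ := by simp [E2]
theorem E2_snd (f : Om → ℝ) : E2 μ (fun _ q => f q) = ∫ p, f p ∂μ := by simp [E2]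

def mA (i j : Bool) : ℝ := ∫ p, dd μ i j p p ^ 2 ∂μ
def me (i j : Bool) : ℝ := ∫ p, dd μ i j p p ∂μ
def mm (i j : Bool) : ℝ := ∫ p, rr μ i j p ∂μ
def mR (i j : Bool) : ℝ := E2 μ (fun p q => dd μ i j p q ^ 2)
def mZ (i j : Bool) : ℝ := E2 μ (fun p q => dd μ i j p q * dd μ i j q p)
def mS (i j : Bool) : ℝ := ∫ p, rr μ i j p ^ 2 ∂μ
def mP (i j : Bool) : ℝ := ∫ p, dd μ i j p p * rr μ i j p ∂μ
def mN (i j : Bool) : ℝ := ∫ p, rr μ i j p * rr μ j i p ∂μ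

theorem Bin (i j : Bool) (q : Om) : ∫ p, av μ j p * dd μ i j p q ∂μ
    = -(∫ z, sg j q z * rr μ i j z ∂μ) - av μ j q * mm μ i j := by
  simp only [dd_eq μ i j _ q]
  have h : E2 μ (fun p z => av μ j p * (sg i p z * gm μ j q z))
     = E2 μ (fun z p => av μ j p * (sg i p z * gm μ j q z)) :=
    E2_swap μ (by fun_prop)
  have h2 : E2 μ (fun z p => av μ j p * (sg i p z * gm μ j q z))
     = E2 μ (fun z p => (-gm μ j q z) * (sg i z p * av μ j p)) := by
    congr 1; ext z p; rw [sg_anti i z p]; ring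
  rw [h2, E2_inner, E2_inner] at h
  rw [h]
  simp only [← rr_eq]
  have e : ∀ z, -gm μ j q z * rr μ i j z
     = (-1) * (sg j q z * rr μ i j z) - av μ j q * rr μ i j z := by
    intro z; unfold gm; ring
  simp only [e]
  rw [I_sub μ (by fun_prop) (by fun_prop), integral_const_mul, integral_const_mul, mm]
  ring

theorem Bq (i j : Bool) : ∫ q, av μ i q * ∫ p, av μ j p * dd μ i j p q ∂μ ∂μ
    = mN μ i j - mm μ i j ^ 2 := by
  have h : E2 μ (fun q z => av μ i q * (sg j q z * rr μ i j z))
     = E2 μ (fun z q => av μ i q * (sg j q z * rr μ i j z)) :=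
    E2_swap μ (by fun_prop)
  have h2 : E2 μ (fun z q => av μ i q * (sg j q z * rr μ i j z))
     = E2 μ (fun z q => (-rr μ i j z) * (sg j z q * av μ i q)) := by
    congr 1; ext z p; rw [sg_anti j z p]; ring
  rw [h2, E2_inner, E2_inner] at h
  simp only [← rr_eq] at h
  have bm : BM (fun q => ∫ z, sg j q z * rr μ i j z ∂μ) := BM.integral μ (by fun_prop)
  simp only [Bin]
  have e : ∀ q, av μ i q * (-(∫ z, sg j q z * rr μ i j z ∂μ) - av μ j q * mm μ i j)
     = (-1) * (av μ i q * ∫ z, sg j q z * rr μ i j z ∂μ) - mm μ i j * (av μ i q * av μ j q) := by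
    intro q; ring
  simp only [e]
  rw [I_sub μ (by fun_prop) (by fun_prop), integral_const_mul, integral_const_mul, h, ← mm_eq]
  simp only [neg_mul, integral_neg]
  rw [mN, mm]
  ring

theorem Bq' (i j : Bool) : ∫ p, av μ j p * ∫ q, av μ i q * dd μ i j p q ∂μ ∂μ
    = mN μ i j - mm μ i j ^ 2 := by
  have := Bq μ j i
  simp only [dd_symm μ j i] at this
  rw [this, mm, mm, mm_symm μ j i, mN, mN]
  simp only [mul_comm]

theorem K_eq (hN : NT μ) (i j : Bool) :
    E2 μ (fun p q => ph μ i p q * ph μ j p q * dd μ i j p q)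
      = 1 / 2 * (mA μ i j - mR μ i j) - (mN μ i j - mm μ i j ^ 2) := by
  have e : ∀ p q, ph μ i p q * ph μ j p q * dd μ i j p q
      = av μ j p * (ph μ i p q * dd μ i j p q)
        - (ph μ i p q * gm μ j q p * dd μ i j p q) := by
    intro p q
    have : ph μ j p q = av μ j p - gm μ j q p := by
      unfold ph gm; rw [sg_anti j p q]; ring
    rw [this]; ring
  simp only [e]
  rw [E2_sub μ (by fun_prop) (by fun_prop)]
  -- first part
  have h1 : E2 μ (fun p q => av μ j p * (ph μ i p q * dd μ i j p q))
      = -(mN μ i j - mm μ i j ^ 2) := by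
    rw [E2_inner, ← Bq', ← integral_neg]
    congr 1; ext p
    have : ∫ q, ph μ i p q * dd μ i j p q ∂μ = - ∫ q, ph μ i q p * dd μ j i q p ∂μ := by
      rw [← integral_neg]; congr 1; ext q; rw [ph_anti μ i p q, dd_symm]; ring
    rw [this, I_ph_dd]
    simp only [dd_symm μ j i]
    ring
  -- second part
  have h2 : E2 μ (fun p q => ph μ i p q * gm μ j q p * dd μ i j p q)
      = - (1 / 2) * (mA μ i j - mR μ i j) := by
    rw [E2_swap μ (by fun_prop)]
    have e2 : ∀ q p, ph μ i p q * gm μ j q p * dd μ i j p q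
       = sg i p q * gm μ j q p * dd μ i j p q - av μ i q * (gm μ j q p * dd μ i j p q)
         + av μ i p * (gm μ j q p * dd μ i j p q) := by
      intro q p; unfold ph; ring
    have e3 : ∀ q, ∫ p, av μ i p * (gm μ j q p * dd μ i j p q) ∂μ
        = ∫ w, 1 / 2 * dd μ i j w q ^ 2 ∂μ := by
      intro q
      have s := E2_swap μ (f := fun p w => (gm μ j q p * dd μ i j p q) * sg i w p) (by fun_prop)
      rw [E2_inner] at s
      have s2 : E2 μ (fun p w => (gm μ j q w * dd μ i j w q) * sg i p w)
        = ∫ w, 1 / 2 * dd μ i j w q ^ 2 ∂μ := by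
        unfold E2
        congr 1; ext w
        have := star1 μ hN i j q w
        have t : ∫ p, gm μ j q p * dd μ i j p q * sg i w p ∂μ
            = - ∫ p, sg i p w * gm μ j q p * dd μ i j p q ∂μ := by
          rw [← integral_neg]; congr 1; ext p; rw [sg_anti i p w]; ring
        rw [t, this]; ring
      rw [← s2, ← s]
      congr 1; ext p
      rw [av]; ring
    have e4 : ∀ q, ∫ p, ph μ i p q * gm μ j q p * dd μ i j p q ∂μ
        = 1 / 2 * (∫ w, dd μ i j w q ^ 2 ∂μ) - 1 / 2 * dd μ i j q q ^ 2 := by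
      intro q
      simp only [e2]
      simp (disch := fun_prop) only [I_add, I_sub, integral_const_mul, star0, star1 μ hN, e3]
      ring
    have bm : BM (fun q => ∫ w, dd μ i j w q ^ 2 ∂μ) := BM.integral μ (by fun_prop)
    unfold E2
    simp only [e4]
    rw [I_sub μ (by fun_prop) (by fun_prop), integral_const_mul, integral_const_mul, mA, mR,
      E2_swap μ (by fun_prop), E2]
    ring
  rw [h1, h2]; ring

theorem Fub4 {f g : Om → Om → ℝ} (hf : BM (fun x : Om × Om => f x.1 x.2))
    (hg : BM (fun x : Om × Om => g x.1 x.2)) :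
    E2 μ (fun p q => (∫ z, f z p * f z q ∂μ) * (∫ w, g w p * g w q ∂μ))
      = E2 μ (fun z w => (∫ p, f z p * g w p ∂μ) ^ 2) := by
  have key := integral_integral_swap (μ := μ.prod μ) (ν := μ.prod μ)
    (f := fun x y : Om × Om => (f y.1 x.1 * f y.1 x.2) * (g y.2 x.1 * g y.2 x.2)) (by
      apply BM.integrable
      have h1 : BM (fun a : (Om × Om) × Om × Om => f a.2.1 a.1.1) :=
        hf.comp (by fun_prop : Measurable fun a : (Om × Om) × Om × Om => (a.2.1, a.1.1))
      have h2 : BM (fun a : (Om × Om) × Om × Om => f a.2.1 a.1.2) :=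
        hf.comp (by fun_prop : Measurable fun a : (Om × Om) × Om × Om => (a.2.1, a.1.2))
      have h3 : BM (fun a : (Om × Om) × Om × Om => g a.2.2 a.1.1) :=
        hg.comp (by fun_prop : Measurable fun a : (Om × Om) × Om × Om => (a.2.2, a.1.1))
      have h4 : BM (fun a : (Om × Om) × Om × Om => g a.2.2 a.1.2) :=
        hg.comp (by fun_prop : Measurable fun a : (Om × Om) × Om × Om => (a.2.2, a.1.2))
      exact (h1.mul h2).mul (h3.mul h4))
  have l : ∀ x : Om × Om, ∫ y, (f y.1 x.1 * f y.1 x.2) * (g y.2 x.1 * g y.2 x.2) ∂(μ.prod μ)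
      = (∫ z, f z x.1 * f z x.2 ∂μ) * (∫ w, g w x.1 * g w x.2 ∂μ) := fun x =>
    integral_prod_mul (fun z => f z x.1 * f z x.2) (fun w => g w x.1 * g w x.2)
  have r : ∀ y : Om × Om, ∫ x, (f y.1 x.1 * f y.1 x.2) * (g y.2 x.1 * g y.2 x.2) ∂(μ.prod μ)
      = (∫ p, f y.1 p * g y.2 p ∂μ) ^ 2 := fun y => by
    rw [sq, ← integral_prod_mul]
    congr 1; ext x; ring
  simp only [l, r] at key
  have c1 : BM (fun x : Om × Om => ∫ z, f z x.1 * f z x.2 ∂μ) := by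
    apply BM.integral μ (f := fun (x : Om × Om) z => f z x.1 * f z x.2)
    exact (hf.comp (by fun_prop : Measurable fun a : (Om × Om) × Om => (a.2, a.1.1))).mul
      (hf.comp (by fun_prop : Measurable fun a : (Om × Om) × Om => (a.2, a.1.2)))
  have c2 : BM (fun x : Om × Om => ∫ z, g z x.1 * g z x.2 ∂μ) := by
    apply BM.integral μ (f := fun (x : Om × Om) z => g z x.1 * g z x.2)
    exact (hg.comp (by fun_prop : Measurable fun a : (Om × Om) × Om => (a.2, a.1.1))).mul
      (hg.comp (by fun_prop : Measurable fun a : (Om × Om) × Om => (a.2, a.1.2)))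
  have c3 : BM (fun x : Om × Om => ∫ p, f x.1 p * g x.2 p ∂μ) := by
    apply BM.integral μ (f := fun (x : Om × Om) p => f x.1 p * g x.2 p)
    exact (hf.comp (by fun_prop : Measurable fun a : (Om × Om) × Om => (a.1.1, a.2))).mul
      (hg.comp (by fun_prop : Measurable fun a : (Om × Om) × Om => (a.1.2, a.2)))
  rw [integral_prod _ ((c1.mul c2).integrable _), integral_prod _ ((c3.pow 2).integrable _)] at key
  exact key

theorem Fub3 {u : Om → ℝ} {f : Om → Om → ℝ} (hu : BM u) (hf : BM (fun x : Om × Om => f x.1 x.2)) :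
    E2 μ (fun p q => (∫ z, f z p * f z q ∂μ) * (u p * u q))
      = ∫ z, (∫ p, f z p * u p ∂μ) ^ 2 ∂μ := by
  have := Fub4 μ hf (g := fun _ p => u p) (hu.comp measurable_snd)
  simpa [E2] using this

theorem I_ph (i : Bool) (z : Om) : ∫ p, ph μ i z p ∂μ = 0 := by
  unfold ph
  simp (disch := fun_prop) only [I_sub, I_sg, I_av]
  simp

/-- doubly centred `dd` -/
def d0 (i j : Bool) (p q : Om) : ℝ := dd μ i j p q - rr μ i j p - rr μ j i q + mm μ i j

@[fun_prop]
theorem bm_d0 {α : Type*} [MeasurableSpace α] (i j : Bool) {f g : α → Om} (hf : Measurable f)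
    (hg : Measurable g) : BM (fun x => d0 μ i j (f x) (g x)) := by
  unfold d0; fun_prop

theorem UU2_eq (hN : NT μ) (i j : Bool) : E2 μ (fun p q => UU μ i p q ^ 2 * UU μ j p q ^ 2)
    = 1 / 9 + 4 * E2 μ (fun p q => d0 μ i j p q ^ 2) := by
  have bT : ∀ i, BM (fun x : Om × Om => ∫ z, ph μ i z x.1 * ph μ i z x.2 ∂μ) := fun i => by
    apply BM.integral μ (f := fun (x : Om × Om) z => ph μ i z x.1 * ph μ i z x.2)
    fun_prop
  have h1 : E2 μ (fun p q => UU μ i p q ^ 2 * UU μ j p q ^ 2)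
    = E2 μ (fun p q => 4 * ((∫ z, ph μ i z p * ph μ i z q ∂μ) * (∫ z, ph μ j z p * ph μ j z q ∂μ))
      + (2 / 3 * ((∫ z, ph μ i z p * ph μ i z q ∂μ) * (1 * 1))
      + (2 / 3 * ((∫ z, ph μ j z p * ph μ j z q ∂μ) * (1 * 1)) + 1 / 9))) := by
    apply E2_congr
    intro p
    filter_upwards [T_eq μ hN i p, T_eq μ hN j p] with q h1 h2
    rw [h1, h2]; ring
  rw [h1]
  have b1 := bT i
  have b2 := bT j
  rw [E2_add μ (by fun_prop) (by fun_prop), E2_add μ (by fun_prop) (by fun_prop),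
    E2_add μ (by fun_prop) (by fun_prop), E2_cmul, E2_cmul, E2_cmul,
    Fub4 μ (by fun_prop) (by fun_prop), Fub3 μ (u := fun _ => 1) (by fun_prop) (by fun_prop),
    Fub3 μ (u := fun _ => 1) (by fun_prop) (by fun_prop)]
  simp only [dd0_eq, mul_one, I_ph]
  simp only [E2, d0, mm]
  simp
  ring

theorem d0_sq (i j : Bool) : E2 μ (fun p q => d0 μ i j p q ^ 2)
    = mR μ i j - mS μ i j - mS μ j i + mm μ i j ^ 2 := by
  have e : ∀ p q, d0 μ i j p q ^ 2 = dd μ i j p q ^ 2 + rr μ i j p ^ 2 * 1 + 1 * rr μ j i q ^ 2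
     + mm μ i j ^ 2 * (1 * 1) - 2 * (rr μ i j p * dd μ i j p q) - 2 * (rr μ j i q * dd μ j i q p)
     + (2 * mm μ i j) * dd μ i j p q + 2 * (rr μ i j p * rr μ j i q)
     - (2 * mm μ i j) * (rr μ i j p * 1) - (2 * mm μ i j) * (1 * rr μ j i q) := by
    intro p q; unfold d0; rw [dd_symm μ j i]; ring
  have hs : E2 μ (fun p q => rr μ j i q * dd μ j i q p)
    = E2 μ (fun q p => rr μ j i q * dd μ j i q p) := E2_swap μ (by fun_prop)
  have hd : E2 μ (fun p q => dd μ i j p q) = mm μ i j := rfl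
  simp only [e]
  rw [E2_sub μ (by fun_prop) (by fun_prop), E2_sub μ (by fun_prop) (by fun_prop)]
  simp (disch := fun_prop) only [E2_add, E2_sub, E2_cmul, E2_left, hs]
  simp only [E2_inner, hd]
  change _ + _ + _ + _ - 2 * (∫ p, rr μ i j p * rr μ i j p ∂μ) 
    - 2 * (∫ p, rr μ j i p * rr μ j i p ∂μ) + _ + _ - _ - _ = _
  simp only [← sq]
  have hm : ∫ q, rr μ j i q ∂μ = mm μ i j := (mm_symm μ j i)
  rw [hm, mS, mS, mR]
  rw [show ∫ q, rr μ i j q ∂μ = mm μ i j from rfl]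
  simp only [E2_fst, E2_snd, one_mul, mul_one, hm]
  simp
  ring

end
end PQ
end

noncomputable section
namespace PQ
section
variable (μ : Measure Om) [IsProbabilityMeasure μ]

theorem M1 (i j : Bool) : E2 μ (fun p q => dd μ i j p p * dd μ i j p q) = mP μ i j := by
  rw [E2_inner]; rfl

theorem M2 (i j : Bool) : E2 μ (fun p q => dd μ i j p p * dd μ i j q p) = mP μ j i := by
  rw [← M1]; simp only [dd_symm μ j i]

theorem M3 (i j : Bool) : E2 μ (fun p q => dd μ i j q q * dd μ i j q p) = mP μ i j := by
  rw [E2_swap μ (by fun_prop)]; exact M1 μ i j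

theorem M4 (i j : Bool) : E2 μ (fun p q => dd μ i j q q * dd μ i j p q) = mP μ j i := by
  rw [E2_swap μ (by fun_prop)]; exact M2 μ i j

theorem M5 (i j : Bool) : E2 μ (fun p q => dd μ i j q p ^ 2) = mR μ i j := by
  rw [E2_swap μ (by fun_prop)]; rfl

def eta (i j : Bool) (p q : Om) : ℝ :=
  dd μ i j p p + dd μ i j q q - dd μ i j p q - dd μ i j q p

@[fun_prop]
theorem bm_eta {α : Type*} [MeasurableSpace α] (i j : Bool) {f g : α → Om} (hf : Measurable f)
    (hg : Measurable g) : BM (fun x => eta μ i j (f x) (g x)) := by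
  unfold eta; fun_prop

theorem eta_sq (i j : Bool) : E2 μ (fun p q => eta μ i j p q ^ 2)
    = 2 * mA μ i j + 2 * mR μ i j + 2 * me μ i j ^ 2 + 2 * mZ μ i j
      - 4 * mP μ i j - 4 * mP μ j i := by
  have e : ∀ p q, eta μ i j p q ^ 2 = dd μ i j p p ^ 2 + dd μ i j q q ^ 2 + dd μ i j p q ^ 2
     + dd μ i j q p ^ 2 + 2 * (dd μ i j p p * dd μ i j q q) + 2 * (dd μ i j p q * dd μ i j q p)
     - 2 * (dd μ i j p p * dd μ i j p q) - 2 * (dd μ i j p p * dd μ i j q p)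
     - 2 * (dd μ i j q q * dd μ i j q p) - 2 * (dd μ i j q q * dd μ i j p q) := by
    intro p q; unfold eta; ring
  simp only [e]
  simp (disch := fun_prop) only [E2_add, E2_sub, E2_cmul, M1, M2, M3, M4, M5]
  simp only [E2_left, E2_fst μ (f := fun p => dd μ i j p p ^ 2),
    E2_snd μ (f := fun p => dd μ i j p p ^ 2)]
  simp only [mA, mR, me, mZ]
  ring

theorem pp_dd (i j : Bool) : E2 μ (fun p q => ph μ i p q * ph μ j p q * dd μ i j p p)
    = mA μ i j - mP μ i j - mP μ j i + mm μ i j * me μ i j := by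
  have e : ∀ p q, ph μ i p q * ph μ j p q * dd μ i j p p
     = dd μ i j p p * (ph μ i p q * ph μ j p q) := by intro p q; ring
  simp only [e]
  rw [E2_inner]
  simp only [dd0_eq]
  rw [show ∫ q, rr μ i j q ∂μ = mm μ i j from rfl]
  have e2 : ∀ p, dd μ i j p p * (dd μ i j p p - rr μ i j p - rr μ j i p + mm μ i j)
    = dd μ i j p p ^ 2 - dd μ i j p p * rr μ i j p - dd μ j i p p * rr μ j i p
      + mm μ i j * dd μ i j p p := by
    intro p; rw [dd_symm μ j i]; ring
  simp only [e2]
  simp (disch := fun_prop) only [I_add, I_sub, integral_const_mul]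
  rfl

theorem pp_eta (hN : NT μ) (i j : Bool) : E2 μ (fun p q => ph μ i p q * ph μ j p q * eta μ i j p q)
    = 2 * (mA μ i j - mP μ i j - mP μ j i + mm μ i j * me μ i j)
     - 2 * (1 / 2 * (mA μ i j - mR μ i j) - (mN μ i j - mm μ i j ^ 2)) := by
  have e : ∀ p q, ph μ i p q * ph μ j p q * eta μ i j p q
     = ph μ i p q * ph μ j p q * dd μ i j p p + ph μ i q p * ph μ j q p * dd μ i j q q
      - ph μ i p q * ph μ j p q * dd μ i j p q - ph μ i q p * ph μ j q p * dd μ i j q p := by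
    intro p q; unfold eta; rw [ph_anti μ i q p, ph_anti μ j q p]; ring
  have s1 := E2_swap μ (f := fun p q => ph μ i p q * ph μ j p q * dd μ i j p p) (by fun_prop)
  have s2 := E2_swap μ (f := fun p q => ph μ i p q * ph μ j p q * dd μ i j p q) (by fun_prop)
  simp only [e]
  simp (disch := fun_prop) only [E2_add, E2_sub]
  rw [← s1, ← s2, pp_dd, K_eq μ hN]
  ring

def GG (i j : Bool) (p q : Om) : ℝ :=
  ∫ z, (sg i p z * sg j p z) * (sg i q z * sg j q z) ∂μ

theorem GG_eq (hN : NT μ) (i j : Bool) (p q : Om) : GG μ i j p q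
    = UU μ i p q * UU μ j p q + sg i p q * sg j p q * eta μ i j p q := by
  have h1 : GG μ i j p q = ∫ z, (1 - sg i p q * sg i p z + sg i p q * sg i q z
       - sg j p q * sg j p z + sg j p q * sg j q z
       + (sg i p q * sg j p q) * (sg i p z * sg j p z) - (sg i p q * sg j p q) * (sg i p z * sg j q z)
       - (sg i p q * sg j p q) * (sg i q z * sg j p z)
       + (sg i p q * sg j p q) * (sg i q z * sg j q z)) ∂μ := by
    apply integral_congr_ae
    filter_upwards [hN i (co i p), hN i (co i q), hN j (co j p), hN j (co j q)] with z h1 h2 h3 h4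
    have a := sg_tri i h1 h2
    have b := sg_tri j h3 h4
    calc (sg i p z * sg j p z) * (sg i q z * sg j q z)
      = (sg i p z * sg i q z) * (sg j p z * sg j q z) := by ring
      _ = _ := by rw [a, b]; ring
  rw [h1]
  simp (disch := fun_prop) only [I_add, I_sub, integral_const_mul, I_sg]
  simp only [UU, eta, dd, HH, integral_const, probReal_univ, smul_eq_mul]
  ring

theorem ph_UU (i : Bool) {p q : Om} (h : co i p ≠ co i q) : ph μ i p q = sg i p q * UU μ i p q := by
  unfold ph UU
  linear_combination (av μ i q - av μ i p) * sg_sq i h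

theorem P_eq (hN : NT μ) (i j : Bool) : E2 μ (fun p q => GG μ i j p q ^ 2)
    = 1 / 9 + 4 * mA μ i j + 8 * mR μ i j - 4 * mS μ i j - 4 * mS μ j i - 8 * mP μ i j
      - 8 * mP μ j i + 4 * mm μ i j * me μ i j + 4 * mN μ i j + 2 * me μ i j ^ 2
      + 2 * mZ μ i j := by
  have h : E2 μ (fun p q => GG μ i j p q ^ 2)
    = E2 μ (fun p q => UU μ i p q ^ 2 * UU μ j p q ^ 2
      + 2 * (ph μ i p q * ph μ j p q * eta μ i j p q) + eta μ i j p q ^ 2) := by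
    apply E2_congr
    intro p
    filter_upwards [hN i (co i p), hN j (co j p)] with q h1 h2
    rw [GG_eq μ hN, ph_UU μ i h1.symm, ph_UU μ j h2.symm]
    have a := sg_sq i h1.symm
    have b := sg_sq j h2.symm
    linear_combination eta μ i j p q ^ 2 * (sg j p q ^ 2 * a + b)
  rw [h]
  simp (disch := fun_prop) only [E2_add, E2_cmul, UU2_eq μ hN, d0_sq, pp_eta μ hN, eta_sq]
  ring

theorem W_eq (i j : Bool) : E2 μ (fun p q => HH μ i j p q * HH μ i j q p)
    = mZ μ i j + 2 * mN μ i j - mm μ i j ^ 2 := by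
  have e : ∀ p q, HH μ i j p q * HH μ i j q p = dd μ i j p q * dd μ i j q p
    + av μ i p * (av μ j q * dd μ i j q p) + av μ i q * (av μ j p * dd μ i j p q)
    + (av μ i p * av μ j p) * (av μ i q * av μ j q) := by
    intro p q; unfold dd; ring
  have s := E2_swap μ (f := fun p q => av μ i p * (av μ j q * dd μ i j q p)) (by fun_prop)
  simp only [e]
  simp (disch := fun_prop) only [E2_add]
  rw [← s, E2_inner, Bq, E2_left, ← mm_eq, mZ, mm]
  ring

theorem t_eq (i j : Bool) : ∫ p, HH μ i j p p ∂μ = me μ i j + mm μ i j := by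
  have e : ∀ p, HH μ i j p p = dd μ i j p p + av μ i p * av μ j p := by intro p; unfold dd; ring
  simp only [e]
  rw [I_add μ (by fun_prop) (by fun_prop), ← mm_eq]
  rfl

def hk (i j : Bool) (p q : Om) : ℝ := ∫ z, (sg i p z * sg j p z) * sg j z q ∂μ

theorem hk_eq (hN : NT μ) (i j : Bool) (p q : Om) : hk μ i j p q
    = av μ i p * UU μ j p q + sg j p q * (dd μ i j p p - dd μ i j p q) := by
  have h1 : hk μ i j p q = ∫ z, (sg j p q * (sg i p z * sg j p z)
      - sg j p q * (sg i p z * sg j q z) - sg i p z) ∂μ := by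
    apply integral_congr_ae
    filter_upwards [hN j (co j p), hN j (co j q)] with z h3 h4
    have b := sg_tri j h3 h4
    rw [sg_anti j z q]
    linear_combination - sg i p z * b
  rw [h1]
  simp (disch := fun_prop) only [I_add, I_sub, integral_const_mul, I_sg]
  simp only [UU, dd, HH]
  ring

theorem V_eq (hN : NT μ) (i j : Bool) : E2 μ (fun p q => hk μ i j p q * hk μ i j q p)
    = 2 * mS μ j i + 4 * mP μ j i - 2 * mm μ i j * me μ i j - 2 * mN μ i j
      - me μ i j ^ 2 - mZ μ i j := by
  have bT : BM (fun x : Om × Om => ∫ z, ph μ j z x.1 * ph μ j z x.2 ∂μ) := by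
    apply BM.integral μ (f := fun (x : Om × Om) z => ph μ j z x.1 * ph μ j z x.2)
    fun_prop
  have h : E2 μ (fun p q => hk μ i j p q * hk μ i j q p)
    = E2 μ (fun p q => 2 * ((∫ z, ph μ j z p * ph μ j z q ∂μ) * (av μ i p * av μ i q))
      + 1 / 3 * (av μ i p * av μ i q)
      + dd μ i j p p * (ph μ j p q * av μ i q) + dd μ i j q q * (ph μ j q p * av μ i p)
      - av μ i q * (ph μ j p q * dd μ i j p q) - av μ i p * (ph μ j q p * dd μ i j q p)
      + dd μ i j p p * dd μ i j q p - dd μ i j p p * dd μ i j q q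
      - dd μ i j p q * dd μ i j q p + dd μ i j q q * dd μ i j p q) := by
    apply E2_congr
    intro p
    filter_upwards [hN j (co j p), T_eq μ hN j p] with q h1 h2
    rw [hk_eq μ hN, hk_eq μ hN, ph_anti μ j q p, ph_UU μ j h1.symm]
    have hu : UU μ j q p = UU μ j p q := by
      unfold UU; rw [sg_anti j q p]; ring
    rw [hu, sg_anti j q p]
    have b := sg_sq j h1.symm
    linear_combination av μ i p * av μ i q * h2
      - (dd μ i j p p - dd μ i j p q) * (dd μ i j q q - dd μ i j q p) * b
  have s1 := E2_swap μ (f := fun p q => dd μ i j p p * (ph μ j p q * av μ i q)) (by fun_prop)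
  have s2 := E2_swap μ (f := fun p q => av μ i p * (ph μ j q p * dd μ i j q p)) (by fun_prop)
  have v1 : ∀ p, ∫ q, ph μ j p q * av μ i q ∂μ = rr μ j i p - mm μ i j := by
    intro p
    have e : ∀ q, ph μ j p q * av μ i q
      = sg j p q * av μ i q - av μ i q * av μ j q + av μ j p * av μ i q := by
      intro q; unfold ph; ring
    simp only [e]
    simp (disch := fun_prop) only [I_add, I_sub, integral_const_mul, I_av, ← rr_eq, ← mm_eq]
    rw [mm]; ring
  have v2 : E2 μ (fun p q => dd μ i j p p * (ph μ j p q * av μ i q))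
      = mP μ j i - mm μ i j * me μ i j := by
    rw [E2_inner]
    simp only [v1, mul_sub]
    rw [I_sub μ (by fun_prop) (by fun_prop), integral_mul_const, mP, me]
    simp only [dd_symm μ j i]
    ring
  have v3 : E2 μ (fun p q => av μ i p * (ph μ j q p * dd μ i j q p))
      = mN μ i j - mm μ i j ^ 2 := by
    rw [E2_inner]
    simp only [I_ph_dd, Bq]
  have v4 : ∫ z, (rr μ j i z - mm μ i j) ^ 2 ∂μ = mS μ j i - mm μ i j ^ 2 := by
    have e : ∀ z, (rr μ j i z - mm μ i j) ^ 2
      = rr μ j i z ^ 2 - (2 * mm μ i j) * rr μ j i z + mm μ i j ^ 2 := by intro z; ring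
    simp only [e]
    simp (disch := fun_prop) only [I_add, I_sub, integral_const_mul]
    rw [mm_symm μ j i, mS, mm]
    simp
    ring
  rw [h]
  simp (disch := fun_prop) only [E2_add, E2_sub, E2_cmul]
  rw [Fub3 μ (by fun_prop) (by fun_prop), ← s1, ← s2, v2, v3, E2_left, E2_left, M2, M4, I_av]
  simp only [v1, v4]
  rw [mZ, me]
  ring

/-- the nonnegative form -/
def QQ (i j : Bool) : ℝ :=
  3 / 2 * mA μ i j + 3 * mR μ i j - mS μ i j - mS μ j i - 2 * mP μ i j - 2 * mP μ j i
   + 2 * mN μ i j + mZ μ i j - mm μ i j ^ 2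

theorem total (hN : NT μ) (i j : Bool) :
    3 * (E2 μ (fun p q => GG μ i j p q ^ 2) - 1 / 9) - 2 * (∫ p, HH μ i j p p ∂μ) ^ 2
     + 6 * E2 μ (fun p q => HH μ i j p q * HH μ i j q p)
     + 2 * (E2 μ (fun p q => hk μ i j p q * hk μ i j q p)
        + E2 μ (fun p q => hk μ j i p q * hk μ j i q p)) = 8 * QQ μ i j := by
  rw [P_eq μ hN, t_eq, W_eq, V_eq μ hN, V_eq μ hN]
  have h1 : mm μ j i = mm μ i j := mm_symm μ j i
  have h2 : me μ j i = me μ i j := by unfold me; simp only [dd_symm μ j i]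
  have h3 : mN μ j i = mN μ i j := by unfold mN; simp only [mul_comm]
  have h4 : mZ μ j i = mZ μ i j := by unfold mZ; simp only [dd_symm μ j i, mul_comm]
  rw [h1, h2, h3, h4, QQ]
  ring

def th (i j : Bool) (p : Om) : ℝ := rr μ i j p + rr μ j i p

@[fun_prop]
theorem bm_th {α : Type*} [MeasurableSpace α] (i j : Bool) {f : α → Om} (hf : Measurable f) :
    BM (fun x => th μ i j (f x)) := by
  unfold th; fun_prop

theorem I_th (i j : Bool) : ∫ p, th μ i j p ∂μ = 2 * mm μ i j := by
  unfold th
  rw [I_add μ (by fun_prop) (by fun_prop), mm_symm μ j i, mm]; ring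

theorem I_th_sq (i j : Bool) : ∫ p, th μ i j p ^ 2 ∂μ = mS μ i j + mS μ j i + 2 * mN μ i j := by
  have e : ∀ p, th μ i j p ^ 2 = rr μ i j p ^ 2 + rr μ j i p ^ 2
    + 2 * (rr μ i j p * rr μ j i p) := by intro p; unfold th; ring
  simp only [e]
  simp (disch := fun_prop) only [I_add, integral_const_mul]
  rfl

theorem sos1 (i j : Bool) :
    E2 μ (fun p q => (dd μ i j p q + dd μ i j q p - th μ i j p - th μ i j q + 2 * mm μ i j) ^ 2)
     = 2 * mR μ i j + 2 * mZ μ i j - 2 * (mS μ i j + mS μ j i + 2 * mN μ i j)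
       + 4 * mm μ i j ^ 2 := by
  have c1 : E2 μ (fun p q => th μ i j p * dd μ i j p q) = mS μ i j + mN μ i j := by
    rw [E2_inner]
    change ∫ p, th μ i j p * rr μ i j p ∂μ = _
    have e : ∀ p, th μ i j p * rr μ i j p = rr μ i j p ^ 2 + rr μ i j p * rr μ j i p := by
      intro p; unfold th; ring
    simp only [e]
    rw [I_add μ (by fun_prop) (by fun_prop)]; rfl
  have c2 : E2 μ (fun p q => th μ i j p * dd μ i j q p) = mS μ j i + mN μ i j := by
    rw [E2_inner]
    simp only [rr_symm]
    have e : ∀ p, th μ i j p * rr μ j i p = rr μ j i p ^ 2 + rr μ i j p * rr μ j i p := by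
      intro p; unfold th; ring
    simp only [e]
    rw [I_add μ (by fun_prop) (by fun_prop)]; rfl
  have s1 := E2_swap μ (f := fun p q => th μ i j p * dd μ i j p q) (by fun_prop)
  have s2 := E2_swap μ (f := fun p q => th μ i j p * dd μ i j q p) (by fun_prop)
  have hd : E2 μ (fun p q => dd μ i j p q) = mm μ i j := rfl
  have s3 := E2_swap μ (f := fun p q => dd μ i j p q) (by fun_prop)
  have e : ∀ p q, (dd μ i j p q + dd μ i j q p - th μ i j p - th μ i j q + 2 * mm μ i j) ^ 2
    = dd μ i j p q ^ 2 + dd μ i j q p ^ 2 + th μ i j p ^ 2 + th μ i j q ^ 2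
      + 4 * mm μ i j ^ 2
      + 2 * (dd μ i j p q * dd μ i j q p) - 2 * (th μ i j p * dd μ i j p q)
      - 2 * (th μ i j p * dd μ i j q p) - 2 * (th μ i j q * dd μ i j p q)
      - 2 * (th μ i j q * dd μ i j q p) + 2 * (th μ i j p * th μ i j q)
      + (4 * mm μ i j) * dd μ i j p q + (4 * mm μ i j) * dd μ i j q p
      - (4 * mm μ i j) * th μ i j p - (4 * mm μ i j) * th μ i j q := by
    intro p q; ring
  simp only [e]
  simp (disch := fun_prop) only [E2_add, E2_sub, E2_cmul, M5]
  rw [← s1, ← s2, ← s3, c1, c2, hd]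
  simp only [E2_left, E2_fst μ (f := fun p => th μ i j p ^ 2), E2_snd μ (f := fun p => th μ i j p ^ 2),
    E2_fst μ (f := fun p => th μ i j p), E2_snd μ (f := fun p => th μ i j p), I_th, I_th_sq]
  rw [show E2 μ (fun p q => dd μ i j p q ^ 2) = mR μ i j from rfl, mZ]
  simp [E2]
  ring

theorem sos (i j : Bool) : QQ μ i j
    = ∫ p, 3 / 2 * (dd μ i j p p - 2 / 3 * th μ i j p) ^ 2 ∂μ
      + 4 / 3 * ∫ p, (th μ i j p - 2 * mm μ i j) ^ 2 ∂μ
      + 1 / 3 * mm μ i j ^ 2 + 2 * E2 μ (fun p q => d0 μ i j p q ^ 2)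
      + 1 / 2 * E2 μ (fun p q =>
          (dd μ i j p q + dd μ i j q p - th μ i j p - th μ i j q + 2 * mm μ i j) ^ 2) := by
  have e1 : ∀ p, 3 / 2 * (dd μ i j p p - 2 / 3 * th μ i j p) ^ 2
    = 3 / 2 * dd μ i j p p ^ 2 - 2 * (dd μ i j p p * rr μ i j p)
      - 2 * (dd μ j i p p * rr μ j i p) + 2 / 3 * th μ i j p ^ 2 := by
    intro p; rw [dd_symm μ j i]; unfold th; ring
  have e2 : ∀ p, (th μ i j p - 2 * mm μ i j) ^ 2
    = th μ i j p ^ 2 - (4 * mm μ i j) * th μ i j p + 4 * mm μ i j ^ 2 := by intro p; ring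
  simp only [e1, e2]
  rw [sos1, d0_sq]
  simp (disch := fun_prop) only [I_add, I_sub, integral_const_mul, I_th, I_th_sq]
  simp only [integral_const, probReal_univ, smul_eq_mul]
  rw [QQ, show ∫ p, dd μ i j p p ^ 2 ∂μ = mA μ i j from rfl,
    show ∫ p, dd μ i j p p * rr μ i j p ∂μ = mP μ i j from rfl,
    show ∫ p, dd μ j i p p * rr μ j i p ∂μ = mP μ j i from rfl]
  ring

theorem E2_nonneg {f : Om → Om → ℝ} (h : ∀ p q, 0 ≤ f p q) : 0 ≤ E2 μ f :=
  integral_nonneg fun p => integral_nonneg fun q => h p q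

theorem QQ_ge (i j : Bool) :
    1 / 3 * mm μ i j ^ 2 + 2 * E2 μ (fun p q => d0 μ i j p q ^ 2) ≤ QQ μ i j := by
  have h1 : 0 ≤ ∫ p, 3 / 2 * (dd μ i j p p - 2 / 3 * th μ i j p) ^ 2 ∂μ :=
    integral_nonneg fun p => by positivity
  have h2 : 0 ≤ ∫ p, (th μ i j p - 2 * mm μ i j) ^ 2 ∂μ :=
    integral_nonneg fun p => by positivity
  have h3 := E2_nonneg μ (f := fun p q =>
          (dd μ i j p q + dd μ i j q p - th μ i j p - th μ i j q + 2 * mm μ i j) ^ 2)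
          (fun p q => by positivity)
  rw [sos]
  linarith

end
end PQ
end

noncomputable section
namespace PQ

/-- the twelve patterns -/
def SS : Finset (Equiv.Perm (Fin 4)) := {
        mk4 0 1 2 3,
        mk4 0 1 3 2,
        mk4 0 3 2 1,
        mk4 1 0 2 3,
        mk4 1 0 3 2,
        mk4 1 2 3 0,
        mk4 2 1 0 3,
        mk4 2 3 0 1,
        mk4 2 3 1 0,
        mk4 3 0 1 2,
        mk4 3 2 0 1,
        mk4 3 2 1 0}

/-- integer sign -/
def zs (a b : Fin 4) : ℤ := if b < a then 1 else if a < b then -1 else 0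

/-- The four point kernel, over a commutative ring. -/
def ker4 {R : Type} [CommRing R] (x y : Fin 4 → Fin 4 → R) : R :=
  9 * ((x 0 2 * y 0 2) * (x 1 2 * y 1 2) * ((x 0 3 * y 0 3) * (x 1 3 * y 1 3))) - 1
   - 6 * ((x 0 2 * y 0 2) * (x 1 3 * y 1 3))
   + 18 * ((x 0 2 * y 1 2) * (x 1 3 * y 0 3))
   + 6 * (((x 0 2 * y 0 2) * y 2 1) * ((x 1 3 * y 1 3) * y 3 0)
      + ((y 0 2 * x 0 2) * x 2 1) * ((y 1 3 * x 1 3) * x 3 0))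

def kz (π σ : Equiv.Perm (Fin 4)) : ℤ :=
  ker4 (fun i j => zs (σ i) (σ j)) (fun i j => zs (π (σ i)) (π (σ j)))

theorem kz_sum : ∀ π : Equiv.Perm (Fin 4), ∑ σ, kz π σ = if π ∈ SS then 192 else -192 := by
  decide +kernel

/-- the real kernel -/
def kr (p : Fin 4 → Om) : ℝ :=
  ker4 (fun i j => sg false (p i) (p j)) (fun i j => sg true (p i) (p j))

def Bs (π : Equiv.Perm (Fin 4)) : Set (Fin 4 → Om) :=
  {p : Fin 4 → ℝ × ℝ | ∃ σ : Equiv.Perm (Fin 4),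
      StrictMono (fun i => (p (σ i)).1) ∧
        ∀ i j : Fin 4, (p (σ i)).2 < (p (σ j)).2 ↔ π i < π j}

theorem Bs_meas (π : Equiv.Perm (Fin 4)) : MeasurableSet (Bs π) := by
  unfold Bs StrictMono
  refine Measurable.setOf (Measurable.exists fun σ => Measurable.and ?_ ?_)
  · refine Measurable.forall fun i => Measurable.forall fun j => Measurable.imp measurable_const ?_
    exact measurableSet_setOfPred.1 (measurableSet_lt (by fun_prop) (by fun_prop))
  · refine Measurable.forall fun i => Measurable.forall fun j => Measurable.iff ?_ measurable_const
    exact measurableSet_setOfPred.1 (measurableSet_lt (by fun_prop) (by fun_prop))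

theorem perm_uniq {f : Fin 4 → ℝ} {σ τ : Equiv.Perm (Fin 4)}
    (h1 : StrictMono (f ∘ σ)) (h2 : StrictMono (f ∘ τ)) : σ = τ := by
  have h := Tuple.unique_monotone h1.monotone h2.monotone
  have hf : Function.Injective f := by
    have := h1.injective.comp σ⁻¹.injective
    convert this using 1
    ext i; simp
  ext1 i
  exact hf (congrFun h i)

theorem exists_sort {f : Fin 4 → ℝ} (hf : Function.Injective f) :
    ∃ σ : Equiv.Perm (Fin 4), StrictMono (f ∘ σ) :=
  ⟨Tuple.sort f, (Tuple.monotone_sort f).strictMono_of_injective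
    (hf.comp (Tuple.sort f).injective)⟩

theorem exists_pat {p : Fin 4 → Om} (h1 : Function.Injective fun i => (p i).1)
    (h2 : Function.Injective fun i => (p i).2) :
    ∃ σ π : Equiv.Perm (Fin 4), StrictMono (fun i => (p (σ i)).1) ∧
      (∀ i j : Fin 4, (p (σ i)).2 < (p (σ j)).2 ↔ π i < π j) ∧ ∀ π', p ∈ Bs π' ↔ π' = π := by
  obtain ⟨σ, hσ⟩ := exists_sort h1
  obtain ⟨τ, hτ⟩ := exists_sort (h2.comp σ.injective)
  have hp : ∀ i j : Fin 4, (p (σ i)).2 < (p (σ j)).2 ↔ τ⁻¹ i < τ⁻¹ j := by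
    intro i j
    have := hτ.lt_iff_lt (a := τ⁻¹ i) (b := τ⁻¹ j)
    simpa using this
  refine ⟨σ, τ⁻¹, hσ, hp, fun π' => ⟨?_, ?_⟩⟩
  · rintro ⟨σ', ha, hb⟩
    have e : σ' = σ := perm_uniq (f := fun i => (p i).1) ha hσ
    subst e
    have h3 : StrictMono (((fun i => (p i).2) ∘ σ') ∘ (π'⁻¹ : Equiv.Perm (Fin 4))) := by
      intro i j hij
      simp only [Function.comp]
      rw [hb]; simpa using hij
    have := perm_uniq h3 hτ
    rw [← this]; simp
  · rintro rfl
    exact ⟨σ, hσ, hp⟩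

theorem sg_zs_x {p : Fin 4 → Om} {σ : Equiv.Perm (Fin 4)}
    (h : StrictMono (fun i => (p (σ i)).1)) (i j : Fin 4) :
    sg false (p (σ i)) (p (σ j)) = (zs i j : ℝ) := by
  have a : ∀ i j, (p (σ i)).1 < (p (σ j)).1 ↔ i < j := fun i j => h.lt_iff_lt
  simp only [sg, co, zs, Bool.false_eq_true, if_false, a]
  split_ifs <;> simp

theorem sg_zs_y {p : Fin 4 → Om} {σ π : Equiv.Perm (Fin 4)}
    (h : ∀ i j : Fin 4, (p (σ i)).2 < (p (σ j)).2 ↔ π i < π j) (i j : Fin 4) :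
    sg true (p (σ i)) (p (σ j)) = (zs (π i) (π j) : ℝ) := by
  simp only [sg, co, zs, if_true, h]
  split_ifs <;> simp

theorem kr_sum {p : Fin 4 → Om} (h1 : Function.Injective fun i => (p i).1)
    (h2 : Function.Injective fun i => (p i).2) :
    ∑ σ : Equiv.Perm (Fin 4), kr (p ∘ σ)
      = 384 * ∑ π ∈ SS, (Bs π).indicator (fun _ => (1 : ℝ)) p - 192 := by
  obtain ⟨σ, π, hx, hy, hu⟩ := exists_pat h1 h2
  have e : ∀ τ : Equiv.Perm (Fin 4), kr (p ∘ (σ * τ : Equiv.Perm (Fin 4))) = (kz π τ : ℝ) := by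
    intro τ
    simp only [kr, kz, ker4, Function.comp, Equiv.Perm.mul_apply, sg_zs_x hx, sg_zs_y hy]
    push_cast
    ring
  rw [← Equiv.sum_comp (Equiv.mulLeft σ)]
  simp only [Equiv.coe_mulLeft, e]
  rw [← Int.cast_sum, kz_sum]
  have : ∀ π', (Bs π').indicator (fun _ => (1 : ℝ)) p = if π' = π then 1 else 0 := by
    intro π'
    by_cases h : π' = π
    · simp [h, (hu π).2 rfl]
    · simp [h, hu π']
  simp only [this, Finset.sum_ite_eq']
  split_ifs <;> norm_num

section
variable (μ : Measure Om) [IsProbabilityMeasure μ]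

def nu : Measure (Fin 4 → Om) := Measure.pi fun _ : Fin 4 => μ

instance : IsProbabilityMeasure (nu μ) := by unfold nu; infer_instance

theorem nu_perm (σ : Equiv.Perm (Fin 4)) :
    MeasurePreserving (fun p : Fin 4 → Om => p ∘ σ) (nu μ) (nu μ) := by
  have hm : Measurable (fun p : Fin 4 → Om => p ∘ σ) :=
    measurable_pi_lambda _ fun i => measurable_pi_apply _
  refine ⟨hm, (Measure.pi_eq fun s hs => ?_).symm⟩
  rw [Measure.map_apply hm (MeasurableSet.univ_pi hs)]
  have : (fun p : Fin 4 → Om => p ∘ σ) ⁻¹' (Set.univ.pi s) = Set.univ.pi (fun i => s (σ⁻¹ i)) := by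
    ext p
    simp only [Set.mem_preimage, Set.mem_univ_pi, Function.comp]
    constructor
    · intro h i; simpa using h (σ⁻¹ i)
    · intro h i; simpa using h (σ i)
  rw [this, nu, Measure.pi_pi]
  exact Equiv.prod_comp σ⁻¹ fun i => μ (s i)

def Phi (x : (Om × Om) × (Om × Om)) : Fin 4 → Om := ![x.1.1, x.1.2, x.2.1, x.2.2]

theorem Phi_meas : Measurable Phi := by
  refine measurable_pi_lambda _ fun i => ?_
  fin_cases i <;> simp [Phi] <;> fun_prop

theorem Phi_mp : MeasurePreserving Phi ((μ.prod μ).prod (μ.prod μ)) (nu μ) := by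
  refine ⟨Phi_meas, (Measure.pi_eq fun s hs => ?_).symm⟩
  rw [Measure.map_apply Phi_meas (MeasurableSet.univ_pi hs)]
  have : Phi ⁻¹' (Set.univ.pi s) = (s 0 ×ˢ s 1) ×ˢ (s 2 ×ˢ s 3) := by
    ext p
    simp [Phi, Set.mem_univ_pi, Fin.forall_fin_succ, and_assoc]
  rw [this]
  simp only [Measure.prod_prod, Fin.prod_univ_four]
  ring

theorem ae01 (hN : NT μ) (i : Bool) : ∀ᵐ p ∂(nu μ), co i (p 0) ≠ co i (p 1) := by
  have hs : MeasurableSet {p : Fin 4 → Om | co i (p 0) ≠ co i (p 1)} :=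
    (measurableSet_eq_fun (by fun_prop) (by fun_prop)).compl
  rw [← (Phi_mp μ).map_eq, ae_map_iff Phi_meas.aemeasurable hs]
  have h2 : ∀ᵐ x ∂(μ.prod μ), co i x.1 ≠ co i x.2 := by
    have hs2 : MeasurableSet {x : Om × Om | co i x.1 ≠ co i x.2} :=
      (measurableSet_eq_fun (by fun_prop) (by fun_prop)).compl
    refine (Measure.ae_prod_iff_ae_ae hs2).2 (Eventually.of_forall fun p => ?_)
    filter_upwards [hN i (co i p)] with q hq using hq.symm
  exact (measurePreserving_fst (μ := μ.prod μ) (ν := μ.prod μ)).quasiMeasurePreserving.ae h2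

theorem ae_inj (hN : NT μ) (i : Bool) :
    ∀ᵐ p ∂(nu μ), Function.Injective fun k => co i (p k) := by
  have h : ∀ σ : Equiv.Perm (Fin 4), ∀ᵐ p ∂(nu μ), co i (p (σ 0)) ≠ co i (p (σ 1)) :=
    fun σ => (nu_perm μ σ).quasiMeasurePreserving.ae (ae01 μ hN i)
  filter_upwards [ae_all_iff.2 h] with p hp a b hab
  by_contra hne
  have : ∀ a b : Fin 4, a ≠ b → ∃ σ : Equiv.Perm (Fin 4), σ 0 = a ∧ σ 1 = b := by
    decide +kernel
  obtain ⟨σ, rfl, rfl⟩ := this a b hne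
  exact hp σ hab

theorem bm_kr : BM kr := by
  unfold kr ker4; fun_prop

theorem kr_int : ∫ p, kr p ∂(nu μ) = 9 * E2 μ (fun p q => GG μ false true p q ^ 2) - 1
    - 6 * (∫ p, HH μ false true p p ∂μ) ^ 2
    + 18 * E2 μ (fun p q => HH μ false true p q * HH μ false true q p)
    + 6 * (E2 μ (fun p q => hk μ false true p q * hk μ false true q p)
        + E2 μ (fun p q => hk μ true false p q * hk μ true false q p)) := by
  have bGG : BM (fun x : Om × Om => GG μ false true x.1 x.2) := by
    apply BM.integral μ (f := fun (x : Om × Om) z => (sg false x.1 z * sg true x.1 z) *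
      (sg false x.2 z * sg true x.2 z)); fun_prop
  have bhk : ∀ i j, BM (fun x : Om × Om => hk μ i j x.1 x.2) := by
    intro i j
    apply BM.integral μ (f := fun (x : Om × Om) z => (sg i x.1 z * sg j x.1 z) * sg j z x.2)
    fun_prop
  have bhk' : ∀ i j, BM (fun x : Om × Om => hk μ i j x.2 x.1) := by
    intro i j
    exact (bhk i j).comp measurable_swap
  have e1 : ∫ p, kr p ∂(nu μ) = ∫ x : Om × Om, ∫ y : Om × Om, kr (Phi (x, y))
      ∂(μ.prod μ) ∂(μ.prod μ) := by
    rw [← (Phi_mp μ).map_eq, integral_map Phi_meas.aemeasurable bm_kr.1.aestronglyMeasurable]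
    exact integral_prod _ ((bm_kr.comp Phi_meas).integrable _)
  have pm : ∀ f g : Om → ℝ, ∫ y : Om × Om, f y.1 * g y.2 ∂(μ.prod μ)
      = (∫ z, f z ∂μ) * ∫ z, g z ∂μ := fun f g => integral_prod_mul f g
  have e2 : ∀ x : Om × Om, ∫ y : Om × Om, kr (Phi (x, y)) ∂(μ.prod μ)
      = 9 * (GG μ false true x.1 x.2 * GG μ false true x.1 x.2) - 1
       - 6 * (HH μ false true x.1 x.1 * HH μ false true x.2 x.2)
       + 18 * (HH μ false true x.1 x.2 * HH μ false true x.2 x.1)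
       + 6 * (hk μ false true x.1 x.2 * hk μ false true x.2 x.1
         + hk μ true false x.1 x.2 * hk μ true false x.2 x.1) := by
    rintro ⟨p, q⟩
    have i1 : ∀ {f g : Om → ℝ}, BM f → BM g →
        Integrable (fun y : Om × Om => f y.1 * g y.2) (μ.prod μ) := fun hf hg =>
      ((hf.comp measurable_fst).mul (hg.comp measurable_snd)).integrable _
    have eq : ∀ y : Om × Om, kr (Phi ((p, q), y)) =
       9 * ((fun z => (sg false p z * sg true p z) * (sg false q z * sg true q z)) y.1 *
         (fun z => (sg false p z * sg true p z) * (sg false q z * sg true q z)) y.2) - 1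
       - 6 * ((fun z => sg false p z * sg true p z) y.1 * (fun z => sg false q z * sg true q z) y.2)
       + 18 * ((fun z => sg false p z * sg true q z) y.1 * (fun z => sg false q z * sg true p z) y.2)
       + 6 * ((fun z => (sg false p z * sg true p z) * sg true z q) y.1 *
              (fun z => (sg false q z * sg true q z) * sg true z p) y.2
         + (fun z => (sg true p z * sg false p z) * sg false z q) y.1 *
              (fun z => (sg true q z * sg false q z) * sg false z p) y.2) := by
      intro y
      simp [kr, ker4, Phi]
    simp only [eq]
    rw [integral_add, integral_add, integral_sub, integral_sub, integral_const_mul,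
      integral_const_mul, integral_const_mul, integral_const_mul, integral_add,
      pm (fun z => (sg false p z * sg true p z) * (sg false q z * sg true q z))
        (fun z => (sg false p z * sg true p z) * (sg false q z * sg true q z)),
      pm (fun z => sg false p z * sg true p z) (fun z => sg false q z * sg true q z),
      pm (fun z => sg false p z * sg true q z) (fun z => sg false q z * sg true p z),
      pm (fun z => (sg false p z * sg true p z) * sg true z q)
        (fun z => (sg false q z * sg true q z) * sg true z p),
      pm (fun z => (sg true p z * sg false p z) * sg false z q)
        (fun z => (sg true q z * sg false q z) * sg false z p)]
    · simp [GG, HH, hk]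
    all_goals
      refine BM.integrable ?_ _
      fun_prop
  rw [e1]
  simp only [e2]
  have pE : ∀ f : Om → Om → ℝ, BM (fun x : Om × Om => f x.1 x.2) →
     ∫ x : Om × Om, f x.1 x.2 ∂(μ.prod μ) = E2 μ f := fun f hf => integral_prod _ (hf.integrable _)
  have bHH : ∀ i j, BM (fun x : Om × Om => HH μ i j x.1 x.2) := fun i j => by fun_prop
  rw [integral_add, integral_add, integral_sub, integral_sub, integral_const_mul,
      integral_const_mul, integral_const_mul, integral_const_mul, integral_add,
      pm (fun p => HH μ false true p p) (fun p => HH μ false true p p),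
      pE (fun p q => GG μ false true p q * GG μ false true p q) (by fun_prop),
      pE (fun p q => HH μ false true p q * HH μ false true q p) (by fun_prop),
      pE (fun p q => hk μ false true p q * hk μ false true q p) ((bhk _ _).mul (bhk' _ _)),
      pE (fun p q => hk μ true false p q * hk μ true false q p) ((bhk _ _).mul (bhk' _ _))]
  · simp [pow_two]
  all_goals
    refine BM.integrable ?_ _
    have b1 := bhk false true
    have b2 := bhk true false
    have b1' := bhk' false true
    have b2' := bhk' true false
    fun_prop

theorem link (hN : NT μ) : ∑ π ∈ SS, PermutonDensity π μ = 1 / 2 + 3 / 2 * QQ μ false true := by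
  have h1 : ∫ p, ∑ σ : Equiv.Perm (Fin 4), kr (p ∘ σ) ∂(nu μ) = 24 * ∫ p, kr p ∂(nu μ) := by
    rw [integral_finsetSum]
    · have : ∀ σ : Equiv.Perm (Fin 4), ∫ p, kr (p ∘ σ) ∂(nu μ) = ∫ p, kr p ∂(nu μ) := by
        intro σ
        conv_rhs => rw [← (nu_perm μ σ).map_eq]
        rw [integral_map (nu_perm μ σ).measurable.aemeasurable bm_kr.1.aestronglyMeasurable]
      simp only [this, Finset.sum_const, Finset.card_univ, Fintype.card_perm, Fintype.card_fin]
      norm_num [Nat.factorial]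
    · intro σ _
      exact (bm_kr.comp (nu_perm μ σ).measurable).integrable _
  have hi : ∀ π, Integrable ((Bs π).indicator fun _ => (1 : ℝ)) (nu μ) := fun π =>
    (integrable_const _).indicator (Bs_meas π)
  have h2 : ∫ p, ∑ σ : Equiv.Perm (Fin 4), kr (p ∘ σ) ∂(nu μ)
      = 384 * ∑ π ∈ SS, PermutonDensity π μ - 192 := by
    have : ∫ p, ∑ σ : Equiv.Perm (Fin 4), kr (p ∘ σ) ∂(nu μ)
      = ∫ p, (384 * ∑ π ∈ SS, (Bs π).indicator (fun _ => (1 : ℝ)) p - 192) ∂(nu μ) := by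
      apply integral_congr_ae
      filter_upwards [ae_inj μ hN false, ae_inj μ hN true] with p h1 h2
      exact kr_sum h1 h2
    rw [this, integral_sub _ (integrable_const _), integral_const_mul, integral_finsetSum]
    · congr 1
      · congr 1
        refine Finset.sum_congr rfl fun π _ => ?_
        rw [integral_indicator (Bs_meas π)]
        simp [Measure.real, PermutonDensity, Bs, nu]
      · simp
    · exact fun π _ => hi π
    · exact (integrable_finsetSum _ fun π _ => hi π).const_mul _
  have h3 := total μ hN false true
  have h4 := kr_int μ
  linarith

end
end PQ
end

noncomputable section
namespace PQ

/-- Lebesgue measure on the unit interval. -/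
def lam : Measure ℝ := volume.restrict (Set.Icc (0 : ℝ) 1)

theorem uniform_eq : uniformPermuton = lam.prod lam := by
  unfold uniformPermuton lam
  rw [Measure.prod_restrict]; rfl

instance : IsProbabilityMeasure lam := ⟨by simp [lam]⟩

theorem perm_sq {μ : Measure Om} (h : IsPermuton μ) :
    ∀ᵐ z ∂μ, ∀ i, co i z ∈ Set.Icc (0 : ℝ) 1 := by
  have := h.1
  have h1 := h.2.1 0 1 le_rfl zero_le_one le_rfl
  have h2 : ∀ᵐ z ∂μ, z ∈ Set.Icc (0 : ℝ) 1 ×ˢ Set.Icc (0 : ℝ) 1 := by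
    refine (prob_compl_eq_zero_iff (measurableSet_Icc.prod measurableSet_Icc)).2 ?_
    simpa using h1
  filter_upwards [h2] with z hz i
  cases i
  · exact hz.1
  · exact hz.2

theorem perm_strip {μ : Measure Om} (h : IsPermuton μ) (i : Bool) {x x' : ℝ} (h0 : 0 ≤ x)
    (h1 : x ≤ x') (h2 : x' ≤ 1) : μ (co i ⁻¹' Set.Icc x x') = ENNReal.ofReal (x' - x) := by
  cases i
  · rw [← h.2.1 x x' h0 h1 h2]
    apply measure_congr
    filter_upwards [perm_sq h] with z hz
    apply propext
    exact ⟨fun a => ⟨a, hz true⟩, fun a => a.1⟩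
  · rw [← h.2.2 x x' h0 h1 h2]
    apply measure_congr
    filter_upwards [perm_sq h] with z hz
    apply propext
    exact ⟨fun a => ⟨hz false, a⟩, fun a => a.2⟩

theorem perm_map {μ : Measure Om} (h : IsPermuton μ) (i : Bool) : μ.map (co i) = lam := by
  have := h.1
  have : IsProbabilityMeasure (μ.map (co i)) :=
    Measure.isProbabilityMeasure_map (measurable_co i).aemeasurable
  refine Measure.ext_of_Iic _ _ fun x => ?_
  rw [Measure.map_apply (measurable_co i) measurableSet_Iic, lam,
    Measure.restrict_apply measurableSet_Iic]
  have e1 : μ (co i ⁻¹' Set.Iic x) = μ (co i ⁻¹' (Set.Iic x ∩ Set.Icc 0 1)) := by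
    apply measure_congr
    filter_upwards [perm_sq h] with z hz
    apply propext
    exact ⟨fun a => ⟨a, hz i⟩, fun a => a.1⟩
  have e2 : Set.Iic x ∩ Set.Icc (0 : ℝ) 1 = Set.Icc 0 (min x 1) := by
    ext t; simp only [Set.mem_inter_iff, Set.mem_Iic, Set.mem_Icc, le_min_iff]; tauto
  rw [e1, e2]
  rcases lt_or_ge x 0 with hx | hx
  · rw [Set.Icc_eq_empty (by simp [hx])]; simp
  · rw [perm_strip h i le_rfl (by simp [hx]) (min_le_right _ _), Real.volume_Icc]

theorem perm_NT {μ : Measure Om} (h : IsPermuton μ) : NT μ := by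
  intro i x
  have h1 : ∀ᵐ t ∂(μ.map (co i)), t ≠ x := by
    rw [perm_map h i]
    exact ae_restrict_of_ae (Measure.ae_ne volume x)
  exact ae_of_ae_map (measurable_co i).aemeasurable h1

theorem perm_ae {μ : Measure Om} (h : IsPermuton μ) (i : Bool) {f : ℝ → ℝ} (hf : Continuous f)
    (h0 : ∀ᵐ z ∂μ, f (co i z) = 0) {x : ℝ} (hx : x ∈ Set.Icc (0 : ℝ) 1) : f x = 0 := by
  have h1 : ∀ᵐ t ∂(μ.map (co i)), f t = 0 := by
    rw [ae_map_iff (measurable_co i).aemeasurable]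
    · exact h0
    · exact hf.measurable (measurableSet_singleton 0)
  rw [perm_map h i] at h1
  exact Measure.eqOn_Icc_of_ae_eq volume (zero_ne_one) (f := f) (g := fun _ => 0) h1 hf.continuousOn
    continuousOn_const hx

/-- diagonal point -/
def dg (x : ℝ) : Om := (x, x)

@[simp] theorem co_dg (i : Bool) (x : ℝ) : co i (dg x) = x := by cases i <;> rfl

theorem sg_dg (i : Bool) (p z : Om) : sg i (dg (co i p)) z = sg i p z := by simp [sg]
theorem sg_dg2 (i : Bool) (p z : Om) : sg i z (dg (co i p)) = sg i z p := by simp [sg]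

theorem dd_dg (μ : Measure Om) (i j : Bool) (p q : Om) :
    dd μ i j (dg (co i p)) (dg (co j q)) = dd μ i j p q := by
  simp [dd, HH, av, sg_dg, sg_dg2]

theorem dd_dg_r (μ : Measure Om) (i j : Bool) (p q : Om) :
    dd μ i j p (dg (co j q)) = dd μ i j p q := by
  simp [dd, HH, av, sg_dg, sg_dg2]

theorem dd_dg_l (μ : Measure Om) (i j : Bool) (p q : Om) :
    dd μ i j (dg (co i p)) q = dd μ i j p q := by
  simp [dd, HH, av, sg_dg, sg_dg2]

theorem rr_dg (μ : Measure Om) (i j : Bool) (p : Om) :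
    rr μ i j (dg (co i p)) = rr μ i j p := by
  simp [rr, dd_dg_l]

section
variable (μ : Measure Om) [IsProbabilityMeasure μ]

theorem cont_int (hN : NT μ) (i : Bool) {f : Om → ℝ} (hf : BM f) :
    Continuous fun x : ℝ => ∫ z, sg i (dg x) z * f z ∂μ := by
  rw [continuous_iff_continuousAt]
  intro x
  have hb : ∀ y, BM (fun z => sg i (dg y) z * f z) := fun y => by fun_prop
  refine continuousAt_of_dominated (bound := fun z => |f z|)
    (Eventually.of_forall fun y => (hb y).1.aestronglyMeasurable)
    (Eventually.of_forall fun y => Eventually.of_forall fun z => ?_)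
    (hf.integrable μ).abs ?_
  · rw [Real.norm_eq_abs, abs_mul]
    refine mul_le_of_le_one_left (abs_nonneg _) ?_
    simp only [sg]
    split_ifs <;> simp
  · filter_upwards [hN i x] with z hz
    refine ContinuousAt.mul ?_ continuousAt_const
    simp only [sg, co_dg]
    rcases lt_or_gt_of_ne hz with hz | hz
    · refine (continuousAt_const (y := (1 : ℝ))).congr ?_
      filter_upwards [lt_mem_nhds hz] with y hy
      simp [hy]
    · refine (continuousAt_const (y := (-1 : ℝ))).congr ?_
      filter_upwards [gt_mem_nhds hz] with y hy
      simp [hy, hy.le]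

theorem cont_dd (hN : NT μ) (i j : Bool) (q : Om) : Continuous fun x : ℝ => dd μ i j (dg x) q := by
  simp only [dd_eq]
  exact cont_int μ hN i (by fun_prop)

theorem cont_dd2 (hN : NT μ) (i j : Bool) (p : Om) : Continuous fun y : ℝ => dd μ i j p (dg y) := by
  simp only [dd_symm μ i j]
  exact cont_dd μ hN j i p

theorem cont_rr (hN : NT μ) (i j : Bool) : Continuous fun x : ℝ => rr μ i j (dg x) := by
  simp only [rr_eq]
  exact cont_int μ hN i (by fun_prop)

theorem dd_const (i j : Bool) (p q : Om) (c : ℝ) (h : ∀ᵐ z ∂μ, sg i p z = c) :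
    dd μ i j p q = 0 := by
  rw [dd_eq]
  have : ∫ z, sg i p z * gm μ j q z ∂μ = ∫ z, c * gm μ j q z ∂μ := by
    apply integral_congr_ae
    filter_upwards [h] with z hz
    rw [hz]
  rw [this, integral_const_mul, I_gm, mul_zero]

theorem dd_le_zero (h : IsPermuton μ) (i j : Bool) {x : ℝ} (q : Om) (hx : x ≤ 0) :
    dd μ i j (dg x) q = 0 := by
  apply dd_const μ i j _ _ (-1)
  filter_upwards [perm_sq h, perm_NT h i x] with z hz hne
  have h1 : x < co i z := lt_of_le_of_ne (hx.trans (hz i).1) hne.symm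
  simp [sg, h1, h1.le]

theorem dd_ge_one (h : IsPermuton μ) (i j : Bool) {x : ℝ} (q : Om) (hx : 1 ≤ x) :
    dd μ i j (dg x) q = 0 := by
  apply dd_const μ i j _ _ 1
  filter_upwards [perm_sq h, perm_NT h i x] with z hz hne
  have h1 : co i z < x := lt_of_le_of_ne ((hz i).2.trans hx) hne
  simp [sg, h1]

theorem d0_ae (i j : Bool) (h : E2 μ (fun p q => d0 μ i j p q ^ 2) = 0) :
    ∀ᵐ p ∂μ, ∀ᵐ q ∂μ, d0 μ i j p q = 0 := by
  have b : BM (fun x : Om × Om => d0 μ i j x.1 x.2 ^ 2) := by fun_prop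
  have b2 : BM (fun p : Om => ∫ q, d0 μ i j p q ^ 2 ∂μ) := BM.integral μ b
  unfold E2 at h
  rw [integral_eq_zero_iff_of_nonneg (fun p => integral_nonneg fun q => sq_nonneg _)
    (b2.integrable μ)] at h
  filter_upwards [h] with p hp
  have b3 : BM (fun q : Om => d0 μ i j p q ^ 2) := by fun_prop
  have := (integral_eq_zero_iff_of_nonneg (fun q => sq_nonneg _) (b3.integrable μ)).1 hp
  filter_upwards [this] with q hq
  simpa using hq

theorem QQ_zero (h : IsPermuton μ) (hQ : QQ μ false true = 0) (x y : ℝ) :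
    dd μ false true (dg x) (dg y) = 0 := by
  have hN := perm_NT h
  have hge := QQ_ge μ false true
  have h1 : 0 ≤ E2 μ (fun p q => d0 μ false true p q ^ 2) :=
    E2_nonneg μ fun p q => sq_nonneg _
  have hm : mm μ false true = 0 := by
    have := sq_nonneg (mm μ false true)
    have : mm μ false true ^ 2 = 0 := by linarith
    simpa using this
  have h2 : E2 μ (fun p q => d0 μ false true p q ^ 2) = 0 := by
    have := sq_nonneg (mm μ false true)
    linarith
  -- almost every first point, all heights
  have h3 : ∀ᵐ p ∂μ, ∀ y ∈ Set.Icc (0 : ℝ) 1,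
      dd μ false true p (dg y) = rr μ false true p + rr μ true false (dg y) := by
    filter_upwards [d0_ae μ false true h2] with p hp y hy
    have := perm_ae h true
      (f := fun y => dd μ false true p (dg y) - rr μ false true p - rr μ true false (dg y))
      (((cont_dd2 μ hN _ _ p).sub continuous_const).sub (cont_rr μ hN _ _)) (by
        filter_upwards [hp] with q hq
        rw [dd_dg_r, rr_dg]
        unfold d0 at hq
        rw [hm] at hq
        linarith) hy
    linarith
  have z1 : ∀ p, dd μ false true p (dg 0) = 0 := fun p => by
    rw [dd_symm]; exact dd_le_zero μ h _ _ _ le_rfl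
  have z2 : rr μ true false (dg 0) = 0 := by
    rw [← rr_symm]; simp [z1]
  have h4 : ∀ᵐ p ∂μ, rr μ false true p = 0 := by
    filter_upwards [h3] with p hp
    have := hp 0 (by simp)
    rw [z1, z2] at this
    linarith
  have h5 : ∀ x ∈ Set.Icc (0 : ℝ) 1, ∀ y ∈ Set.Icc (0 : ℝ) 1,
      dd μ false true (dg x) (dg y) = rr μ true false (dg y) := by
    intro x hx y hy
    have := perm_ae h false
      (f := fun x => dd μ false true (dg x) (dg y) - rr μ true false (dg y))
      ((cont_dd μ hN _ _ _).sub continuous_const) (by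
        filter_upwards [h3, h4] with p hp hp2
        rw [dd_dg_l, hp y hy, hp2]
        ring) hx
    linarith
  have h6 : ∀ y ∈ Set.Icc (0 : ℝ) 1, rr μ true false (dg y) = 0 := by
    intro y hy
    rw [← h5 0 (by simp) y hy]
    exact dd_le_zero μ h _ _ _ le_rfl
  rcases le_or_gt x 0 with hx | hx
  · exact dd_le_zero μ h _ _ _ hx
  rcases le_or_gt 1 x with hx1 | hx1
  · exact dd_ge_one μ h _ _ _ hx1
  rcases le_or_gt y 0 with hy | hy
  · rw [dd_symm]; exact dd_le_zero μ h _ _ _ hy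
  rcases le_or_gt 1 y with hy1 | hy1
  · rw [dd_symm]; exact dd_ge_one μ h _ _ _ hy1
  rw [h5 x ⟨hx.le, hx1.le⟩ y ⟨hy.le, hy1.le⟩, h6 y ⟨hy.le, hy1.le⟩]

theorem dd_cov (hN : NT μ) (x y : ℝ) : dd μ false true (dg x) (dg y)
    = 4 * (μ.real (Set.Iic x ×ˢ Set.Iic y)
      - μ.real (co false ⁻¹' Set.Iic x) * μ.real (co true ⁻¹' Set.Iic y)) := by
  have mA : MeasurableSet (co false ⁻¹' Set.Iic x) := measurable_co _ measurableSet_Iic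
  have mB : MeasurableSet (co true ⁻¹' Set.Iic y) := measurable_co _ measurableSet_Iic
  have key : ∀ (i : Bool) (x : ℝ), ∀ᵐ z ∂μ, sg i (dg x) z
      = 2 * (co i ⁻¹' Set.Iic x).indicator (fun _ => (1 : ℝ)) z - 1 := by
    intro i x
    filter_upwards [hN i x] with z hz
    rcases lt_or_gt_of_ne hz with hz | hz
    · simp [sg, hz, Set.indicator, hz.le]; norm_num
    · simp [sg, hz, Set.indicator, hz.le, not_le.2 hz]
  have ind : ∀ s : Set Om, MeasurableSet s → BM (s.indicator fun _ => (1 : ℝ)) := by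
    intro s hs
    refine ⟨measurable_const.indicator hs, 1, fun z => ?_⟩
    by_cases h : z ∈ s <;> simp [h]
  have Iind : ∀ s : Set Om, MeasurableSet s → ∫ z, s.indicator (fun _ => (1 : ℝ)) z ∂μ = μ.real s := by
    intro s hs
    rw [integral_indicator hs]; simp
  have av1 : ∀ (i : Bool) (x : ℝ), av μ i (dg x) = 1 - 2 * μ.real (co i ⁻¹' Set.Iic x) := by
    intro i x
    have m : MeasurableSet (co i ⁻¹' Set.Iic x) := measurable_co _ measurableSet_Iic
    have := I_sg μ i (dg x)
    rw [integral_congr_ae (key i x), I_sub μ (BM.mul (BM.const 2) (ind _ m)) (BM.const 1), integral_const_mul,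
      Iind _ m] at this
    simp at this
    linarith
  have hh : HH μ false true (dg x) (dg y) = ∫ z, (4 * (Set.Iic x ×ˢ Set.Iic y).indicator
      (fun _ => (1 : ℝ)) z - 2 * (co false ⁻¹' Set.Iic x).indicator (fun _ => (1 : ℝ)) z
       - 2 * (co true ⁻¹' Set.Iic y).indicator (fun _ => (1 : ℝ)) z + 1) ∂μ := by
    apply integral_congr_ae
    filter_upwards [key false x, key true y] with z h1 h2
    rw [h1, h2]
    by_cases ha : z.1 ≤ x <;> by_cases hb : z.2 ≤ y <;>
      simp [Set.indicator, co, ha, hb, Prod.le_def] <;> norm_num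
  have mAB : MeasurableSet (Set.Iic x ×ˢ Set.Iic y) := measurableSet_Iic.prod measurableSet_Iic
  have b1 := ind _ mA
  have b2 := ind _ mB
  have b3 := ind _ mAB
  rw [I_add μ ((((BM.const 4).mul b3).sub ((BM.const 2).mul b1)).sub ((BM.const 2).mul b2)) (BM.const 1),
    I_sub μ (((BM.const 4).mul b3).sub ((BM.const 2).mul b1)) ((BM.const 2).mul b2),
    I_sub μ ((BM.const 4).mul b3) ((BM.const 2).mul b1), integral_const_mul, integral_const_mul,
    integral_const_mul, Iind _ mA, Iind _ mB, Iind _ mAB] at hh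
  rw [dd, hh, av1, av1]
  simp
  ring

theorem eq_uniform (h : IsPermuton μ) (hQ : QQ μ false true = 0) : μ = uniformPermuton := by
  have hN := perm_NT h
  have sp : lam.FiniteSpanningSetsIn (Set.range Set.Iic) :=
    ⟨fun n => Set.Iic (n : ℝ), fun n => ⟨_, rfl⟩, fun n => measure_lt_top _ _, by
      ext t; simpa using exists_nat_ge t⟩
  have hg : MeasurableSpace.generateFrom (Set.range (Set.Iic : ℝ → Set ℝ)) = borel ℝ :=
    (borel_eq_generateFrom_Iic ℝ).symm
  rw [uniform_eq]
  symm
  refine Measure.prod_eq_generateFrom (C := Set.range Set.Iic) (D := Set.range Set.Iic)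
    (hg.trans (BorelSpace.measurable_eq (α := ℝ)).symm)
    (hg.trans (BorelSpace.measurable_eq (α := ℝ)).symm) isPiSystem_Iic isPiSystem_Iic sp sp ?_
  rintro _ ⟨x, rfl⟩ _ ⟨y, rfl⟩
  have h1 := dd_cov μ hN x y
  rw [QQ_zero μ h hQ] at h1
  have h2 : μ.real (Set.Iic x ×ˢ Set.Iic y)
     = μ.real (co false ⁻¹' Set.Iic x) * μ.real (co true ⁻¹' Set.Iic y) := by linarith
  have m : ∀ (i : Bool) (x : ℝ), lam (Set.Iic x) = μ (co i ⁻¹' Set.Iic x) := by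
    intro i x
    rw [← perm_map h i, Measure.map_apply (measurable_co i) measurableSet_Iic]
  rw [m false x, m true y, ← ENNReal.toReal_eq_toReal_iff' (measure_ne_top _ _)
    (ENNReal.mul_ne_top (measure_ne_top _ _) (measure_ne_top _ _)), ENNReal.toReal_mul]
  exact h2

theorem dd_uniform (p q : Om) : dd (lam.prod lam) false true p q = 0 := by
  have e1 : ∀ z : Om, sg false p z = sg false p (dg z.1) := fun z => (sg_dg2 false z p).symm
  have e2 : ∀ z : Om, sg true q z = sg true q (dg z.2) := fun z => (sg_dg2 true z q).symm
  have a1 : ∫ z : Om, sg false p (dg z.1) ∂(lam.prod lam) = - av (lam.prod lam) false p := by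
    rw [← I_sg]; congr 1
  have a2 : ∫ z : Om, sg true q (dg z.2) ∂(lam.prod lam) = - av (lam.prod lam) true q := by
    rw [← I_sg]; congr 1
  have a3 : HH (lam.prod lam) false true p q
      = ∫ z : Om, sg false p (dg z.1) * sg true q (dg z.2) ∂(lam.prod lam) := by
    unfold HH; congr 1
  have i1 := integral_prod_mul (μ := lam) (ν := lam) (fun x => sg false p (dg x)) (fun _ => (1 : ℝ))
  have i2 := integral_prod_mul (μ := lam) (ν := lam) (fun _ => (1 : ℝ)) (fun x => sg true q (dg x))
  have i3 := integral_prod_mul (μ := lam) (ν := lam) (fun x => sg false p (dg x))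
    (fun x => sg true q (dg x))
  simp only [mul_one, one_mul, integral_const, probReal_univ, smul_eq_mul] at i1 i2
  rw [i1] at a1
  rw [i2] at a2
  rw [dd, a3, i3, a1, a2]
  ring

theorem QQ_uniform : QQ (lam.prod lam) false true = 0 := by
  have h := dd_uniform
  have h' : ∀ p q, dd (lam.prod lam) true false p q = 0 := fun p q => by rw [dd_symm, h]
  simp [QQ, mA, mR, mS, mP, mN, mZ, mm, rr, h, h', E2]

end
end PQ
end

theorem statement_10 (μ : Measure (ℝ × ℝ)) (hμ : IsPermuton μ) :
    (1 / 2 : ℝ) ≤ ∑ π ∈ ({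
        mk4 0 1 2 3,
        mk4 0 1 3 2,
        mk4 0 3 2 1,
        mk4 1 0 2 3,
        mk4 1 0 3 2,
        mk4 1 2 3 0,
        mk4 2 1 0 3,
        mk4 2 3 0 1,
        mk4 2 3 1 0,
        mk4 3 0 1 2,
        mk4 3 2 0 1,
        mk4 3 2 1 0} : Finset (Equiv.Perm (Fin 4))), PermutonDensity π μ ∧
      (∑ π ∈ ({
        mk4 0 1 2 3,
        mk4 0 1 3 2,
        mk4 0 3 2 1,
        mk4 1 0 2 3,
        mk4 1 0 3 2,
        mk4 1 2 3 0,
        mk4 2 1 0 3,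
        mk4 2 3 0 1,
        mk4 2 3 1 0,
        mk4 3 0 1 2,
        mk4 3 2 0 1,
        mk4 3 2 1 0} : Finset (Equiv.Perm (Fin 4))), PermutonDensity π μ = (1 / 2 : ℝ) ↔
        μ = uniformPermuton) := by
  have := hμ.1
  have hl := PQ.link μ (PQ.perm_NT hμ)
  have hge := PQ.QQ_ge μ false true
  have h1 : 0 ≤ PQ.E2 μ (fun p q => PQ.d0 μ false true p q ^ 2) :=
    PQ.E2_nonneg μ fun p q => sq_nonneg _
  have h2 := sq_nonneg (PQ.mm μ false true)
  unfold PQ.SS at hl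
  rw [hl]
  refine ⟨by linarith, fun h => PQ.eq_uniform μ hμ (by linarith), fun h => ?_⟩
  rw [h, PQ.uniform_eq, PQ.QQ_uniform]
  norm_num
end

section
/- Let A be an n×n doubly stochastic matrix and let π be a k-permutation. Then d(π, μ[A]) = (k!/n^k) · Σ_{f,g:[k]↗[n]} (Π_{i∈[n]} |f^{−1}(i)|!·|g^{−1}(i)|!)^{−1} · Π_{i∈[k]} A_{f(i),g(π(i))}, where the sum ranges over all pairs of non-decreasing functions f,g from {1,…,k} to {1,…,n}. -/
open MeasureTheory Filter

namespace StepAux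

/-- Lebesgue measure on the `i`-th cell. -/
noncomputable def nu (n : ℕ) (i : Fin n) : Measure ℝ :=
  volume.restrict (Set.Ico ((i : ℝ) / n) (((i : ℝ) + 1) / n))

instance (n : ℕ) (i : Fin n) : IsFiniteMeasure (nu n i) := by
  unfold nu
  exact ⟨by simp⟩

theorem nu_univ (n : ℕ) (i : Fin n) : nu n i Set.univ = ENNReal.ofReal (1 / n) := by
  unfold nu
  simp only [Measure.restrict_apply_univ, Real.volume_Ico]
  congr 1
  ring

theorem meas_strictMono (k : ℕ) : MeasurableSet {x : Fin k → ℝ | StrictMono x} := by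
  have : {x : Fin k → ℝ | StrictMono x} = ⋂ i, ⋂ j, {x | i < j → x i < x j} := by
    ext x; simp [StrictMono]
  rw [this]
  refine MeasurableSet.iInter fun i => MeasurableSet.iInter fun j => ?_
  by_cases h : i < j
  · simp only [h, true_implies]
    exact measurableSet_lt (measurable_pi_apply i) (measurable_pi_apply j)
  · simp [h]

theorem mp_perm {k : ℕ} {α : Type*} [MeasurableSpace α] (μ : Fin k → Measure α)
    [∀ i, SigmaFinite (μ i)] (σ : Equiv.Perm (Fin k)) :
    MeasurePreserving (fun x : Fin k → α => fun i => x (σ i)) (Measure.pi μ)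
      (Measure.pi fun i => μ (σ i)) := by
  have hm : Measurable (fun x : Fin k → α => fun i => x (σ i)) := by fun_prop
  refine ⟨hm, (Measure.pi_eq fun s hs => ?_).symm⟩
  rw [Measure.map_apply hm (MeasurableSet.univ_pi hs)]
  have : (fun x : Fin k → α => fun i => x (σ i)) ⁻¹' (Set.univ.pi s) =
      Set.univ.pi (fun i => s (σ.symm i)) := by
    ext x
    simp only [Set.mem_preimage, Set.mem_pi, Set.mem_univ, true_implies]
    constructor
    · intro h i; simpa using h (σ.symm i)
    · intro h i; simpa using h (σ i)
  rw [this, Measure.pi_pi, ← Equiv.prod_comp σ]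
  simp

theorem strict_unique {k : ℕ} {x : Fin k → ℝ} {σ τ : Equiv.Perm (Fin k)}
    (h1 : StrictMono fun i => x (σ i)) (h2 : StrictMono fun i => x (τ i)) : σ = τ := by
  have h := Tuple.unique_monotone (f := x) (σ := σ) (τ := τ) h1.monotone h2.monotone
  have hx : Function.Injective x := by
    have := h1.injective.comp σ.symm.injective
    simpa [Function.comp_def] using this
  ext i
  exact congrArg _ (hx (congrFun h i))

noncomputable def V {n k : ℕ} (f : Fin k → Fin n) : ENNReal :=
  Measure.pi (fun i => nu n (f i)) {x | StrictMono x}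

theorem pi_nu {n k : ℕ} (f : Fin k → Fin n) : Measure.pi (fun i => nu n (f i)) =
    (volume : Measure (Fin k → ℝ)).restrict (Set.univ.pi fun i =>
      Set.Ico (((f i : ℕ) : ℝ) / n) ((((f i : ℕ) : ℝ) + 1) / n)) := by
  unfold nu
  rw [volume_pi, Measure.restrict_pi_pi]

theorem V_zero {n k : ℕ} (f : Fin k → Fin n) (hf : ¬ Monotone f) : V f = 0 := by
  unfold V
  rw [pi_nu, Measure.restrict_apply (meas_strictMono k)]
  convert measure_empty (μ := (volume : Measure (Fin k → ℝ)))
  ext x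
  simp only [Set.mem_inter_iff, Set.mem_setOf_eq, Set.mem_pi, Set.mem_univ, true_implies,
    Set.mem_Ico, Set.mem_empty_iff_false, iff_false, not_and]
  intro hx h
  apply hf
  intro i j hij
  by_contra hlt
  push Not at hlt
  have h1 := (h i).1
  have h2 := (h j).2
  have h3 := hx.monotone hij
  have h4 : ((f j : ℕ) : ℝ) + 1 ≤ ((f i : ℕ) : ℝ) := by exact_mod_cast hlt
  have hn : (0 : ℝ) < n := by exact_mod_cast (f i).pos
  have h5 := div_le_div_of_nonneg_right h4 hn.le
  linarith

theorem ae_inj (k : ℕ) : ∀ᵐ x ∂(volume : Measure (Fin k → ℝ)), Function.Injective x := by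
  have h : ∀ i j : Fin k, i ≠ j → ∀ᵐ x ∂(volume : Measure (Fin k → ℝ)), x i ≠ x j := by
    intro i j hij
    let S : Submodule ℝ (Fin k → ℝ) :=
      LinearMap.ker (LinearMap.proj (R := ℝ) (φ := fun _ : Fin k => ℝ) i - LinearMap.proj j)
    have hS : S ≠ ⊤ := by
      intro h
      have : (Pi.single i 1 : Fin k → ℝ) ∈ S := by rw [h]; trivial
      simp [S, LinearMap.mem_ker, Pi.single_apply, hij.symm] at this
    have h0 := Measure.addHaar_submodule (volume : Measure (Fin k → ℝ)) S hS
    rw [ae_iff]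
    convert h0 using 2
    ext x
    simp [S, sub_eq_zero]
  have h' : ∀ᵐ x ∂(volume : Measure (Fin k → ℝ)), ∀ i j : Fin k, i ≠ j → x i ≠ x j := by
    rw [ae_all_iff]; intro i
    rw [ae_all_iff]; intro j
    by_cases hij : i = j
    · simp [hij]
    · filter_upwards [h i j hij] with x hx _ using hx
  filter_upwards [h'] with x hx i j hij
  by_contra hne
  exact hx i j hne hij

theorem sum_V {n k : ℕ} (f : Fin k → Fin n) :
    ∑ σ : Equiv.Perm (Fin k), V (fun i => f (σ i)) = ENNReal.ofReal (1 / n) ^ k := by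
  have h1 : ∀ σ : Equiv.Perm (Fin k), V (fun i => f (σ i)) =
      Measure.pi (fun i => nu n (f i)) {x | StrictMono fun i => x (σ i)} := by
    intro σ
    exact ((mp_perm (fun i => nu n (f i)) σ).measure_preimage
      (meas_strictMono k).nullMeasurableSet).symm
  simp_rw [h1]
  rw [← tsum_fintype (L := .unconditional _), ← measure_iUnion]
  · have : (⋃ σ : Equiv.Perm (Fin k), {x : Fin k → ℝ | StrictMono fun i => x (σ i)})
        =ᵐ[Measure.pi (fun i => nu n (f i))] Set.univ := by
      rw [ae_eq_univ, pi_nu]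
      refine Measure.absolutelyContinuous_of_le Measure.restrict_le_self ?_
      have := ae_inj k
      rw [ae_iff] at this
      refine measure_mono_null ?_ this
      intro x hx hinj
      apply hx
      simp only [Set.mem_iUnion, Set.mem_setOf_eq]
      exact ⟨Tuple.sort x, (Tuple.monotone_sort x).strictMono_of_injective
        (hinj.comp (Tuple.sort x).injective)⟩
    rw [measure_congr this, Measure.pi_univ]
    simp [nu_univ]
  · intro σ τ hne
    rw [Function.onFun, Set.disjoint_left]
    intro x h1 h2
    exact hne (strict_unique h1 h2)
  · intro σ
    exact (mp_perm (fun i => nu n (f i)) σ).measurable (meas_strictMono k)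

open scoped Classical in
theorem V_mono {n k : ℕ} (f : Fin k → Fin n) (hf : Monotone f) :
    ((∏ m : Fin n, Nat.factorial (Finset.univ.filter fun i : Fin k => f i = m).card : ℕ) : ENNReal)
      * V f = ENNReal.ofReal (1 / n) ^ k := by
  rw [← sum_V f]
  have h : ∀ σ : Equiv.Perm (Fin k), V (fun i => f (σ i)) =
      if f ∘ σ = f then V f else 0 := by
    intro σ
    split_ifs with h
    · congr 1
    · apply V_zero
      intro hm
      exact h (Tuple.unique_monotone (σ := σ) (τ := 1) hm hf)
  simp_rw [h]
  rw [← Finset.sum_filter, Finset.sum_const, nsmul_eq_mul]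
  congr 2
  have := DomMulAct.stabilizer_card f
  simp only [Fintype.card_subtype] at this
  convert this.symm using 3

open scoped Classical in
theorem V_real {n k : ℕ} (f : Fin k → Fin n) :
    (V f).toReal = if Monotone f then (1 / (n : ℝ)) ^ k *
      (∏ m : Fin n, (Nat.factorial (Finset.univ.filter fun i : Fin k => f i = m).card : ℝ))⁻¹
      else 0 := by
  split_ifs with h
  · have := congrArg ENNReal.toReal (V_mono f h)
    rw [ENNReal.toReal_mul, ENNReal.toReal_natCast, ENNReal.toReal_pow,
      ENNReal.toReal_ofReal (by positivity)] at this
    rw [← this]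
    push_cast
    have : (∏ m : Fin n,
      (Nat.factorial (Finset.univ.filter fun i : Fin k => f i = m).card : ℝ)) ≠ 0 :=
      Finset.prod_ne_zero_iff.2 fun m _ => by positivity
    field_simp
  · rw [V_zero f h]; rfl

/-- the increasing event -/
def E1 {k : ℕ} (π : Equiv.Perm (Fin k)) : Set (Fin k → ℝ × ℝ) :=
  {p | StrictMono (fun i => (p i).1) ∧ StrictMono (fun i => (p (π.symm i)).2)}

theorem meas_E1 {k : ℕ} (π : Equiv.Perm (Fin k)) : MeasurableSet (E1 π) := by
  have h1 : Measurable (fun p : Fin k → ℝ × ℝ => fun i => (p i).1) := by fun_prop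
  have h2 : Measurable (fun p : Fin k → ℝ × ℝ => fun i => (p (π.symm i)).2) := by fun_prop
  exact (h1 (meas_strictMono k)).inter (h2 (meas_strictMono k))

theorem E1_cell {n k : ℕ} (π : Equiv.Perm (Fin k)) (f g : Fin k → Fin n) :
    Measure.pi (fun i => (nu n (f i)).prod (nu n (g i))) (E1 π) =
      V f * V (fun i => g (π.symm i)) := by
  have h := measurePreserving_arrowProdEquivProdArrow ℝ ℝ (Fin k)
    (fun i => nu n (f i)) (fun i => nu n (g i))
  have hm := (mp_perm (fun i => nu n (g i)) π.symm)
  have hs : E1 π = MeasurableEquiv.arrowProdEquivProdArrow ℝ ℝ (Fin k) ⁻¹'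
    ({x | StrictMono x} ×ˢ ((fun x : Fin k → ℝ => fun i => x (π.symm i)) ⁻¹' {x | StrictMono x})) :=
    rfl
  rw [hs, h.measure_preimage
    ((meas_strictMono k).prod (hm.measurable (meas_strictMono k))).nullMeasurableSet,
    Measure.prod_prod, hm.measure_preimage (meas_strictMono k).nullMeasurableSet]
  rfl

noncomputable def w {n : ℕ} (A : Matrix (Fin n) (Fin n) ℝ) (c : Fin n × Fin n) : ENNReal :=
  ENNReal.ofReal (A c.1 c.2 * n)

theorem step_eq {n : ℕ} (A : Matrix (Fin n) (Fin n) ℝ) :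
    stepPermuton A = ∑ c : Fin n × Fin n, w A c • (nu n c.1).prod (nu n c.2) := by
  unfold stepPermuton
  rw [Fintype.sum_prod_type]
  simp only [nu, w, Measure.prod_restrict, Measure.volume_eq_prod]

instance {n : ℕ} (A : Matrix (Fin n) (Fin n) ℝ) (c : Fin n × Fin n) :
    IsFiniteMeasure (w A c • (nu n c.1).prod (nu n c.2)) :=
  Measure.smul_finite _ (by simp [w])

instance {n : ℕ} (A : Matrix (Fin n) (Fin n) ℝ) : IsFiniteMeasure (stepPermuton A) := by
  rw [step_eq]; infer_instance

theorem pi_step {n k : ℕ} (A : Matrix (Fin n) (Fin n) ℝ) :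
    Measure.pi (fun _ : Fin k => stepPermuton A) =
      ∑ h : Fin k → Fin n × Fin n, (∏ i, w A (h i)) •
        Measure.pi (fun i => (nu n (h i).1).prod (nu n (h i).2)) := by
  refine Measure.pi_eq fun s hs => ?_
  simp only [step_eq, Measure.finsetSum_apply, Measure.smul_apply, smul_eq_mul, Measure.pi_pi,
    Finset.prod_univ_sum, Fintype.piFinset_univ, Finset.prod_mul_distrib]

theorem density_eq {k : ℕ} (π : Equiv.Perm (Fin k)) (μ : Measure (ℝ × ℝ)) [IsFiniteMeasure μ] :
    PermutonDensity π μ =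
      (Nat.factorial k : ℝ) * ((Measure.pi fun _ : Fin k => μ) (E1 π)).toReal := by
  unfold PermutonDensity
  have hset : {p : Fin k → ℝ × ℝ | ∃ σ : Equiv.Perm (Fin k),
      StrictMono (fun i => (p (σ i)).1) ∧
        ∀ i j : Fin k, (p (σ i)).2 < (p (σ j)).2 ↔ π i < π j} =
      ⋃ σ : Equiv.Perm (Fin k), (fun p : Fin k → ℝ × ℝ => fun i => p (σ i)) ⁻¹' (E1 π) := by
    ext p
    simp only [Set.mem_setOf_eq, Set.mem_iUnion, Set.mem_preimage, E1]
    refine exists_congr fun σ => and_congr_right fun _ => ?_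
    constructor
    · intro h i j hij
      exact (h _ _).2 (by simpa using hij)
    · intro h i j
      have := h.lt_iff_lt (a := π i) (b := π j)
      simpa using this
  rw [hset, measure_iUnion]
  · have : ∀ σ : Equiv.Perm (Fin k), (Measure.pi fun _ : Fin k => μ)
        ((fun p : Fin k → ℝ × ℝ => fun i => p (σ i)) ⁻¹' (E1 π)) =
        (Measure.pi fun _ : Fin k => μ) (E1 π) := fun σ =>
      (mp_perm (fun _ => μ) σ).measure_preimage (meas_E1 π).nullMeasurableSet
    simp_rw [this]
    rw [tsum_fintype, Finset.sum_const, Finset.card_univ, Fintype.card_perm, Fintype.card_fin,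
      nsmul_eq_mul, ENNReal.toReal_mul, ENNReal.toReal_natCast]
  · intro σ τ hne
    rw [Function.onFun, Set.disjoint_left]
    intro p h1 h2
    exact hne (strict_unique (x := fun i => (p i).1) h1.1 h2.1)
  · intro σ
    exact (mp_perm (fun _ => μ) σ).measurable (meas_E1 π)

theorem E1_step {n k : ℕ} (A : Matrix (Fin n) (Fin n) ℝ) (hA : ∀ i j, 0 ≤ A i j)
    (π : Equiv.Perm (Fin k)) :
    ((Measure.pi fun _ : Fin k => stepPermuton A) (E1 π)).toReal =
      ∑ f : Fin k → Fin n, ∑ g : Fin k → Fin n,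
        (∏ i, (A (f i) (g (π i)) * n)) * ((V f).toReal * (V g).toReal) := by
  have hV : ∀ f : Fin k → Fin n, V f ≠ ⊤ := fun f => measure_ne_top _ _
  have hw : ∀ c, w A c ≠ ⊤ := fun c => ENNReal.ofReal_ne_top
  rw [pi_step]
  simp only [Measure.finsetSum_apply, Measure.smul_apply, smul_eq_mul]
  have hc : ∀ h : Fin k → Fin n × Fin n,
      Measure.pi (fun i => (nu n (h i).1).prod (nu n (h i).2)) (E1 π) =
        V (fun i => (h i).1) * V (fun i => (h (π.symm i)).2) := fun h =>
    E1_cell π (fun i => (h i).1) (fun i => (h i).2)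
  simp only [hc]
  rw [ENNReal.toReal_sum (fun h _ => ENNReal.mul_ne_top
    (ENNReal.prod_ne_top fun i _ => hw _) (ENNReal.mul_ne_top (hV _) (hV _)))]
  simp only [ENNReal.toReal_mul, ENNReal.toReal_prod]
  rw [← (Equiv.arrowProdEquivProdArrow (Fin k) (fun _ => Fin n) (fun _ => Fin n)).symm.sum_comp,
    Fintype.sum_prod_type]
  refine Finset.sum_congr rfl fun f _ => ?_
  rw [← (Equiv.arrowCongr π.symm (Equiv.refl (Fin n))).sum_comp]
  refine Finset.sum_congr rfl fun g _ => ?_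
  have hr : ∀ i j, (w A (i, j)).toReal = A i j * n := fun i j =>
    ENNReal.toReal_ofReal (mul_nonneg (hA i j) (Nat.cast_nonneg n))
  simp [Equiv.arrowProdEquivProdArrow, Equiv.arrowCongr, hr]

end StepAux

open scoped Classical in
theorem statement_11 {n k : ℕ} (A : Matrix (Fin n) (Fin n) ℝ)
    (hA : IsDoublyStochastic A) (π : Equiv.Perm (Fin k)) :
    PermutonDensity π (stepPermuton A) =
      (Nat.factorial k : ℝ) / (n : ℝ) ^ k *
        ∑ f ∈ Finset.univ.filter (fun f : Fin k → Fin n => Monotone f),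
          ∑ g ∈ Finset.univ.filter (fun g : Fin k → Fin n => Monotone g),
            (∏ m : Fin n,
                ((Nat.factorial (Finset.univ.filter fun i : Fin k => f i = m).card *
                  Nat.factorial (Finset.univ.filter fun i : Fin k => g i = m).card : ℕ) : ℝ))⁻¹ *
              ∏ i : Fin k, A (f i) (g (π i)) := by
  rw [StepAux.density_eq, StepAux.E1_step A hA.1, div_eq_mul_inv, mul_assoc]
  congr 1
  rw [Finset.mul_sum, Finset.sum_filter]
  refine Finset.sum_congr rfl fun f _ => ?_
  by_cases hf : Monotone f
  swap
  · simp [StepAux.V_real, hf]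
  rw [if_pos hf, Finset.mul_sum, Finset.sum_filter]
  refine Finset.sum_congr rfl fun g _ => ?_
  by_cases hg : Monotone g
  swap
  · simp [StepAux.V_real, hg]
  rw [if_pos hg, StepAux.V_real, StepAux.V_real, if_pos hf, if_pos hg]
  have hn : (n : ℝ) ^ k ≠ 0 := by
    rcases Nat.eq_zero_or_pos k with rfl | hk
    · simp
    · have := (f ⟨0, hk⟩).pos
      positivity
  push_cast
  simp only [Finset.prod_mul_distrib, Finset.prod_const, Finset.card_univ, Fintype.card_fin,
    mul_inv, one_div, inv_pow]
  field_simp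
end
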